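/- Let l be a positive integer. There exist a constant c > 0 and a threshold A₀ (both depending only on l) such that for all positive integers a < b with a ≥ A₀, if a(a+l)(a+2l) divides b(b+l)(b+2l), then b ≥ c · a · (log a)^{1/6} / (log log a)^{1/3}. -/

import Mathlib

/-!
Write `x = b + l`, `y = a + l` and let `k` be the quotient, so that
`x³ - l² x = k (y³ - l² y)`. Removing `g = gcd(x, y)` turns this into `g² n = l² (X - k Y)` with
`n = X³ - k Y³ ≠ 0`, `X` and `Y` coprime. Then `n` divides `l² (k³ - k)` and `g² ≤ l² k Y`, so an
upper bound for `Y` in the Thue equation `X³ - k Y³ = n` bounds `a`. The bound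
`log Y ≪ (k log k) (k log k + log |n|)` (`log_le_of_thue`) gives `log a ≪_l (k log k)²`
(`log_le_of_dvd`), and `k ≤ (b / a)³` finishes the proof.

For the Thue equation write `k = c³ d` with `d` cubefree. If `d = 1` then `X³ - (cY)³` factors.
Otherwise work in the pure cubic field `ℚ(θ)`, `θ³ = d`, with one real embedding `τ₁` and a pair
`τ₂, τ₃` of complex conjugate ones.

* There is a unit `u` with `1 ≤ log |τ₂ u| = R ≪ d log d` (`CubicData.exists_unit`). Dirichlet's box
  principle provides elements of norm at most `72 d` and of many different shapes. The number of
  ideals of norm `n` is at most `(1 * 1 * χ)(n)`, with `χ` the nontrivial character modulo `3`, whose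
  sum over `n ≤ x` is at most `x (1 + log x)`. Hence two of these elements generate the same ideal
  while having different sizes, and their quotient is the unit.
* Put `ξ = X - θ Y = μ u^M`, where `M` is chosen so that `μ` has conjugates of size about
  `e^R |n|`. The linear relation between the conjugates of `ξ`, and the smallness of `τ₁ ξ`, force
  `(τ₃ μ / τ₂ μ)^6` to be exponentially close, in terms of `M R`, to `(τ₂ u / τ₃ u)^(6 M)`
  (`CubicData.log_le_of_unit`).
* A lower bound for linear forms in two logarithms (`transcend`) then bounds `M`. It is proved with an
  interpolation determinant in the functions `binom(w, i) α^(w t)`: this determinant is analytically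
  small (`analytic_bound`), it can be chosen nonzero by a zero estimate on `G_a × G_m`
  (`zero_estimate`), and Liouville's inequality bounds it from below (`liouville`). Raising the ratio
  of the conjugates of `u` to a bounded power makes it close to `1`, which is what makes the analytic
  estimate work with such simple parameters.
-/

/-! ### Small determinants -/

/-- A map with values in `[0, n]` on an `n`-element set which is injective where it is `< n`
has sum at least `0 + 1 + ⋯ + (n - 1)`. -/
lemma sum_ge_of_injOn {ι : Type*} [Fintype ι] (n : ℕ) (hn : Fintype.card ι = n)
    (f : ι → ℕ) (hle : ∀ c, f c ≤ n) (hinj : ∀ c c', f c = f c' → f c < n → c = c') :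
    n * (n - 1) / 2 ≤ ∑ c, f c := by
  classical
  have h1 : ∀ c, f c = ∑ j ∈ Finset.range n, if j < f c then 1 else 0 := by
    intro c
    rw [Finset.sum_ite, Finset.sum_const_zero, add_zero, Finset.sum_const, smul_eq_mul, mul_one]
    have : (Finset.range n).filter (fun j => j < f c) = Finset.range (f c) := by
      ext j; simp; intro h; exact lt_of_lt_of_le h (hle c)
    rw [this, Finset.card_range]
  have h2 : ∑ c, f c = ∑ j ∈ Finset.range n, ∑ c, if j < f c then 1 else 0 := by
    rw [Finset.sum_comm]
    exact Finset.sum_congr rfl fun c _ => h1 c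
  rw [h2, ← Finset.sum_range_id, ← Finset.sum_range_reflect]
  apply Finset.sum_le_sum
  intro j hj
  rw [Finset.mem_range] at hj
  rw [Finset.sum_ite, Finset.sum_const_zero, add_zero, Finset.sum_const, smul_eq_mul, mul_one]
  have h3 : (Finset.univ.filter (fun c => ¬ j < f c)).card ≤ j + 1 := by
    rw [← Finset.card_range (j+1)]
    apply Finset.card_le_card_of_injOn f
    · intro c hc; simp at hc ⊢; omega
    · intro c hc c' hc' h
      simp at hc
      exact hinj c c' h (by omega)
  have h4 := Finset.card_filter_add_card_filter_not (s := (Finset.univ : Finset ι)) (fun c => j < f c)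
  rw [Finset.card_univ, hn] at h4
  omega

lemma norm_det_le_of_row {ι : Type*} [Fintype ι] [DecidableEq ι]
    (A : Matrix ι ι ℂ) (b : ι → ℝ) (h : ∀ c s, ‖A c s‖ ≤ b c) :
    ‖A.det‖ ≤ (Fintype.card ι).factorial * ∏ c, b c := by
  rw [← Matrix.det_transpose, Matrix.det_apply]
  refine (norm_sum_le _ _).trans ?_
  have : ∀ σ ∈ (Finset.univ : Finset (Equiv.Perm ι)),
      ‖Equiv.Perm.sign σ • ∏ i, A.transpose (σ i) i‖ ≤ ∏ c, b c := by
    intro σ _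
    have h1 : ‖Equiv.Perm.sign σ • ∏ i, A.transpose (σ i) i‖ = ∏ i, ‖A i (σ i)‖ := by
      rcases Int.units_eq_one_or (Equiv.Perm.sign σ) with h | h <;>
        simp [h, Matrix.transpose_apply]
    rw [h1]
    exact Finset.prod_le_prod (fun _ _ => norm_nonneg _) (fun i _ => h i _)
  refine (Finset.sum_le_sum this).trans ?_
  rw [Finset.sum_const, Finset.card_univ, Fintype.card_perm, nsmul_eq_mul]

/-- Laurent's estimate in algebraic form: if every column of `M` is, up to an error of size
`G e^{-n}`, a combination of vectors `V 0, …, V (n-1)` with the `j`-th term of size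
`G e^{-j}`, then expanding the determinant multilinearly only leaves terms whose weights
add up to at least `n (n - 1) / 2`. -/
lemma det_small {ι : Type*} [Fintype ι] [DecidableEq ι] (n : ℕ) (hn : Fintype.card ι = n)
    (M : Matrix ι ι ℂ) (V : Fin n → ι → ℂ) (B : Fin n → ι → ℂ) (E : ι → ι → ℂ) (G : ℝ)
    (hG : 0 ≤ G)
    (hM : ∀ s c, M s c = ∑ j, B j c * V j s + E c s)
    (hB : ∀ j c s, ‖B j c * V j s‖ ≤ G * Real.exp (-(j : ℕ)))
    (hE : ∀ c s, ‖E c s‖ ≤ G * Real.exp (-n)) :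
    ‖M.det‖ ≤ (n.factorial : ℝ) * (n + 1) ^ n * G ^ n * Real.exp (-((n * (n - 1) / 2 : ℕ) : ℝ)) := by
  classical
  let C : ι → Option (Fin n) → ι → ℂ := fun c o s => o.elim (E c s) (fun j => B j c * V j s)
  let wt : Option (Fin n) → ℕ := fun o => o.elim n (fun j => (j : ℕ))
  have hC : ∀ c o s, ‖C c o s‖ ≤ G * Real.exp (-(wt o)) := by
    intro c o s
    cases o with
    | none => simpa [C, wt] using hE c s
    | some j => simpa [C, wt] using hB j c s
  have hMT : M.transpose = fun c => ∑ o, C c o := by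
    ext c s
    rw [Matrix.transpose_apply, hM, Finset.sum_apply, Fintype.sum_option]
    simp only [C, Option.elim]
    ring
  have hdet : M.det = ∑ r : ι → Option (Fin n), Matrix.det (Matrix.of fun c => C c (r c)) := by
    rw [← Matrix.det_transpose, hMT]
    exact (Matrix.detRowAlternating (n := ι) (R := ℂ)).toMultilinearMap.map_sum (fun c o => C c o)
  rw [hdet]
  refine (norm_sum_le _ _).trans ?_
  have key : ∀ r ∈ (Finset.univ : Finset (ι → Option (Fin n))),
      ‖Matrix.det (Matrix.of fun c => C c (r c))‖ ≤
        (n.factorial : ℝ) * (G ^ n * Real.exp (-((n * (n - 1) / 2 : ℕ) : ℝ))) := by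
    intro r _
    by_cases hr : ∃ c c', c ≠ c' ∧ r c = r c' ∧ r c ≠ none
    · obtain ⟨c, c', hcc, hrr, hno⟩ := hr
      obtain ⟨j, hj⟩ := Option.ne_none_iff_exists'.mp hno
      have hz : Matrix.det (Matrix.of fun c => C c (r c)) = 0 := by
        have h1 : ∀ s, C c (r c) s = B j c * V j s := fun s => by simp [C, hj]
        have h2 : ∀ s, C c' (r c') s = B j c' * V j s := fun s => by simp [C, ← hrr, hj]
        by_cases hb : B j c = 0
        · exact Matrix.det_eq_zero_of_row_eq_zero c (fun s => by rw [Matrix.of_apply, h1, hb, zero_mul])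
        · apply Matrix.exists_vecMul_eq_zero_iff.mp
          refine ⟨Pi.single c (B j c') - Pi.single c' (B j c), ?_, ?_⟩
          · intro h0
            have := congrFun h0 c'
            simp [hcc.symm, hb] at this
          · ext s
            rw [Matrix.sub_vecMul, Matrix.single_vecMul, Matrix.single_vecMul]
            simp only [Pi.sub_apply, Pi.smul_apply, smul_eq_mul, Matrix.row, Matrix.of_apply, h1, h2,
              Pi.zero_apply]
            ring
      rw [hz, norm_zero]; positivity
    · push Not at hr
      refine (norm_det_le_of_row _ (fun c => G * Real.exp (-(wt (r c)))) (fun c s => hC _ _ _)).trans ?_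
      rw [hn]
      gcongr
      rw [Finset.prod_mul_distrib, Finset.prod_const, Finset.card_univ, hn, ← Real.exp_sum,
        Finset.sum_neg_distrib]
      gcongr
      rw [← Nat.cast_sum]
      norm_cast
      apply sum_ge_of_injOn n hn
      · intro c; rcases r c with _ | j
        · simp [wt]
        · simp [wt, j.2.le]
      · intro c c' h hlt
        by_contra hne
        have hcn : r c ≠ none := by
          intro h0; simp [wt, h0] at hlt
        apply hcn
        apply hr c c' hne
        rcases h1 : r c with _ | j
        · exact absurd h1 hcn
        · rcases h2 : r c' with _ | j'
          · simp only [wt, h1, h2, Option.elim] at h; exact absurd h (by omega)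
          · simp only [wt, h1, h2, Option.elim] at h
            rw [Fin.ext h]
  refine (Finset.sum_le_sum key).trans (le_of_eq ?_)
  rw [Finset.sum_const, Finset.card_univ, Fintype.card_fun, Fintype.card_option, Fintype.card_fin,
    hn, nsmul_eq_mul]
  push_cast
  ring

/-! ### Nonvanishing minors and the zero estimate -/

/-- A matrix with linearly independent columns has a nonzero maximal minor. -/
lemma exists_minor_ne_zero {F r c : Type*} [Field F] [Finite r] [Fintype c] [DecidableEq c]
    (A : Matrix r c F) (h : ∀ v : c → F, A.mulVec v = 0 → v = 0) :
    ∃ f : c → r, (A.submatrix f id).det ≠ 0 := by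
  classical
  have hrank : A.rank = Fintype.card c := by
    have hinj : Function.Injective A.mulVecLin := by
      rw [injective_iff_map_eq_zero]
      intro v hv
      exact h v hv
    rw [Matrix.rank, LinearMap.finrank_range_of_inj hinj, Module.finrank_fintype_fun_eq_card]
  rw [Matrix.rank_eq_finrank_span_row] at hrank
  obtain ⟨b, hbt, hbs, hbl⟩ := exists_linearIndependent F (Set.range A.row)
  have : Finite b := (Set.finite_range A.row).subset hbt
  have := Fintype.ofFinite b
  have hcard : Fintype.card b = Fintype.card c := by
    rw [← hrank, ← hbs]
    have := finrank_span_eq_card hbl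
    rw [Subtype.range_val] at this
    exact this.symm
  let e : c ≃ b := (Fintype.equivOfCardEq hcard).symm
  choose f hf using fun x : c => hbt (e x).2
  refine ⟨f, ?_⟩
  have hli : LinearIndependent F (A.submatrix f id).row := by
    have h1 : (A.submatrix f id).row = (Subtype.val : b → (c → F)) ∘ e := by
      funext x
      rw [Function.comp_apply, ← hf x]
      rfl
    rw [h1]
    exact hbl.comp _ e.injective
  have := Matrix.linearIndependent_rows_iff_isUnit.mp hli
  exact ((Matrix.isUnit_iff_isUnit_det _).mp this).ne_zero

open Polynomial in
/-- The polynomial `∑ i, c i * binom(X, i)`. -/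
noncomputable def binomComb {I : ℕ} (c : Fin I → ℂ) : ℂ[X] :=
  ∑ i, C (c i / (i : ℕ).factorial) * descPochhammer ℂ i

open Polynomial in
lemma binomComb_eval {I : ℕ} (c : Fin I → ℂ) (w : ℕ) :
    (binomComb c).eval (w : ℂ) = ∑ i, c i * (w.choose i : ℂ) := by
  rw [binomComb, eval_finsetSum]
  refine Finset.sum_congr rfl fun i _ => ?_
  rw [eval_mul, eval_C, descPochhammer_eval_eq_descFactorial, Nat.descFactorial_eq_factorial_mul_choose]
  have : ((i : ℕ).factorial : ℂ) ≠ 0 := by exact_mod_cast Nat.factorial_ne_zero _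
  push_cast
  field_simp

open Polynomial in
lemma binomComb_natDegree {I : ℕ} (c : Fin I → ℂ) : (binomComb c).natDegree ≤ I - 1 := by
  refine natDegree_sum_le_of_forall_le _ _ fun i _ => ?_
  refine (natDegree_C_mul_le _ _).trans ?_
  rw [descPochhammer_natDegree]
  have := i.2
  omega

lemma binomComb_eq_zero {I : ℕ} (c : Fin I → ℂ) (h : binomComb c = 0) : c = 0 := by
  have h1 : ∀ w : ℕ, ∑ i, c i * (w.choose i : ℂ) = 0 := by
    intro w; rw [← binomComb_eval, h, Polynomial.eval_zero]
  have h2 : ∀ w : ℕ, ∀ hw : w < I, c ⟨w, hw⟩ = 0 := by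
    intro w
    induction w using Nat.strong_induction_on with
    | _ w ih =>
      intro hw
      have := h1 w
      rw [Finset.sum_eq_single ⟨w, hw⟩] at this
      · simpa using this
      · intro i _ hi
        rcases lt_trichotomy (i : ℕ) w with h3 | h3 | h3
        · rw [ih i h3 i.2, zero_mul]
        · exact absurd (Fin.ext h3) hi
        · rw [Nat.choose_eq_zero_of_lt h3]; simp
      · simp
  funext i
  exact h2 i i.2

open Polynomial in
/-- Zero estimate on `G_a × G_m`: a polynomial in `binom(X, i) Y^t` (`i < I`, `t < T`) which
vanishes at the translates `(w + r, y a ^ r)`, `r < T`, of more than `T (I - 1)` points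
with distinct abscissae is zero. -/
lemma zero_estimate {I T : ℕ} (a : ℂ) (ha : ∀ r s : Fin T, a ^ (r : ℕ) = a ^ (s : ℕ) → r = s)
    (c : Fin I × Fin T → ℂ) (S : Finset ℕ) (hS : T * (I - 1) < S.card) (y : ℕ → ℂ)
    (hy : ∀ w ∈ S, y w ≠ 0)
    (hz : ∀ w ∈ S, ∀ r : Fin T,
      ∑ x : Fin I × Fin T, c x * ((w + r : ℕ).choose x.1 : ℂ) * (y w * a ^ (r : ℕ)) ^ (x.2 : ℕ) = 0) :
    c = 0 := by
  classical
  by_contra hc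
  let p : Fin T → ℂ[X] := fun t => binomComb (fun i => c (i, t))
  let τ := {t : Fin T // p t ≠ 0}
  have hτ : Nonempty τ := by
    by_contra hne
    apply hc
    funext x
    have h0 : p x.2 = 0 := by
      by_contra h; exact hne ⟨⟨x.2, h⟩⟩
    exact congrFun (binomComb_eq_zero _ h0) x.1
  obtain ⟨f, hf⟩ := exists_minor_ne_zero (F := ℂ) (r := Fin T) (c := τ)
    (Matrix.of fun r t => a ^ ((r : ℕ) * (t.1 : ℕ))) (by
      intro v hv
      let u : Fin T → ℂ := fun t => if h : p t ≠ 0 then v ⟨t, h⟩ else 0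
      have hu : (Matrix.vandermonde (fun r : Fin T => a ^ (r : ℕ))).mulVec u = 0 := by
        funext r
        have := congrFun hv r
        rw [Matrix.mulVec, dotProduct] at this ⊢
        rw [Pi.zero_apply] at this ⊢
        rw [← this]
        rw [← Finset.sum_filter_add_sum_filter_not Finset.univ (fun t => p t ≠ 0)]
        rw [Finset.sum_eq_zero (s := Finset.univ.filter (fun t => ¬ (p t ≠ 0))), add_zero]
        · rw [Finset.sum_subtype (p := fun t => p t ≠ 0) (Finset.univ.filter (fun t => p t ≠ 0)) (by simp)]
          refine Finset.sum_congr rfl fun t _ => ?_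
          have : u t.1 = v t := dif_pos t.2
          rw [this, Matrix.vandermonde_apply, Matrix.of_apply, pow_mul]
        · intro t ht
          have : u t = 0 := dif_neg (Finset.mem_filter.mp ht).2
          rw [this, mul_zero]
      have hdet : (Matrix.vandermonde (fun r : Fin T => a ^ (r : ℕ))).det ≠ 0 :=
        Matrix.det_vandermonde_ne_zero_iff.mpr ha
      have hu0 := Matrix.eq_zero_of_mulVec_eq_zero hdet hu
      funext t
      have h1 : u t.1 = v t := dif_pos t.2
      rw [← h1, hu0]; rfl)
  let P : Matrix τ τ ℂ[X] := Matrix.of fun s t =>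
    C (a ^ ((f s : ℕ) * (t.1 : ℕ))) * (p t.1).comp (X + C ((f s : ℕ) : ℂ))
  have hdegP : ∀ s t, (P s t).natDegree ≤ (p t.1).natDegree := by
    intro s t
    change (C (a ^ ((f s : ℕ) * (t.1 : ℕ))) * (p t.1).comp (X + C ((f s : ℕ) : ℂ))).natDegree ≤ _
    refine (natDegree_C_mul_le _ _).trans ?_
    rw [natDegree_comp, natDegree_X_add_C, mul_one]
  have hcardτ : Fintype.card τ ≤ T := by
    have := Fintype.card_subtype_le (fun t : Fin T => p t ≠ 0)
    rwa [Fintype.card_fin] at this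
  have hpdeg : ∀ t, (p t).natDegree ≤ I - 1 := fun t => binomComb_natDegree _
  -- multiply column `t` by a power of `X` so that all columns have the same degree
  let Q : Matrix τ τ ℂ[X] := Matrix.of fun s t => X ^ (I - 1 - (p t.1).natDegree) * P s t
  have hQdet : Q.det = (∏ t : τ, (X : ℂ[X]) ^ (I - 1 - (p t.1).natDegree)) * P.det :=
    Matrix.det_mul_row _ _
  have hQdeg : ∀ s t, (Q s t).natDegree ≤ I - 1 := by
    intro s t
    change (X ^ (I - 1 - (p t.1).natDegree) * P s t).natDegree ≤ _
    refine (natDegree_mul_le).trans ?_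
    rw [natDegree_X_pow]
    have := hdegP s t
    have := hpdeg t.1
    omega
  have hQcoeff : ∀ s t, (Q s t).coeff (I - 1) =
      a ^ ((f s : ℕ) * (t.1 : ℕ)) * (p t.1).leadingCoeff := by
    intro s t
    have h1 : I - 1 = (p t.1).natDegree + (I - 1 - (p t.1).natDegree) := by
      have := hpdeg t.1; omega
    change (X ^ (I - 1 - (p t.1).natDegree) * P s t).coeff (I - 1) = _
    conv_lhs => rw [h1]
    rw [coeff_X_pow_mul', if_pos (by omega)]
    have h2 : (p t.1).natDegree + (I - 1 - (p t.1).natDegree) -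
      ((p t.1).natDegree + (I - 1 - (p t.1).natDegree) - (p t.1).natDegree) = (p t.1).natDegree := by omega
    rw [h2]
    change (C (a ^ ((f s : ℕ) * (t.1 : ℕ))) * (p t.1).comp (X + C ((f s : ℕ) : ℂ))).coeff _ = _
    rw [coeff_C_mul]
    congr 1
    have h3 : ((p t.1).comp (X + C ((f s : ℕ) : ℂ))).natDegree = (p t.1).natDegree := by
      rw [natDegree_comp, natDegree_X_add_C, mul_one]
    conv_lhs => rw [← h3]
    rw [coeff_natDegree, leadingCoeff_comp (by rw [natDegree_X_add_C]; norm_num), leadingCoeff_X_add_C, one_pow, mul_one]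
  have hQ0 : Q.det.coeff (Fintype.card τ * (I - 1)) ≠ 0 := by
    have h1 : Q.det.coeff (Fintype.card τ * (I - 1)) =
        (Matrix.of fun s t : τ => (Q s t).coeff (I - 1)).det := by
      rw [Matrix.det_apply, Matrix.det_apply, finsetSum_coeff]
      refine Finset.sum_congr rfl fun σ _ => ?_
      rw [coeff_smul]
      congr 1
      have := coeff_prod_of_natDegree_le (Finset.univ : Finset τ) (fun i => Q (σ i) i) (I - 1)
        (fun i _ => hQdeg _ _)
      rw [Finset.card_univ] at this
      rw [this]
      rfl
    rw [h1]
    have h2 : (Matrix.of fun s t : τ => (Q s t).coeff (I - 1)) =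
        Matrix.of fun s t : τ => (p t.1).leadingCoeff *
          ((Matrix.of fun (r : Fin T) (t : τ) => a ^ ((r : ℕ) * (t.1 : ℕ))).submatrix f id) s t := by
      ext s t
      rw [Matrix.of_apply, hQcoeff, mul_comm]
      rfl
    rw [h2, Matrix.det_mul_row]
    refine mul_ne_zero (Finset.prod_ne_zero_iff.mpr fun t _ => ?_) hf
    exact leadingCoeff_ne_zero.mpr t.2
  have hP0 : P.det ≠ 0 := by
    intro h
    rw [hQdet, h, mul_zero, coeff_zero] at hQ0
    exact hQ0 rfl
  have hPdeg : P.det.natDegree ≤ T * (I - 1) := by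
    rw [Matrix.det_apply]
    refine natDegree_sum_le_of_forall_le _ _ fun σ _ => ?_
    refine (natDegree_smul_le _ _).trans ?_
    refine (natDegree_prod_le _ _).trans ?_
    refine (Finset.sum_le_card_nsmul _ _ (I - 1) fun t _ => (hdegP _ _).trans (hpdeg _)).trans ?_
    rw [Finset.card_univ, smul_eq_mul]
    exact Nat.mul_le_mul_right _ hcardτ
  have hroot : ∀ w ∈ S, P.det.eval (w : ℂ) = 0 := by
    intro w hw
    rw [← coe_evalRingHom, RingHom.map_det]
    by_contra hne
    have := Matrix.eq_zero_of_mulVec_eq_zero (v := fun t : τ => (y w) ^ (t.1 : ℕ)) hne (by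
      funext s
      rw [Matrix.mulVec, dotProduct, Pi.zero_apply]
      have h1 := hz w hw (f s)
      rw [Fintype.sum_prod_type_right] at h1
      have h2 : ∀ t : Fin T, ∑ i : Fin I, c (i, t) * ((w + (f s : ℕ) : ℕ).choose i : ℂ) *
          (y w * a ^ (f s : ℕ)) ^ (t : ℕ) =
          a ^ ((f s : ℕ) * (t : ℕ)) * ((p t).eval ((w + (f s : ℕ) : ℕ) : ℂ)) * y w ^ (t : ℕ) := by
        intro t
        rw [← Finset.sum_mul, ← binomComb_eval, mul_pow, ← pow_mul]
        ring
      rw [Finset.sum_congr rfl fun t _ => h2 t,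
        ← Finset.sum_filter_add_sum_filter_not Finset.univ (fun t => p t ≠ 0),
        Finset.sum_eq_zero (s := Finset.univ.filter (fun t => ¬ (p t ≠ 0))), add_zero,
        Finset.sum_subtype (p := fun t => p t ≠ 0) (Finset.univ.filter (fun t => p t ≠ 0)) (by simp)] at h1
      · rw [← h1]
        refine Finset.sum_congr rfl fun t _ => ?_
        simp [P, eval_comp]
      · intro t ht
        have h3 : p t = 0 := by simpa using (Finset.mem_filter.mp ht).2
        rw [h3]; simp)
    obtain ⟨t⟩ := hτ
    exact pow_ne_zero _ (hy w hw) (congrFun this t)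
  have hsub : S.map ⟨fun w : ℕ => (w : ℂ), Nat.cast_injective⟩ ⊆ P.det.roots.toFinset := by
    intro z hz
    obtain ⟨w, hw, rfl⟩ := Finset.mem_map.mp hz
    rw [Multiset.mem_toFinset, mem_roots hP0]
    exact hroot w hw
  have h1 := Finset.card_le_card hsub
  rw [Finset.card_map] at h1
  have h2 := Multiset.toFinset_card_le P.det.roots
  have h3 := card_roots' P.det
  omega

/-! ### The analytic upper bound -/

/-- The binomial identity behind the interpolation determinant:
`binom(w,i) z^w` expanded around `z = 1`. -/
lemma choose_mul_pow_eq (w i : ℕ) (z : ℂ) :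
    (w.choose i : ℂ) * z ^ w =
      ∑ j ∈ Finset.range (w + 1), z ^ i * ((j.choose i : ℂ) * (z - 1) ^ (j - i)) * (w.choose j : ℂ) := by
  rcases lt_or_ge w i with h | h
  · rw [Nat.choose_eq_zero_of_lt h, Nat.cast_zero, zero_mul]
    symm
    refine Finset.sum_eq_zero fun j hj => ?_
    have : j < i := by have := Finset.mem_range.mp hj; omega
    rw [Nat.choose_eq_zero_of_lt this]; simp
  · obtain ⟨v, rfl⟩ := Nat.exists_eq_add_of_le h
    have h1 : z ^ v = ∑ j ∈ Finset.range (v + 1), (z - 1) ^ j * (v.choose j : ℂ) := by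
      have := add_pow (z - 1) 1 v
      simpa using this
    rw [show i + v + 1 = i + (v + 1) by ring, Finset.sum_range_add, Finset.sum_eq_zero, zero_add, pow_add, h1,
      Finset.mul_sum, Finset.mul_sum]
    · refine Finset.sum_congr rfl fun j hj => ?_
      have hj' : j ≤ v := by have := Finset.mem_range.mp hj; omega
      have h2 := Nat.choose_mul (n := i + v) (k := i + j) (s := i) (by omega)
      have h3 : ((i + v).choose (i + j) : ℂ) * ((i + j).choose i : ℂ) =
          ((i + v).choose i : ℂ) * (v.choose j : ℂ) := by
        have e1 : i + v - i = v := by omega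
        have e2 : i + j - i = j := by omega
        rw [e1, e2] at h2
        exact_mod_cast h2
      rw [show i + j - i = j by omega]
      linear_combination (-(z ^ i * (z - 1) ^ j)) * h3
    · intro j hj
      rw [Nat.choose_eq_zero_of_lt (Finset.mem_range.mp hj)]; simp

lemma pow_div_factorial_le_exp (x : ℝ) (hx : 0 ≤ x) (j : ℕ) : x ^ j / j.factorial ≤ Real.exp x :=
  Real.pow_div_factorial_le_exp x hx j

/-- The size of the terms in `choose_mul_pow_eq`: for `z` close to `1` they decay like `e^{-j}`. -/
lemma term_bound {w W I i j : ℕ} (hw : w ≤ W) (hi : i ≤ I) {z : ℂ} {τ : ℝ} (hz : ‖z‖ = 1)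
    (hτ0 : 0 < τ) (hτ1 : τ ≤ 1) (hzτ : ‖z - 1‖ ≤ τ) :
    ‖z ^ i * ((j.choose i : ℂ) * (z - 1) ^ (j - i)) * (w.choose j : ℂ)‖ ≤
      (τ⁻¹) ^ I * Real.exp (2 * Real.exp 1 * τ * W) * Real.exp (-(j : ℝ)) := by
  rw [norm_mul, norm_mul, norm_mul, norm_pow, norm_pow, hz, one_pow, one_mul,
    Complex.norm_natCast, Complex.norm_natCast]
  rcases lt_or_ge j i with h | h
  · rw [Nat.choose_eq_zero_of_lt h, Nat.cast_zero, zero_mul, zero_mul]; positivity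
  have h1 : (j.choose i : ℝ) ≤ 2 ^ j := by exact_mod_cast Nat.choose_le_two_pow j i
  have h2 : (w.choose j : ℝ) ≤ (W : ℝ) ^ j / j.factorial := by
    refine (Nat.choose_le_pow_div j w).trans ?_
    gcongr
  have h3 : ‖z - 1‖ ^ (j - i) ≤ τ ^ j * (τ⁻¹) ^ I := by
    have h4 : ‖z - 1‖ ^ (j - i) ≤ τ ^ (j - i) := by gcongr
    refine h4.trans ?_
    obtain ⟨v, rfl⟩ := Nat.exists_eq_add_of_le h
    rw [show i + v - i = v by omega]
    have h5 : 1 ≤ τ ^ i * (τ⁻¹) ^ I := by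
      obtain ⟨u, rfl⟩ := Nat.exists_eq_add_of_le hi
      rw [pow_add, ← mul_assoc, ← mul_pow, mul_inv_cancel₀ hτ0.ne', one_pow, one_mul]
      exact one_le_pow₀ ((one_le_inv₀ hτ0).mpr hτ1)
    calc τ ^ v = τ ^ v * 1 := by ring
      _ ≤ τ ^ v * (τ ^ i * (τ⁻¹) ^ I) := by gcongr
      _ = _ := by ring
  have h4 := pow_div_factorial_le_exp (2 * Real.exp 1 * τ * W) (by positivity) j
  calc (j.choose i : ℝ) * ‖z - 1‖ ^ (j - i) * (w.choose j : ℝ)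
      ≤ 2 ^ j * (τ ^ j * (τ⁻¹) ^ I) * ((W : ℝ) ^ j / j.factorial) := by gcongr
    _ = (τ⁻¹) ^ I * ((2 * Real.exp 1 * τ * W) ^ j / j.factorial) * (Real.exp (-(j : ℝ)) ) := by
        rw [Real.exp_neg, mul_pow, mul_pow, mul_pow, ← Real.exp_nat_mul, mul_one]
        have := Real.exp_pos (j : ℝ)
        field_simp
    _ ≤ _ := by gcongr

lemma sum_exp_tail (n N : ℕ) : ∑ j ∈ Finset.range N, Real.exp (-((n + j : ℕ) : ℝ)) ≤ 2 * Real.exp (-(n : ℝ)) := by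
  have h1 : ∀ j : ℕ, Real.exp (-((n + j : ℕ) : ℝ)) = Real.exp (-(n : ℝ)) * (Real.exp (-1)) ^ j := by
    intro j
    rw [← Real.exp_nat_mul, ← Real.exp_add]; congr 1; push_cast; ring
  rw [Finset.sum_congr rfl fun j _ => h1 j, ← Finset.mul_sum, mul_comm]
  gcongr
  have h2 : Real.exp (-1) ≤ 1 / 2 := by
    rw [Real.exp_neg, inv_eq_one_div]
    apply one_div_le_one_div_of_le (by norm_num)
    linarith [Real.add_one_le_exp (1 : ℝ)]
  have h3 : 0 < Real.exp (-1) := Real.exp_pos _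
  calc ∑ j ∈ Finset.range N, (Real.exp (-1)) ^ j ≤ ∑ j ∈ Finset.range N, (1 / 2 : ℝ) ^ j := by gcongr
    _ ≤ 2 := sum_geometric_two_le N

/-- Upper bound for the interpolation determinant with entries `binom(w,i) y^t` when
`y` is close to `a ^ w`. -/
lemma analytic_bound {I T W : ℕ} (a : ℂ) (ha : ‖a‖ = 1) (τ : ℝ) (hτ0 : 0 < τ) (hτ1 : τ ≤ 1)
    (haτ : ∀ t : Fin T, ‖a ^ (t : ℕ) - 1‖ ≤ τ)
    (w : Fin I × Fin T → ℕ) (y : Fin I × Fin T → ℂ) (hw : ∀ s, w s ≤ W) (K : ℝ) (hK : 1 ≤ K)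
    (hy : ∀ s, ∀ c : Fin I × Fin T, (w s).choose c.1 * ‖y s ^ (c.2 : ℕ) - a ^ (w s * c.2)‖ ≤
      K * Real.exp (-((I * T : ℕ) : ℝ))) :
    ‖(Matrix.of fun s c : Fin I × Fin T => ((w s).choose c.1 : ℂ) * y s ^ (c.2 : ℕ)).det‖ ≤
      ((I * T).factorial : ℝ) * (((I * T : ℕ) : ℝ) + 1) ^ (I * T) *
        (3 * (τ⁻¹) ^ I * Real.exp (2 * Real.exp 1 * τ * W) * K) ^ (I * T) *
        Real.exp (-((I * T * (I * T - 1) / 2 : ℕ) : ℝ)) := by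
  set n := I * T with hn
  set g : ℝ := (τ⁻¹) ^ I * Real.exp (2 * Real.exp 1 * τ * W) with hg
  have hg1 : 1 ≤ g := by
    rw [hg]
    exact one_le_mul_of_one_le_of_one_le (one_le_pow₀ ((one_le_inv₀ hτ0).mpr hτ1))
      (Real.one_le_exp (by positivity))
  let F : ℕ → (Fin I × Fin T) → (Fin I × Fin T) → ℂ := fun j c s =>
    (a ^ (c.2 : ℕ)) ^ (c.1 : ℕ) * ((j.choose c.1 : ℂ) * (a ^ (c.2 : ℕ) - 1) ^ (j - c.1)) * ((w s).choose j : ℂ)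
  have hF : ∀ j c s, ‖F j c s‖ ≤ g * Real.exp (-(j : ℝ)) := by
    intro j c s
    exact term_bound (hw s) c.1.2.le (by rw [norm_pow, ha, one_pow]) hτ0 hτ1 (haτ c.2)
  have key := det_small (ι := Fin I × Fin T) n (by simp [hn])
    (Matrix.of fun s c : Fin I × Fin T => ((w s).choose c.1 : ℂ) * y s ^ (c.2 : ℕ))
    (fun j s => ((w s).choose j : ℂ))
    (fun j c => (a ^ (c.2 : ℕ)) ^ (c.1 : ℕ) * (((j : ℕ).choose c.1 : ℂ) * (a ^ (c.2 : ℕ) - 1) ^ ((j : ℕ) - c.1)))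
    (fun c s => ∑ j ∈ Finset.range (w s + 1), F (n + j) c s +
      ((w s).choose c.1 : ℂ) * (y s ^ (c.2 : ℕ) - a ^ (w s * c.2)))
    (3 * g * K) (by positivity) ?_ ?_ ?_
  · refine key.trans_eq ?_
    rw [hg]; ring
  · intro s c
    have h1 : ((w s).choose c.1 : ℂ) * (a ^ (c.2 : ℕ)) ^ (w s) =
        ∑ j : Fin n, F j c s + ∑ j ∈ Finset.range (w s + 1), F (n + j) c s := by
      rw [choose_mul_pow_eq, Fin.sum_univ_eq_sum_range (fun j => F j c s) n,
        ← Finset.sum_range_add (fun j => F j c s), show n + (w s + 1) = (w s + 1) + n by ring, Finset.sum_range_add (fun j => F j c s) (w s + 1) n]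
      rw [Finset.sum_eq_zero (f := fun x => F (w s + 1 + x) c s), add_zero]
      intro j _
      simp only [F]
      rw [Nat.choose_eq_zero_of_lt (by omega : w s < w s + 1 + j)]; simp
    rw [Matrix.of_apply, ← add_assoc, ← h1, mul_comm (w s), pow_mul]
    ring
  · intro j c s
    refine (hF j c s).trans ?_
    have : g ≤ 3 * g * K := by nlinarith
    gcongr
  · intro c s
    have h1 : ‖∑ j ∈ Finset.range (w s + 1), F (n + j) c s‖ ≤ 2 * g * Real.exp (-(n : ℝ)) := by
      refine (norm_sum_le _ _).trans ?_
      refine (Finset.sum_le_sum fun j _ => hF (n + j) c s).trans ?_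
      rw [← Finset.mul_sum]
      have := sum_exp_tail n (w s + 1)
      nlinarith
    have h2 : ‖((w s).choose c.1 : ℂ) * (y s ^ (c.2 : ℕ) - a ^ (w s * c.2))‖ ≤ K * Real.exp (-(n : ℝ)) := by
      rw [norm_mul, Complex.norm_natCast]
      exact hy s c
    refine (norm_add_le _ _).trans ((add_le_add h1 h2).trans ?_)
    rw [← add_mul]
    have : 2 * g + K ≤ 3 * g * K := by nlinarith
    gcongr

/-! ### Comparison with Liouville's inequality -/

/-- Liouville's inequality: a nonzero algebraic integer has norm at least `1`. -/
lemma liouville {L : Type*} [Field L] [NumberField L] (φ₀ : L →+* ℂ) (z : NumberField.RingOfIntegers L)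
    (hz : z ≠ 0) (Bd : ℝ) (hBd : 1 ≤ Bd) (h : ∀ φ : L →+* ℂ, ‖φ z‖ ≤ Bd) (D : ℕ)
    (hD : Module.finrank ℚ L ≤ D) : 1 ≤ ‖φ₀ z‖ * Bd ^ (D - 1) := by
  classical
  have h1 := Algebra.norm_eq_prod_embeddings ℚ ℂ (z : L)
  have h2 : (1 : ℝ) ≤ ‖(algebraMap ℚ ℂ) (Algebra.norm ℚ (z : L))‖ := by
    rw [← Algebra.coe_norm_int, eq_ratCast, Rat.cast_intCast, Complex.norm_intCast]
    have : Algebra.norm ℤ z ≠ 0 := Algebra.norm_ne_zero_iff.mpr hz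
    exact_mod_cast Int.one_le_abs this
  rw [h1, norm_prod, ← Finset.mul_prod_erase Finset.univ _ (Finset.mem_univ (φ₀.toRatAlgHom))] at h2
  refine h2.trans ?_
  have h3 : ∏ σ ∈ Finset.univ.erase φ₀.toRatAlgHom, ‖σ (z : L)‖ ≤ Bd ^ (D - 1) := by
    calc ∏ σ ∈ Finset.univ.erase φ₀.toRatAlgHom, ‖σ (z : L)‖ ≤
        ∏ σ ∈ Finset.univ.erase φ₀.toRatAlgHom, Bd := by
          refine Finset.prod_le_prod (fun _ _ => norm_nonneg _) fun σ _ => h σ.toRingHom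
      _ = Bd ^ (Module.finrank ℚ L - 1) := by
          rw [Finset.prod_const, Finset.card_erase_of_mem (Finset.mem_univ _), Finset.card_univ, AlgHom.card]
      _ ≤ _ := pow_le_pow_right₀ hBd (by omega)
  exact mul_le_mul_of_nonneg_left h3 (norm_nonneg _)

lemma norm_pow_sub_pow_le (x y : ℂ) (hx : ‖x‖ = 1) (hy : ‖y‖ = 1) (n : ℕ) :
    ‖x ^ n - y ^ n‖ ≤ n * ‖x - y‖ := by
  induction n with
  | zero => simp
  | succ n ih =>
    have : x ^ (n + 1) - y ^ (n + 1) = x * (x ^ n - y ^ n) + (x - y) * y ^ n := by ring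
    rw [this]
    refine (norm_add_le _ _).trans ?_
    rw [norm_mul, norm_mul, hx, norm_pow, hy, one_pow, one_mul, mul_one]
    push_cast
    linarith

/-- The inequality obtained by comparing the analytic upper bound and the arithmetic lower bound
for a nonvanishing interpolation determinant. -/
lemma transcend_ineq {L : Type*} [Field L] [NumberField L] (φ₀ : L →+* ℂ)
    (a p q : NumberField.RingOfIntegers L) (R₁ R₂ : ℝ) (hR₁ : 0 ≤ R₁) (hR₂ : 0 ≤ R₂)
    (hA : ∀ φ : L →+* ℂ, ‖φ a‖ ≤ Real.exp R₁) (hP : ∀ φ : L →+* ℂ, ‖φ p‖ ≤ Real.exp R₂)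
    (hQ : ∀ φ : L →+* ℂ, ‖φ q‖ ≤ Real.exp R₂) (D : ℕ) (hD : Module.finrank ℚ L ≤ D)
    (ha : ‖φ₀ a‖ = 1) (hroot : ∀ k : ℕ, 0 < k → a ^ k ≠ 1) (hpq : ‖φ₀ p‖ = ‖φ₀ q‖) (hq : φ₀ q ≠ 0)
    (m I T S₁ S₂ : ℕ) (hI : 0 < I) (hT : 0 < T) (hS₂ : 0 < S₂) (hm : S₁ + T ≤ m)
    (hS : T * (I - 1) < S₁ * S₂) (τ : ℝ) (hτ0 : 0 < τ) (hτ1 : τ ≤ 1)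
    (haτ : ∀ t : Fin T, ‖φ₀ a ^ (t : ℕ) - 1‖ ≤ τ)
    (hclose : ‖φ₀ p / φ₀ q - φ₀ a ^ m‖ ≤ Real.exp (-((I * T : ℕ) : ℝ)))
    (Ch : ℝ) (hCh1 : 1 ≤ Ch) (hCh : ∀ w i : ℕ, w ≤ m * S₂ → i < I → (w.choose i : ℝ) ≤ Ch) :
    (((I * T : ℕ) : ℝ) - 1) / 2 ≤ (D + 1) * Real.log (((I * T : ℕ) : ℝ) + 1) +
      D * (T * S₂ * R₂ + T * (S₁ + T) * R₁ + Real.log Ch) +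
      Real.log (3 * (τ⁻¹) ^ I * Real.exp (2 * Real.exp 1 * τ * (m * S₂ : ℕ)) * (Ch * T * S₂)) := by
  classical
  have hD1 : 1 ≤ D := le_trans Module.finrank_pos hD
  set γ : ℂ := φ₀ p / φ₀ q with hγ
  have hγ1 : ‖γ‖ = 1 := by rw [hγ, norm_div, hpq, div_self (norm_ne_zero_iff.mpr hq)]
  have hγ0 : γ ≠ 0 := norm_ne_zero_iff.mp (by rw [hγ1]; norm_num)
  set α : ℂ := φ₀ a with hα
  have hα0 : α ≠ 0 := norm_ne_zero_iff.mp (by rw [ha]; norm_num)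
  have hinjL : ∀ x y : NumberField.RingOfIntegers L, φ₀ x = φ₀ y → x = y := by
    intro x y h
    exact NumberField.RingOfIntegers.ext (φ₀.injective h)
  have hroot' : ∀ k : ℕ, 0 < k → α ^ k ≠ 1 := by
    intro k hk h
    refine hroot k hk (hinjL _ _ ?_)
    rw [hα] at h
    simpa using h
  have hinj : ∀ r s : Fin T, α ^ (r : ℕ) = α ^ (s : ℕ) → r = s := by
    have aux : ∀ r s : ℕ, r < s → α ^ r ≠ α ^ s := by
      intro r s hrs h
      obtain ⟨k, rfl⟩ := Nat.exists_eq_add_of_lt hrs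
      refine hroot' (k + 1) (by omega) ?_
      rw [show r + k + 1 = r + (k + 1) by ring, pow_add] at h
      have := pow_ne_zero r hα0
      field_simp at h
      exact h.symm
    intro r s h
    rcases lt_trichotomy (r : ℕ) s with h1 | h1 | h1
    · exact absurd h (aux _ _ h1)
    · exact Fin.ext h1
    · exact absurd h.symm (aux _ _ h1)
  -- The rows are chosen among the points `w = s₁ + m s₂`, where `γ ^ s₂ α ^ s₁` approximates `α ^ w`.
  let wt : Fin (S₁ + T) × Fin S₂ → ℕ := fun s => s.1 + m * s.2
  let Y : Fin (S₁ + T) × Fin S₂ → ℂ := fun s => α ^ (s.1 : ℕ) * γ ^ (s.2 : ℕ)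
  obtain ⟨f, hf⟩ := exists_minor_ne_zero (F := ℂ) (r := Fin (S₁ + T) × Fin S₂) (c := Fin I × Fin T)
    (Matrix.of fun s c => ((wt s).choose c.1 : ℂ) * Y s ^ (c.2 : ℕ)) (by
      intro v hv
      let S : Finset ℕ := (Finset.range S₁ ×ˢ Finset.range S₂).image fun s => s.1 + m * s.2
      have hmpos : 0 < m := by omega
      refine zero_estimate α hinj v S ?_ (fun w => α ^ (w % m) * γ ^ (w / m)) ?_ ?_
      · rw [Finset.card_image_of_injOn, Finset.card_product, Finset.card_range, Finset.card_range]
        · exact hS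
        · rintro ⟨s1, s2⟩ hs ⟨t1, t2⟩ ht h
          simp only [Finset.coe_product, Finset.coe_range, Set.mem_prod, Set.mem_Iio] at hs ht
          change s1 + m * s2 = t1 + m * t2 at h
          have h1 : s1 < m := by omega
          have h2 : t1 < m := by omega
          have h3 := congrArg (· % m) h
          have h4 := congrArg (· / m) h
          simp only [Nat.add_mul_mod_self_left, Nat.mod_eq_of_lt h1, Nat.mod_eq_of_lt h2] at h3
          simp only [Nat.add_mul_div_left _ _ hmpos, Nat.div_eq_of_lt h1, Nat.div_eq_of_lt h2, zero_add] at h4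
          rw [h3, h4]
      · intro w _
        exact mul_ne_zero (pow_ne_zero _ hα0) (pow_ne_zero _ hγ0)
      · intro w hw r
        obtain ⟨⟨s1, s2⟩, hs, rfl⟩ := Finset.mem_image.mp hw
        simp only [Finset.mem_product, Finset.mem_range] at hs
        have h1 : s1 < m := by omega
        have h5 := congrFun hv (⟨s1 + r, by have := r.2; omega⟩, ⟨s2, hs.2⟩)
        rw [Pi.zero_apply] at h5
        rw [← h5, Matrix.mulVec, dotProduct]
        refine Finset.sum_congr rfl fun x _ => ?_
        simp only [Matrix.of_apply, wt, Y, Nat.add_mul_mod_self_left, Nat.mod_eq_of_lt h1,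
          Nat.add_mul_div_left _ _ hmpos, Nat.div_eq_of_lt h1, zero_add]
        rw [show s1 + m * s2 + (r : ℕ) = s1 + r + m * s2 by ring, pow_add α s1]
        ring)
  have hwle : ∀ s, wt (f s) ≤ m * S₂ := by
    intro s
    have h1 := (f s).1.2
    have h2 : ((f s).2 : ℕ) + 1 ≤ S₂ := (f s).2.2
    have h3 := Nat.mul_le_mul_left m h2
    have : wt (f s) = (f s).1 + m * (f s).2 := rfl
    rw [this]; rw [mul_add] at h3; omega
  have hTr : (1 : ℝ) ≤ T := by exact_mod_cast hT
  have hSr : (1 : ℝ) ≤ S₂ := by exact_mod_cast hS₂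
  have hK1 : 1 ≤ Ch * T * S₂ :=
    one_le_mul_of_one_le_of_one_le (one_le_mul_of_one_le_of_one_le hCh1 hTr) hSr
  have upper := analytic_bound (I := I) (T := T) (W := m * S₂) α ha τ hτ0 hτ1 haτ (fun s => wt (f s))
    (fun s => Y (f s)) hwle (Ch * T * S₂) hK1 (by
      intro s c
      have h1 : Y (f s) ^ (c.2 : ℕ) - α ^ (wt (f s) * c.2) =
          α ^ ((f s).1 * c.2 : ℕ) * (γ ^ ((f s).2 * c.2 : ℕ) - (α ^ m) ^ ((f s).2 * c.2 : ℕ)) := by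
        simp only [Y, wt]
        rw [mul_pow, ← pow_mul, ← pow_mul, ← pow_mul, mul_sub, ← pow_add]
        congr 2; ring
      have h2 : ‖γ ^ ((f s).2 * c.2 : ℕ) - (α ^ m) ^ ((f s).2 * c.2 : ℕ)‖ ≤
          (T * S₂ : ℝ) * Real.exp (-((I * T : ℕ) : ℝ)) := by
        refine (norm_pow_sub_pow_le _ _ hγ1 (by rw [norm_pow, ha, one_pow]) _).trans ?_
        have h3 : (((f s).2 * c.2 : ℕ) : ℝ) ≤ T * S₂ := by
          have h4 : ((f s).2 : ℕ) * c.2 ≤ S₂ * T := Nat.mul_le_mul (f s).2.2.le c.2.2.le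
          rw [mul_comm S₂] at h4
          exact_mod_cast h4
        gcongr
      rw [h1, norm_mul, norm_pow, ha, one_pow, one_mul]
      calc ((wt (f s)).choose c.1 : ℝ) * _ ≤ Ch * ((T * S₂ : ℝ) * Real.exp (-((I * T : ℕ) : ℝ))) := by
            gcongr
            exact hCh _ _ (hwle s) c.1.2
        _ = _ := by ring)
  -- the corresponding algebraic integer
  let N : Matrix (Fin I × Fin T) (Fin I × Fin T) (NumberField.RingOfIntegers L) := Matrix.of fun s c =>
    p ^ ((f s).2 * c.2 : ℕ) * q ^ (T * S₂ - (f s).2 * c.2 : ℕ) * a ^ ((f s).1 * c.2 : ℕ) *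
      ((wt (f s)).choose c.1 : ℕ)
  have hexp : ∀ s (c : Fin I × Fin T), ((f s).2 : ℕ) * c.2 ≤ T * S₂ := by
    intro s c
    rw [mul_comm T]
    exact Nat.mul_le_mul (f s).2.2.le c.2.2.le
  have hmap : ∀ φ : L →+* ℂ, φ (N.det : L) = (Matrix.of fun s c => φ (N s c : L)).det := by
    intro φ
    have := RingHom.map_det (φ.comp (algebraMap (NumberField.RingOfIntegers L) L)) N
    exact this
  have hN0 : φ₀ (N.det : L) = (φ₀ q ^ (T * S₂)) ^ (I * T) *
      (Matrix.of fun s c : Fin I × Fin T => ((wt (f s)).choose c.1 : ℂ) * Y (f s) ^ (c.2 : ℕ)).det := by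
    rw [hmap]
    have h1 : (Matrix.of fun s c => φ₀ (N s c : L)) = (φ₀ q ^ (T * S₂)) •
      (Matrix.of fun s c : Fin I × Fin T => ((wt (f s)).choose c.1 : ℂ) * Y (f s) ^ (c.2 : ℕ)) := by
      ext s c
      rw [Matrix.smul_apply, Matrix.of_apply, Matrix.of_apply, smul_eq_mul]
      simp only [N, Matrix.of_apply, map_mul, map_pow, map_natCast, Y]
      rw [mul_pow, ← pow_mul, ← pow_mul, hγ, div_pow]
      have h2 : φ₀ q ^ (T * S₂) = φ₀ q ^ (T * S₂ - (f s).2 * c.2 : ℕ) * φ₀ q ^ ((f s).2 * c.2 : ℕ) := by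
        rw [← pow_add, Nat.sub_add_cancel (hexp s c)]
      rw [h2]
      have := pow_ne_zero ((f s).2 * c.2 : ℕ) hq
      field_simp
      rw [hα]; ring
    rw [h1, Matrix.det_smul]
    simp
  have hdet0 : N.det ≠ 0 := by
    intro h
    rw [h] at hN0
    simp only [map_zero] at hN0
    have := mul_ne_zero (pow_ne_zero (I * T) (pow_ne_zero (T * S₂) hq)) hf
    exact this hN0.symm
  set b : ℝ := Ch * Real.exp (T * S₂ * R₂ + T * (S₁ + T) * R₁) with hb
  have hb1 : 1 ≤ b := one_le_mul_of_one_le_of_one_le hCh1 (Real.one_le_exp (by positivity))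
  have hconj : ∀ φ : L →+* ℂ, ‖φ (N.det : L)‖ ≤ (I * T).factorial * b ^ (I * T) := by
    intro φ
    rw [hmap]
    have := norm_det_le_of_row (Matrix.of fun s c => φ (N s c : L)) (fun _ => b) ?_
    · simpa using this
    · intro s c
      rw [Matrix.of_apply]
      simp only [N, Matrix.of_apply, map_mul, map_pow, map_natCast]
      rw [norm_mul, norm_mul, norm_mul, norm_pow, norm_pow, norm_pow, Complex.norm_natCast]
      have e1 : (1 : ℝ) ≤ Real.exp R₂ := Real.one_le_exp hR₂
      have e2 : (1 : ℝ) ≤ Real.exp R₁ := Real.one_le_exp hR₁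
      have i3 : ‖φ a‖ ^ ((f s).1 * c.2 : ℕ) ≤ Real.exp R₁ ^ ((S₁ + T) * T) := by
        refine (pow_le_pow_left₀ (norm_nonneg _) (hA φ) _).trans ?_
        exact pow_le_pow_right₀ e2 (Nat.mul_le_mul (f s).1.2.le c.2.2.le)
      calc ‖φ p‖ ^ ((f s).2 * c.2 : ℕ) * ‖φ q‖ ^ (T * S₂ - (f s).2 * c.2 : ℕ) *
            ‖φ a‖ ^ ((f s).1 * c.2 : ℕ) * ((wt (f s)).choose c.1 : ℝ) ≤
          Real.exp R₂ ^ ((f s).2 * c.2 : ℕ) * Real.exp R₂ ^ (T * S₂ - (f s).2 * c.2 : ℕ) *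
            Real.exp R₁ ^ ((S₁ + T) * T) * Ch := by
            gcongr
            · exact hP φ
            · exact hQ φ
            · exact hCh _ _ (hwle s) c.1.2
        _ = Real.exp R₂ ^ (T * S₂) * Real.exp R₁ ^ ((S₁ + T) * T) * Ch := by
            rw [← pow_add, Nat.add_sub_cancel' (hexp s c)]
        _ = b := by
            rw [hb, ← Real.exp_nat_mul, ← Real.exp_nat_mul, ← Real.exp_add, mul_comm]
            congr 2; push_cast; ring
  set n := I * T with hn
  have hn1 : 1 ≤ n := Nat.mul_pos hI hT
  have hfac : (n.factorial : ℝ) ≤ ((n : ℝ) + 1) ^ n := by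
    have : n.factorial ≤ n ^ n := Nat.factorial_le_pow n
    have h2 : n ^ n ≤ (n + 1) ^ n := Nat.pow_le_pow_left (by omega) n
    exact_mod_cast this.trans h2
  have hfac1 : (1 : ℝ) ≤ n.factorial := by exact_mod_cast Nat.factorial_pos n
  have liou := liouville φ₀ N.det hdet0 _
    (one_le_mul_of_one_le_of_one_le hfac1 (one_le_pow₀ hb1)) hconj D hD
  rw [hN0, norm_mul, norm_pow, norm_pow] at liou
  set G : ℝ := 3 * (τ⁻¹) ^ I * Real.exp (2 * Real.exp 1 * τ * (m * S₂ : ℕ)) * (Ch * T * S₂) with hG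
  have hGpos : 0 < G := by positivity
  have hbpos : 0 < b := by positivity
  have final : 1 ≤ (Real.exp R₂ ^ (T * S₂)) ^ n * (((n : ℝ) + 1) ^ n * ((n : ℝ) + 1) ^ n * G ^ n *
      Real.exp (-((n * (n - 1) / 2 : ℕ) : ℝ))) * (((n : ℝ) + 1) ^ n * b ^ n) ^ (D - 1) := by
    refine liou.trans ?_
    have hq2 := hQ φ₀
    refine mul_le_mul (mul_le_mul ?_ (upper.trans ?_) (norm_nonneg _) (by positivity)) ?_ (by positivity) (by positivity)
    · gcongr
    · gcongr
    · gcongr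
  have hlog := Real.log_nonneg final
  have hn1pos : (0 : ℝ) < (n : ℝ) + 1 := by positivity
  have hb' : Real.log b = Real.log Ch + (T * S₂ * R₂ + T * (S₁ + T) * R₁) := by
    rw [hb, Real.log_mul (by positivity) (Real.exp_pos _).ne', Real.log_exp]
  have hhalf : ((n * (n - 1) / 2 : ℕ) : ℝ) = n * (n - 1) / 2 := by
    have h1 : 2 ∣ n * (n - 1) := (Nat.even_mul_pred_self n).two_dvd
    rw [Nat.cast_div h1 (by norm_num), Nat.cast_mul, Nat.cast_sub hn1]
    norm_num
  clear_value G b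
  rw [Real.log_mul (by positivity) (by positivity), Real.log_mul (by positivity) (by positivity),
    Real.log_mul (by positivity) (by positivity), Real.log_mul (by positivity) (by positivity),
    Real.log_mul (by positivity) (by positivity), Real.log_pow, Real.log_pow, Real.log_pow, Real.log_pow, Real.log_pow,
    Real.log_exp, Real.log_exp, Real.log_mul (by positivity) (by positivity), Real.log_pow, Real.log_pow, hb', hhalf,
    Nat.cast_sub hD1] at hlog
  have hnr : (0 : ℝ) < n := by exact_mod_cast hn1
  have hTS : 0 ≤ (T : ℝ) * (S₁ + T) * R₁ := by positivity
  have hlC := Real.log_nonneg hCh1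
  have h9 : 0 ≤ (n : ℝ) * ((D + 1) * Real.log ((n : ℝ) + 1) +
      D * (T * S₂ * R₂ + T * (S₁ + T) * R₁ + Real.log Ch) + Real.log G - ((n : ℝ) - 1) / 2) := by
    push_cast at hlog
    have : 0 ≤ (n : ℝ) * (T * (S₁ + T) * R₁ + Real.log Ch) := by positivity
    nlinarith
  have := nonneg_of_mul_nonneg_right h9 hnr
  linarith

/-! ### Choice of parameters -/

lemma log_le_twenty_add (y : ℝ) (hy : 0 < y) : Real.log y ≤ 20 + y / 2 ^ 20 := by
  have h1 : (2 : ℝ) ^ 20 ≤ Real.exp 20 := by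
    have h2 : (2 : ℝ) ≤ Real.exp 1 := by linarith [Real.add_one_le_exp (1 : ℝ)]
    have h3 : Real.exp 20 = Real.exp 1 ^ 20 := by rw [← Real.exp_nat_mul]; norm_num
    rw [h3]; gcongr
  have h4 := Real.log_le_sub_one_of_pos (show 0 < y / Real.exp 20 by positivity)
  rw [Real.log_div hy.ne' (Real.exp_pos _).ne', Real.log_exp] at h4
  have h5 : y / Real.exp 20 ≤ y / 2 ^ 20 := by gcongr
  linarith

lemma log_ten_le : Real.log 10 ≤ 2.8 := by
  have h1 : Real.log 10 ≤ Real.log (2 ^ 4) := Real.log_le_log (by norm_num) (by norm_num)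
  rw [Real.log_pow] at h1
  have := Real.log_two_lt_d9
  push_cast at h1
  linarith

/-- A weak lower bound for linear forms in two logarithms, `p / q` against `a ^ m`, in which `a`
and `q` may have independent sizes: `m` is bounded by a multiple of `R₂`, uniformly in `R₁`. -/
lemma transcend {L : Type*} [Field L] [NumberField L] (φ₀ : L →+* ℂ)
    (a p q : NumberField.RingOfIntegers L) (R₁ R₂ : ℝ) (hR₁ : 1 ≤ R₁) (hR₂ : 1 ≤ R₂)
    (hA : ∀ φ : L →+* ℂ, ‖φ a‖ ≤ Real.exp R₁) (hP : ∀ φ : L →+* ℂ, ‖φ p‖ ≤ Real.exp R₂)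
    (hQ : ∀ φ : L →+* ℂ, ‖φ q‖ ≤ Real.exp R₂) (hD : Module.finrank ℚ L ≤ 27)
    (ha : ‖φ₀ a‖ = 1) (ha1 : ‖φ₀ a - 1‖ ≤ 1 / 10 ^ 19)
    (hroot : ∀ k : ℕ, 0 < k → a ^ k ≠ 1) (hpq : ‖φ₀ p‖ = ‖φ₀ q‖) (hq : φ₀ q ≠ 0) (m : ℕ)
    (hclose : ‖φ₀ p / φ₀ q - φ₀ a ^ m‖ ≤ Real.exp (-(m * R₁ / 9))) :
    (m : ℝ) ≤ 10 ^ 20 * R₂ := by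
  by_contra hm
  push Not at hm
  have hm20 : (10 : ℝ) ^ 20 ≤ m := by nlinarith
  have hmN : 10 ^ 20 ≤ m := by exact_mod_cast hm20
  set x : ℝ := m * R₁ with hx
  have hxm : (m : ℝ) ≤ x := by rw [hx]; nlinarith
  have hx20 : (10 : ℝ) ^ 20 ≤ x := hm20.trans hxm
  have hR1x : R₁ ≤ x / 10 ^ 20 := by
    rw [le_div_iff₀ (by positivity), hx]; nlinarith
  -- Parameters of the determinant: `T = 10 ^ 5` is a large constant, `I T` is about `m R₁ / 9` so that
  -- `hclose` is exploited fully, `S₁` is a small multiple of `m`, and `S₂` is about `I T / S₁`, which is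
  -- a constant multiple of `R₁`.
  obtain ⟨I, hIdef⟩ : ∃ I, I = ⌊x / (9 * 10 ^ 5)⌋₊ := ⟨_, rfl⟩
  have hIle : (I : ℝ) ≤ x / (9 * 10 ^ 5) := by rw [hIdef]; exact Nat.floor_le (by positivity)
  have hIge : x / (9 * 10 ^ 5) - 1 ≤ I := by
    rw [hIdef]; exact (Nat.sub_one_lt_floor _).le
  have hIpos : 0 < I := by
    have : (0 : ℝ) < I := by
      refine lt_of_lt_of_le ?_ hIge
      linarith
    exact_mod_cast this
  obtain ⟨S₁, hS1def⟩ : ∃ S, S = m / 10 ^ 10 := ⟨_, rfl⟩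
  have hS1le : (S₁ : ℝ) ≤ m / 10 ^ 10 := by
    rw [hS1def]
    have := @Nat.cast_div_le ℝ _ _ _ m (10 ^ 10)
    exact_mod_cast this
  have hS1ge : (m : ℝ) / (2 * 10 ^ 10) ≤ S₁ := by
    have h1 : m < 10 ^ 10 * S₁ + 10 ^ 10 := by omega
    have h2 : (m : ℝ) < 10 ^ 10 * S₁ + 10 ^ 10 := by exact_mod_cast h1
    linarith
  have hS1pos : 0 < S₁ := by omega
  obtain ⟨n, hn⟩ : ∃ n, n = I * 10 ^ 5 := ⟨_, rfl⟩
  have hnr : (n : ℝ) = I * 10 ^ 5 := by rw [hn]; push_cast; ring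
  obtain ⟨S₂, hS2def⟩ : ∃ S, S = n / S₁ + 1 := ⟨_, rfl⟩
  have hS2pos : 0 < S₂ := by rw [hS2def]; exact Nat.succ_pos _
  have hS2le : (S₂ : ℝ) ≤ 10 ^ 10 * R₁ := by
    have h1 : ((n / S₁ : ℕ) : ℝ) ≤ n / S₁ := Nat.cast_div_le
    have hmpos : (0 : ℝ) < m := by linarith
    have h2 : (n : ℝ) / S₁ ≤ (x / 9) / (m / (2 * 10 ^ 10)) := by
      have : (n : ℝ) ≤ x / 9 := by rw [hnr]; linarith
      gcongr
    have h3 : (x / 9) / (m / (2 * 10 ^ 10)) = 2 / 9 * 10 ^ 10 * R₁ := by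
      rw [hx]; field_simp
    rw [hS2def]; push_cast
    linarith
  have hSS : 10 ^ 5 * (I - 1) < S₁ * S₂ := by
    have h1 : n < S₁ * S₂ := by
      rw [hS2def]
      exact Nat.lt_mul_div_succ n hS1pos
    have h2 : 10 ^ 5 * (I - 1) ≤ n := by rw [hn]; omega
    omega
  set Ch : ℝ := (9 * 10 ^ 15) ^ I * Real.exp (x / (9 * 10 ^ 5)) with hCh
  have hW : ((m * S₂ : ℕ) : ℝ) ≤ 10 ^ 10 * x := by
    push_cast
    rw [hx]; nlinarith
  have key := transcend_ineq φ₀ a p q R₁ R₂ (by linarith) (by linarith) hA hP hQ 27 hD ha hroot hpq hq m I (10 ^ 5)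
    S₁ S₂ hIpos (by norm_num) hS2pos (by omega) hSS (1 / 10 ^ 14) (by norm_num) (by norm_num)
    (by
      intro t
      have h1 := norm_pow_sub_pow_le (φ₀ a) 1 ha (by simp) t
      rw [one_pow] at h1
      refine h1.trans ?_
      have h2 : ((t : ℕ) : ℝ) ≤ 10 ^ 5 := by exact_mod_cast t.2.le
      calc ((t : ℕ) : ℝ) * ‖φ₀ a - 1‖ ≤ 10 ^ 5 * (1 / 10 ^ 19) := by gcongr
        _ = _ := by norm_num)
    (hclose.trans (Real.exp_le_exp.mpr (by
      rw [← hn, hnr]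
      linarith)))
    Ch
    (one_le_mul_of_one_le_of_one_le (one_le_pow₀ (by norm_num)) (Real.one_le_exp (by positivity)))
    (by
      intro w i hw hi
      have h1 : (w : ℝ) ≤ 10 ^ 10 * x := le_trans (by exact_mod_cast hw) hW
      calc (w.choose i : ℝ) ≤ (w : ℝ) ^ i / i.factorial := Nat.choose_le_pow_div i w
        _ ≤ (10 ^ 10 * x) ^ i / i.factorial := by gcongr
        _ = (9 * 10 ^ 15) ^ i * ((x / (9 * 10 ^ 5)) ^ i / i.factorial) := by
            rw [← mul_div_assoc, ← mul_pow]; congr 2; ring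
        _ ≤ (9 * 10 ^ 15) ^ I * Real.exp (x / (9 * 10 ^ 5)) := by
            have := pow_div_factorial_le_exp (x / (9 * 10 ^ 5)) (by positivity) i
            have h3 : (9 * 10 ^ 15 : ℝ) ^ i ≤ (9 * 10 ^ 15) ^ I := pow_le_pow_right₀ (by norm_num) hi.le
            gcongr)
  rw [← hn, hnr] at key
  have hl10 := log_ten_le
  have hI0 : (0 : ℝ) ≤ I := by positivity
  have hlogCh : Real.log Ch ≤ 46 * (x / (9 * 10 ^ 5)) := by
    rw [hCh, Real.log_mul (by positivity) (by positivity), Real.log_pow, Real.log_exp]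
    have h1 : Real.log (9 * 10 ^ 15) ≤ 45 := by
      have : Real.log (9 * 10 ^ 15) ≤ Real.log (10 ^ 16) := Real.log_le_log (by positivity) (by norm_num)
      rw [Real.log_pow] at this
      push_cast at this
      linarith
    generalize Real.log (9 * 10 ^ 15) = u at h1 ⊢
    have h2 : (I : ℝ) * u ≤ I * 45 := by gcongr
    clear key
    linarith
  have hS2r : (1 : ℝ) ≤ S₂ := by exact_mod_cast hS2pos
  have hChpos : 0 < Ch := by positivity
  have hlogS2 : Real.log S₂ ≤ 28 + R₁ := by
    have h1 : Real.log S₂ ≤ Real.log (10 ^ 10 * R₁) := Real.log_le_log (by positivity) hS2le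
    rw [Real.log_mul (by positivity) (by positivity), Real.log_pow] at h1
    have h2 := Real.log_le_sub_one_of_pos (show 0 < R₁ by linarith)
    push_cast at h1
    linarith
  have hlogG : Real.log (3 * ((1 / 10 ^ 14 : ℝ)⁻¹) ^ I *
      Real.exp (2 * Real.exp 1 * (1 / 10 ^ 14) * (m * S₂ : ℕ)) * (Ch * (10 ^ 5 : ℕ) * S₂)) ≤
      2 + I * 40 + 6 / 10 ^ 4 * x + (46 * (x / (9 * 10 ^ 5)) + 14 + (28 + R₁)) := by
    rw [Real.log_mul (by positivity) (by positivity), Real.log_mul (by positivity) (by positivity),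
      Real.log_mul (by positivity) (by positivity), Real.log_mul (by positivity) (by positivity),
      Real.log_mul (by positivity) (by positivity), Real.log_pow, Real.log_exp]
    have h1 : Real.log 3 ≤ 2 := by
      have := Real.log_le_sub_one_of_pos (show (0 : ℝ) < 3 by norm_num)
      linarith
    have h2 : Real.log ((1 / 10 ^ 14 : ℝ)⁻¹) ≤ 40 := by
      rw [one_div, inv_inv, Real.log_pow]; push_cast; linarith
    have h3 : 2 * Real.exp 1 * (1 / 10 ^ 14) * (m * S₂ : ℕ) ≤ 6 / 10 ^ 4 * x := by
      have h4 : Real.exp 1 ≤ 3 := by linarith [Real.exp_one_lt_d9]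
      calc 2 * Real.exp 1 * (1 / 10 ^ 14) * (m * S₂ : ℕ) ≤ 2 * 3 * (1 / 10 ^ 14) * (10 ^ 10 * x) := by gcongr
        _ = _ := by ring
    have h5 : Real.log ((10 ^ 5 : ℕ) : ℝ) ≤ 14 := by
      rw [Nat.cast_pow, Real.log_pow]; push_cast; linarith
    generalize Real.log ((1 / 10 ^ 14 : ℝ)⁻¹) = u at h2 ⊢
    generalize 2 * Real.exp 1 * (1 / 10 ^ 14) * (m * S₂ : ℕ) = v at h3 ⊢
    generalize Real.log ((10 ^ 5 : ℕ) : ℝ) = v' at h5 ⊢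
    have h6 : (I : ℝ) * u ≤ I * 40 := by gcongr
    clear key
    linarith
  have hlogn := log_le_twenty_add ((I : ℝ) * 10 ^ 5 + 1) (by positivity)
  have hTS : (10 : ℝ) ^ 5 * S₂ * R₂ ≤ x / 10 ^ 5 := by
    calc (10 : ℝ) ^ 5 * S₂ * R₂ ≤ 10 ^ 5 * (10 ^ 10 * R₁) * (m / 10 ^ 20) := by
          gcongr
          rw [le_div_iff₀ (by positivity)]; linarith
      _ = _ := by rw [hx]; ring
  have hTR : (10 : ℝ) ^ 5 * (S₁ + 10 ^ 5) * R₁ ≤ x / 10 ^ 5 + 10 ^ 10 * R₁ := by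
    calc (10 : ℝ) ^ 5 * (S₁ + 10 ^ 5) * R₁ ≤ 10 ^ 5 * (m / 10 ^ 10 + 10 ^ 5) * R₁ := by gcongr
      _ = _ := by rw [hx]; ring
  set lG := Real.log (3 * ((1 / 10 ^ 14 : ℝ)⁻¹) ^ I *
      Real.exp (2 * Real.exp 1 * (1 / 10 ^ 14) * (m * S₂ : ℕ)) * (Ch * (10 ^ 5 : ℕ) * S₂))
  clear_value lG
  push_cast at key
  linarith

/-! ### Pure cubic fields -/

open NumberField in
/-- A pure cubic number field `K = ℚ(θ)`, `θ ^ 3 = d` with `d ≥ 2` cubefree, together with its three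
complex embeddings: `τ₁` is real and `τ₂`, `τ₃` are complex conjugate. -/
structure CubicData (K : Type) [Field K] [NumberField K] where
  d : ℕ
  θ : 𝓞 K
  r : ℝ
  ω : ℂ
  τ₁ : K →+* ℂ
  τ₂ : K →+* ℂ
  τ₃ : K →+* ℂ
  two_le : 2 ≤ d
  cubefree : ∀ p : ℕ, p.Prime → ¬ p ^ 3 ∣ d
  θ_pow : θ ^ 3 = (d : 𝓞 K)
  r_pos : 0 < r
  r_pow : r ^ 3 = d
  hω : ω ^ 2 + ω + 1 = 0
  τ₁_θ : τ₁ θ = r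
  τ₂_θ : τ₂ θ = ω * r
  τ₃_θ : τ₃ θ = ω ^ 2 * r
  finrank : Module.finrank ℚ K = 3
  exists_repr : ∀ x : K, ∃ a b c : ℚ, x = a + b * θ + c * θ ^ 2
  indep : ∀ a b c : ℚ, (a + b * θ + c * θ ^ 2 : K) = 0 → a = 0 ∧ b = 0 ∧ c = 0

lemma not_cube_of_cubefree (d : ℕ) (hd : 2 ≤ d) (hcf : ∀ p : ℕ, p.Prime → ¬ p ^ 3 ∣ d) (b : ℚ) :
    b ^ 3 ≠ d := by
  intro h
  have h_int : b.den = 1 := by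
    have h1 : (b ^ 3).den = 1 := by rw [h]; exact Rat.den_natCast d
    rw [Rat.den_pow] at h1
    exact (Nat.pow_eq_one.mp h1).resolve_right (by norm_num)
  have hb : b = b.num := ((Rat.den_eq_one_iff b).mp h_int).symm
  rw [hb] at h
  have h2 : b.num ^ 3 = (d : ℤ) := by exact_mod_cast h
  have h3 : b.num.natAbs ^ 3 = d := by
    have := congrArg Int.natAbs h2
    simpa [Int.natAbs_pow] using this
  have h4 : b.num.natAbs ≠ 1 := by
    intro h5; rw [h5] at h3; omega
  obtain ⟨p, hp, hpb⟩ := Nat.exists_prime_and_dvd h4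
  refine hcf p hp ?_
  rw [← h3]
  exact pow_dvd_pow_of_dvd hpb 3

open Polynomial NumberField in
lemma exists_cubicData (d : ℕ) (hd : 2 ≤ d) (hcf : ∀ p : ℕ, p.Prime → ¬ p ^ 3 ∣ d) :
    ∃ (K : Type) (_ : Field K) (_ : NumberField K) (D : CubicData K), D.d = d := by
  have hirr : Irreducible (X ^ 3 - C (d : ℚ)) :=
    X_pow_sub_C_irreducible_of_prime Nat.prime_three (not_cube_of_cubefree d hd hcf)
  have : Fact (Irreducible (X ^ 3 - C (d : ℚ))) := ⟨hirr⟩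
  have hne : (X ^ 3 - C (d : ℚ)) ≠ 0 := hirr.ne_zero
  have hdeg : (X ^ 3 - C (d : ℚ)).natDegree = 3 := natDegree_X_pow_sub_C
  let K := AdjoinRoot (X ^ 3 - C (d : ℚ))
  let pb := AdjoinRoot.powerBasis hne
  have : FiniteDimensional ℚ K := pb.finite
  have : NumberField K := { }
  have hroot : (AdjoinRoot.root (X ^ 3 - C (d : ℚ)) : K) ^ 3 = d := by
    have := AdjoinRoot.eval₂_root (X ^ 3 - C (d : ℚ))
    rw [eval₂_sub, eval₂_X_pow, eval₂_C, sub_eq_zero] at this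
    rw [this]
    exact map_natCast (AdjoinRoot.of (X ^ 3 - C (d : ℚ))) d
  have h_int : IsIntegral ℤ (AdjoinRoot.root (X ^ 3 - C (d : ℚ)) : K) := by
    refine IsIntegral.of_pow (n := 3) (by norm_num) ?_
    rw [hroot]
    exact isIntegral_algebraMap (R := ℤ) (x := (d : ℤ)) |> fun h => by simpa using h
  let θ : 𝓞 K := ⟨_, h_int⟩
  have hθ : ((θ : 𝓞 K) : K) = AdjoinRoot.root (X ^ 3 - C (d : ℚ)) := rfl
  obtain ⟨r, hr0, hr3⟩ : ∃ r : ℝ, 0 < r ∧ r ^ 3 = d := by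
    have hd0 : (0 : ℝ) < d := by exact_mod_cast (by omega : 0 < d)
    refine ⟨(d : ℝ) ^ ((1 : ℝ) / 3), by positivity, ?_⟩
    rw [← Real.rpow_natCast, ← Real.rpow_mul hd0.le]
    norm_num
  obtain ⟨ω, hω⟩ : ∃ ω : ℂ, ω ^ 2 + ω + 1 = 0 := by
    have := IsAlgClosed.exists_root (X ^ 2 + X + 1 : ℂ[X]) (by
      have : (X ^ 2 + X + 1 : ℂ[X]).degree = 2 := by compute_degree!
      rw [this]; norm_num)
    obtain ⟨ω, h⟩ := this
    exact ⟨ω, by simpa [IsRoot] using h⟩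
  have hω3 : ω ^ 3 = 1 := by linear_combination (ω - 1) * hω
  have hrc : (r : ℂ) ^ 3 = d := by exact_mod_cast hr3
  have lift : ∀ z : ℂ, z ^ 3 = d → ∃ τ : K →+* ℂ, τ (AdjoinRoot.root (X ^ 3 - C (d : ℚ))) = z := by
    intro z hz
    have h0 : (X ^ 3 - C (d : ℚ)).eval₂ (algebraMap ℚ ℂ) z = 0 := by
      rw [eval₂_sub, eval₂_X_pow, eval₂_C, map_natCast, hz, sub_self]
    exact ⟨AdjoinRoot.lift (algebraMap ℚ ℂ) z h0, AdjoinRoot.lift_root h0⟩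
  obtain ⟨τ₁, h1⟩ := lift r hrc
  obtain ⟨τ₂, h2⟩ := lift (ω * r) (by rw [mul_pow, hω3, hrc, one_mul])
  obtain ⟨τ₃, h3⟩ := lift (ω ^ 2 * r) (by rw [mul_pow, ← pow_mul, mul_comm 2 3, pow_mul, hω3, hrc]; ring)
  have hdim : pb.dim = 3 := by rw [AdjoinRoot.powerBasis_dim, hdeg]
  have hgen : pb.gen = AdjoinRoot.root (X ^ 3 - C (d : ℚ)) := AdjoinRoot.powerBasis_gen hne
  let b : Module.Basis (Fin 3) ℚ K := pb.basis.reindex (finCongr hdim)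
  have hb : ∀ i, b i = AdjoinRoot.root (X ^ 3 - C (d : ℚ)) ^ (i : ℕ) := by
    intro i
    rw [Module.Basis.reindex_apply, PowerBasis.basis_eq_pow, hgen]
    rfl
  refine ⟨K, inferInstance, inferInstance,
    { d := d, θ := θ, r := r, ω := ω, τ₁ := τ₁, τ₂ := τ₂, τ₃ := τ₃, two_le := hd, cubefree := hcf
      θ_pow := ?_, r_pos := hr0, r_pow := hr3, hω := hω, τ₁_θ := h1, τ₂_θ := h2, τ₃_θ := h3
      finrank := ?_, exists_repr := ?_, indep := ?_ }, rfl⟩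
  · apply RingOfIntegers.ext
    push_cast
    exact hroot
  · rw [PowerBasis.finrank pb, hdim]
  · intro x
    refine ⟨b.repr x 0, b.repr x 1, b.repr x 2, ?_⟩
    have := b.sum_repr x
    rw [Fin.sum_univ_three, hb, hb, hb] at this
    rw [hθ]
    conv_lhs => rw [← this]
    simp [Algebra.smul_def]
  · intro x y z h
    have hli := b.linearIndependent
    rw [Fintype.linearIndependent_iff] at hli
    have h4 := hli ![x, y, z] (by
      rw [Fin.sum_univ_three, hb, hb, hb, ← h, hθ]
      simp [Algebra.smul_def])
    exact ⟨h4 0, h4 1, h4 2⟩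

/-! ### Embeddings and norms -/

open NumberField

namespace CubicData

variable {K : Type} [Field K] [NumberField K] (D : CubicData K)

lemma omega_pow : D.ω ^ 3 = 1 := by linear_combination (D.ω - 1) * D.hω

lemma norm_omega : ‖D.ω‖ = 1 := by
  have h := congrArg norm D.omega_pow
  rw [norm_pow, norm_one] at h
  exact (pow_eq_one_iff_of_nonneg (norm_nonneg _) (by norm_num)).mp h

lemma conj_omega : (starRingEnd ℂ) D.ω = D.ω ^ 2 := by
  have h1 : D.ω * (starRingEnd ℂ) D.ω = 1 := by
    rw [Complex.mul_conj, Complex.normSq_eq_norm_sq, D.norm_omega]; simp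
  have h2 := D.omega_pow
  have h3 : D.ω ≠ 0 := by intro h; rw [h] at h1; simp at h1
  apply mul_left_cancel₀ h3
  rw [h1, ← h2]; ring

lemma omega_ne_one : D.ω ≠ 1 := by
  intro h
  have := D.hω
  rw [h] at this
  norm_num at this

lemma one_le_r : 1 ≤ D.r := by
  by_contra h
  push Not at h
  have h1 : D.r ^ 3 < 1 := pow_lt_one₀ D.r_pos.le h (by norm_num)
  rw [D.r_pow] at h1
  have h2 : (2 : ℝ) ≤ D.d := by exact_mod_cast D.two_le
  linarith

lemma map_repr (φ : K →+* ℂ) (a b c : ℚ) :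
    φ (a + b * D.θ + c * D.θ ^ 2 : K) = a + b * φ D.θ + c * φ D.θ ^ 2 := by
  simp

lemma conj_τ₁ (x : K) : (starRingEnd ℂ) (D.τ₁ x) = D.τ₁ x := by
  obtain ⟨a, b, c, rfl⟩ := D.exists_repr x
  rw [D.map_repr, D.τ₁_θ]
  simp

lemma conj_τ₂ (x : K) : (starRingEnd ℂ) (D.τ₂ x) = D.τ₃ x := by
  obtain ⟨a, b, c, rfl⟩ := D.exists_repr x
  rw [D.map_repr, D.map_repr, D.τ₂_θ, D.τ₃_θ]
  simp [D.conj_omega]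

lemma norm_τ₃ (x : K) : ‖D.τ₃ x‖ = ‖D.τ₂ x‖ := by
  rw [← D.conj_τ₂, RCLike.norm_conj]

lemma eq_of_map_θ {φ ψ : K →+* ℂ} (h : φ D.θ = ψ D.θ) : φ = ψ := by
  ext x
  obtain ⟨a, b, c, rfl⟩ := D.exists_repr x
  rw [D.map_repr, D.map_repr, h]

lemma θ_pow' : (D.θ : K) ^ 3 = D.d := by
  have := congrArg (fun x : 𝓞 K => (x : K)) D.θ_pow
  simpa using this

lemma emb_cases (φ : K →+* ℂ) : φ = D.τ₁ ∨ φ = D.τ₂ ∨ φ = D.τ₃ := by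
  have h1 : (φ D.θ) ^ 3 = (D.r : ℂ) ^ 3 := by
    rw [← map_pow, D.θ_pow', map_natCast]
    exact_mod_cast D.r_pow.symm
  have h2 : (φ D.θ - D.r) * ((φ D.θ - D.ω * D.r) * (φ D.θ - D.ω ^ 2 * D.r)) = 0 := by
    linear_combination h1 + (-(φ D.θ) ^ 2 * D.r + φ D.θ * D.r ^ 2 * D.ω) * D.hω - (D.r : ℂ) ^ 3 * (D.omega_pow)
  rcases mul_eq_zero.mp h2 with h | h
  · exact Or.inl (D.eq_of_map_θ (by rw [D.τ₁_θ]; exact sub_eq_zero.mp h))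
  rcases mul_eq_zero.mp h with h | h
  · exact Or.inr (Or.inl (D.eq_of_map_θ (by rw [D.τ₂_θ]; exact sub_eq_zero.mp h)))
  · exact Or.inr (Or.inr (D.eq_of_map_θ (by rw [D.τ₃_θ]; exact sub_eq_zero.mp h)))

lemma norm_eq (x : K) : ((Algebra.norm ℚ x : ℚ) : ℂ) = D.τ₁ x * D.τ₂ x * D.τ₃ x := by
  classical
  have hr : (D.r : ℂ) ≠ 0 := by exact_mod_cast D.r_pos.ne'
  have h0 : D.ω ≠ 0 := by
    intro h; have := D.norm_omega; rw [h] at this; simp at this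
  have h12 : D.τ₁.toRatAlgHom ≠ D.τ₂.toRatAlgHom := by
    intro h
    have h1 := DFunLike.congr_fun h (D.θ : K)
    change D.τ₁ D.θ = D.τ₂ D.θ at h1
    rw [D.τ₁_θ, D.τ₂_θ] at h1
    apply D.omega_ne_one
    field_simp at h1
    exact h1.symm
  have h13 : D.τ₁.toRatAlgHom ≠ D.τ₃.toRatAlgHom := by
    intro h
    have h1 := DFunLike.congr_fun h (D.θ : K)
    change D.τ₁ D.θ = D.τ₃ D.θ at h1
    rw [D.τ₁_θ, D.τ₃_θ] at h1
    apply D.omega_ne_one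
    field_simp at h1
    linear_combination D.omega_pow + D.ω * h1
  have h23 : D.τ₂.toRatAlgHom ≠ D.τ₃.toRatAlgHom := by
    intro h
    have h1 := DFunLike.congr_fun h (D.θ : K)
    change D.τ₂ D.θ = D.τ₃ D.θ at h1
    rw [D.τ₂_θ, D.τ₃_θ] at h1
    apply D.omega_ne_one
    field_simp at h1
    exact h1.symm
  have huniv : (Finset.univ : Finset (K →ₐ[ℚ] ℂ)) =
      {D.τ₁.toRatAlgHom, D.τ₂.toRatAlgHom, D.τ₃.toRatAlgHom} := by
    ext φ
    simp only [Finset.mem_univ, Finset.mem_insert, Finset.mem_singleton, true_iff]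
    rcases D.emb_cases φ.toRingHom with h | h | h
    · left; ext x; exact DFunLike.congr_fun h x
    · right; left; ext x; exact DFunLike.congr_fun h x
    · right; right; ext x; exact DFunLike.congr_fun h x
  have := Algebra.norm_eq_prod_embeddings ℚ ℂ x
  rw [eq_ratCast] at this
  rw [this, huniv, Finset.prod_insert, Finset.prod_insert, Finset.prod_singleton, mul_assoc]
  · rfl
  · simpa using h23
  · simpa using ⟨h12, h13⟩

lemma abs_norm_eq (x : 𝓞 K) : |((Algebra.norm ℤ x : ℤ) : ℝ)| = ‖D.τ₁ x‖ * ‖D.τ₂ x‖ ^ 2 := by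
  have h := congrArg norm (D.norm_eq (x : K))
  rw [norm_mul, norm_mul, D.norm_τ₃, ← Algebra.coe_norm_int, Rat.cast_intCast, Complex.norm_intCast] at h
  rw [h]; ring

lemma one_le_norm (x : 𝓞 K) (hx : x ≠ 0) : 1 ≤ ‖D.τ₁ x‖ * ‖D.τ₂ x‖ ^ 2 := by
  rw [← D.abs_norm_eq]
  have : Algebra.norm ℤ x ≠ 0 := Algebra.norm_ne_zero_iff.mpr hx
  exact_mod_cast Int.one_le_abs this

lemma norm_unit (u : (𝓞 K)ˣ) : ‖D.τ₁ (u : 𝓞 K)‖ * ‖D.τ₂ (u : 𝓞 K)‖ ^ 2 = 1 := by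
  rw [← D.abs_norm_eq]
  have : IsUnit (Algebra.norm ℤ (u : 𝓞 K)) := u.isUnit.map _
  rcases Int.isUnit_iff.mp this with h | h <;> rw [h] <;> simp

/-- Elements fixed by complex conjugation at the complex place are rational. -/
lemma rat_of_τ₂_eq_τ₃ (x : K) (h : D.τ₂ x = D.τ₃ x) : ∃ a : ℚ, x = a := by
  obtain ⟨a, b, c, rfl⟩ := D.exists_repr x
  rw [D.map_repr, D.map_repr, D.τ₂_θ, D.τ₃_θ] at h
  have hr : (D.r : ℂ) ≠ 0 := by exact_mod_cast D.r_pos.ne'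
  have h0 : D.ω ≠ 0 := by
    intro h; have := D.norm_omega; rw [h] at this; simp at this
  have h1 : D.ω * (1 - D.ω) * D.r * ((b : ℂ) - c * D.r) = 0 := by
    linear_combination h + c * D.ω * D.r ^ 2 * D.omega_pow
  have h2 : (b : ℂ) - c * D.r = 0 := by
    refine (mul_eq_zero.mp h1).resolve_left ?_
    refine mul_ne_zero (mul_ne_zero h0 ?_) hr
    exact sub_ne_zero.mpr (Ne.symm D.omega_ne_one)
  have h3 : D.τ₁ ((b : ℚ) + (-c : ℚ) * D.θ + (0 : ℚ) * D.θ ^ 2 : K) = 0 := by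
    rw [D.map_repr, D.τ₁_θ]; push_cast; linear_combination h2
  have h4 := D.indep _ _ _ ((map_eq_zero D.τ₁).mp h3)
  have hb : b = 0 := h4.1
  have hc : c = 0 := neg_eq_zero.mp h4.2.1
  exact ⟨a, by rw [hb, hc]; simp⟩

end CubicData

/-! ### From a unit to the Thue equation -/

namespace CubicData
variable {K : Type} [Field K] [NumberField K] (D : CubicData K)

lemma norm_emb_le (x : K) (B : ℝ) (h1 : ‖D.τ₁ x‖ ≤ B) (h2 : ‖D.τ₂ x‖ ≤ B) (φ : K →+* ℂ) :
    ‖φ x‖ ≤ B := by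
  rcases D.emb_cases φ with rfl | rfl | rfl
  · exact h1
  · exact h2
  · rw [D.norm_τ₃]; exact h2

/-- The compositum of the two complex conjugate images of `K`, as a number field of bounded degree. -/
lemma exists_closure : ∃ (L : IntermediateField ℚ ℂ) (_ : NumberField L),
    Module.finrank ℚ L ≤ 27 ∧ ∃ i₂ i₃ : K →+* L, (∀ x, ((i₂ x : L) : ℂ) = D.τ₂ x) ∧
      (∀ x, ((i₃ x : L) : ℂ) = D.τ₃ x) := by
  let F₂ := D.τ₂.toRatAlgHom.fieldRange
  let F₃ := D.τ₃.toRatAlgHom.fieldRange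
  have e₂ : Module.finrank ℚ F₂ = 3 := by
    rw [← D.finrank]
    exact (LinearEquiv.finrank_eq (AlgEquiv.ofInjectiveField D.τ₂.toRatAlgHom).toLinearEquiv).symm
  have e₃ : Module.finrank ℚ F₃ = 3 := by
    rw [← D.finrank]
    exact (LinearEquiv.finrank_eq (AlgEquiv.ofInjectiveField D.τ₃.toRatAlgHom).toLinearEquiv).symm
  have : FiniteDimensional ℚ F₂ := Module.finite_of_finrank_pos (by omega)
  have : FiniteDimensional ℚ F₃ := Module.finite_of_finrank_pos (by omega)
  have : NumberField (F₂ ⊔ F₃ : IntermediateField ℚ ℂ) := { }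
  refine ⟨F₂ ⊔ F₃, this, ?_, ?_⟩
  · have := IntermediateField.finrank_sup_le F₂ F₃
    rw [e₂, e₃] at this
    omega
  · refine ⟨(D.τ₂.codRestrict (F₂ ⊔ F₃ : IntermediateField ℚ ℂ) ?_),
      (D.τ₃.codRestrict (F₂ ⊔ F₃ : IntermediateField ℚ ℂ) ?_), ?_, ?_⟩
    · intro x; exact (le_sup_left : F₂ ≤ F₂ ⊔ F₃) ⟨x, rfl⟩
    · intro x; exact (le_sup_right : F₃ ≤ F₂ ⊔ F₃) ⟨x, rfl⟩
    · intro x; rfl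
    · intro x; rfl

lemma tau_ne_zero (φ : K →+* ℂ) (u : (𝓞 K)ˣ) : φ (u : 𝓞 K) ≠ 0 := by
  rw [Ne, map_eq_zero]
  simp

lemma tau_inv (φ : K →+* ℂ) (u : (𝓞 K)ˣ) : φ ((u⁻¹ : (𝓞 K)ˣ) : 𝓞 K) = (φ (u : 𝓞 K))⁻¹ := by
  rw [← map_inv₀]
  simp

/-- The ratio of the complex conjugates of `u` is not a root of unity: otherwise a power of `u` would
be rational, hence of absolute value `1`. -/
lemma pow_τ₂_ne (u : (𝓞 K)ˣ) (R : ℝ) (hR : 0 < R) (hu : ‖D.τ₂ (u : 𝓞 K)‖ = Real.exp R)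
    (k : ℕ) (hk : 0 < k) : (D.τ₂ (u : 𝓞 K) / D.τ₃ (u : 𝓞 K)) ^ k ≠ 1 := by
  intro h
  have h3 : D.τ₃ (u : 𝓞 K) ≠ 0 := tau_ne_zero _ u
  rw [div_pow, div_eq_one_iff_eq (pow_ne_zero _ h3)] at h
  rw [← map_pow D.τ₂, ← map_pow D.τ₃] at h
  obtain ⟨x, hx⟩ := D.rat_of_τ₂_eq_τ₃ _ h
  have h1 := D.norm_unit (u ^ k)
  have e : (((u ^ k : (𝓞 K)ˣ) : 𝓞 K) : K) = ((u : 𝓞 K) : K) ^ k := by simp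
  rw [e, hx] at h1
  have e2 : ‖D.τ₂ (((u : 𝓞 K) : K) ^ k)‖ = Real.exp R ^ k := by
    rw [map_pow, norm_pow, hu]
  rw [hx] at e2
  simp only [map_ratCast] at h1 e2
  rw [e2, ← pow_succ'] at h1
  have : 1 < Real.exp R ^ k := one_lt_pow₀ (by simpa using hR) hk.ne'
  have := one_lt_pow₀ this (n := 2 + 1) (by norm_num)
  linarith

/-- `transcend` applied to `a = (τ₂ u / τ₃ u) ^ (6 q₀)`, `p = τ₃ μ ^ 6` and `q = τ₂ μ ^ 6`; here `R₁ = 18 q₀ R`,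
because the conjugates of `u` and `u⁻¹` have absolute value at most `e^R` and `e^{2R}`. -/
lemma transcend_unit (u : (𝓞 K)ˣ) (R : ℝ) (hR : 1 ≤ R) (hu : ‖D.τ₂ (u : 𝓞 K)‖ = Real.exp R)
    (μ : 𝓞 K) (hμ : μ ≠ 0) (q₀ : ℕ) (hq₀ : 0 < q₀)
    (hα : ‖(D.τ₂ (u : 𝓞 K) / D.τ₃ (u : 𝓞 K)) ^ (6 * q₀) - 1‖ ≤ 1 / 10 ^ 19)
    (S : ℝ) (hS : 1 ≤ S) (hμ1 : ‖D.τ₁ μ‖ ≤ Real.exp S) (hμ2 : ‖D.τ₂ μ‖ ≤ Real.exp S) (m : ℕ)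
    (hclose : ‖D.τ₃ μ ^ 6 / D.τ₂ μ ^ 6 -
      ((D.τ₂ (u : 𝓞 K) / D.τ₃ (u : 𝓞 K)) ^ (6 * q₀)) ^ m‖ ≤ Real.exp (-(m * (18 * q₀ * R) / 9))) :
    (m : ℝ) ≤ 10 ^ 20 * (6 * S) := by
  obtain ⟨L, hL, hfin, i₂, i₃, h₂, h₃⟩ := D.exists_closure
  let j₂ : 𝓞 K →+* 𝓞 L := RingOfIntegers.mapRingHom i₂
  let j₃ : 𝓞 K →+* 𝓞 L := RingOfIntegers.mapRingHom i₃
  have hj₂ : ∀ x : 𝓞 K, ((j₂ x : 𝓞 L) : L) = i₂ x := fun x => rfl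
  have hj₃ : ∀ x : 𝓞 K, ((j₃ x : 𝓞 L) : L) = i₃ x := fun x => rfl
  have hpow : ∀ (x : 𝓞 L) (n : ℕ), ((x ^ n : 𝓞 L) : L) = (x : L) ^ n := fun x n => rfl
  have hmul : ∀ (x y : 𝓞 L), ((x * y : 𝓞 L) : L) = (x : L) * (y : L) := fun x y => rfl
  have hp0 : ∀ φ : L →+* ℂ, ∀ j : K →+* L, ‖φ (j μ)‖ ≤ Real.exp S := fun φ j =>
    D.norm_emb_le μ _ hμ1 hμ2 (φ.comp j)
  have hu1 : ‖D.τ₁ (u : 𝓞 K)‖ = Real.exp (-(2 * R)) := by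
    have := D.norm_unit u
    rw [hu, ← Real.exp_nat_mul] at this
    rw [Real.exp_neg]
    push_cast at this
    exact eq_inv_of_mul_eq_one_left this
  have hu0 : ∀ φ : L →+* ℂ, ∀ j : K →+* L, ‖φ (j u)‖ ≤ Real.exp R := fun φ j =>
    D.norm_emb_le _ _ (by rw [hu1]; gcongr; linarith) (by rw [hu]) (φ.comp j)
  have hv0 : ∀ φ : L →+* ℂ, ∀ j : K →+* L, ‖φ (j ((u⁻¹ : (𝓞 K)ˣ) : 𝓞 K))‖ ≤ Real.exp (2 * R) :=
    fun φ j => D.norm_emb_le _ _ (by rw [tau_inv, norm_inv, hu1, ← Real.exp_neg, neg_neg])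
      (by rw [tau_inv, norm_inv, hu, ← Real.exp_neg]; gcongr; linarith) (φ.comp j)
  have ha : (algebraMap L ℂ) (((j₂ u * j₃ ((u⁻¹ : (𝓞 K)ˣ) : 𝓞 K)) ^ (6 * q₀) : 𝓞 L) : L) =
      (D.τ₂ (u : 𝓞 K) / D.τ₃ (u : 𝓞 K)) ^ (6 * q₀) := by
    rw [hpow, hmul, hj₂, hj₃, map_pow, map_mul, div_eq_mul_inv, ← tau_inv, ← h₂, ← h₃]
    rfl
  have hnorm : ‖D.τ₂ (u : 𝓞 K) / D.τ₃ (u : 𝓞 K)‖ = 1 := by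
    rw [norm_div, D.norm_τ₃, div_self]
    exact norm_ne_zero_iff.mpr (tau_ne_zero _ u)
  have hq₀R : (1 : ℝ) ≤ q₀ := by exact_mod_cast hq₀
  have hpe : (algebraMap L ℂ) ((j₃ μ ^ 6 : 𝓞 L) : L) = D.τ₃ μ ^ 6 := by
    rw [hpow, hj₃, map_pow, ← h₃]; rfl
  have hqe : (algebraMap L ℂ) ((j₂ μ ^ 6 : 𝓞 L) : L) = D.τ₂ μ ^ 6 := by
    rw [hpow, hj₂, map_pow, ← h₂]; rfl
  refine transcend (algebraMap L ℂ) ((j₂ u * j₃ ((u⁻¹ : (𝓞 K)ˣ) : 𝓞 K)) ^ (6 * q₀)) (j₃ μ ^ 6)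
    (j₂ μ ^ 6) (18 * q₀ * R) (6 * S) (by nlinarith) (by linarith) ?_ ?_ ?_ hfin ?_ ?_ ?_ ?_ ?_ m ?_
  · intro φ
    rw [hpow, hmul, hj₂, hj₃, map_pow, map_mul, norm_pow, norm_mul]
    calc (‖φ (i₂ u)‖ * ‖φ (i₃ ((u⁻¹ : (𝓞 K)ˣ) : 𝓞 K))‖) ^ (6 * q₀)
        ≤ (Real.exp R * Real.exp (2 * R)) ^ (6 * q₀) := by
          gcongr
          · exact hu0 φ i₂
          · exact hv0 φ i₃
      _ = Real.exp (18 * q₀ * R) := by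
          rw [← Real.exp_add, ← Real.exp_nat_mul]; congr 1; push_cast; ring
  · intro φ
    rw [hpow, hj₃, map_pow, norm_pow, show (6 : ℝ) * S = ((6 : ℕ) : ℝ) * S by norm_num,
      Real.exp_nat_mul]
    gcongr; exact hp0 φ i₃
  · intro φ
    rw [hpow, hj₂, map_pow, norm_pow, show (6 : ℝ) * S = ((6 : ℕ) : ℝ) * S by norm_num,
      Real.exp_nat_mul]
    gcongr; exact hp0 φ i₂
  · rw [ha, norm_pow, hnorm, one_pow]
  · rw [ha]; exact hα
  · intro k hk h
    have h' := congrArg (fun x : 𝓞 L => (algebraMap L ℂ) (x : L)) h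
    beta_reduce at h'
    rw [hpow, map_pow, ha, show ((1 : 𝓞 L) : L) = 1 from rfl, map_one, ← pow_mul] at h'
    exact D.pow_τ₂_ne u R (by linarith) hu _ (by positivity) h'
  · rw [hpe, hqe, norm_pow, norm_pow, D.norm_τ₃]
  · rw [hqe]
    refine pow_ne_zero _ ?_
    rw [Ne, map_eq_zero]; exact RingOfIntegers.coe_ne_zero_iff.mpr hμ
  · rw [hpe, hqe, ha]
    exact hclose
end CubicData

/-! ### The Thue bound in terms of a unit -/

/-- Dirichlet approximation of the argument of `z`. -/
lemma exists_pow_near_one (z : ℂ) (hz : ‖z‖ = 1) :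
    ∃ q : ℕ, 0 < q ∧ q ≤ 10 ^ 20 ∧ ‖z ^ q - 1‖ ≤ 1 / 10 ^ 19 := by
  obtain ⟨k, hk0, hk1, hk⟩ := Real.exists_nat_abs_mul_sub_round_le (z.arg / (2 * Real.pi))
    (n := 10 ^ 20) (by norm_num)
  refine ⟨k, hk0, hk1, ?_⟩
  set N := round ((k : ℝ) * (z.arg / (2 * Real.pi))) with hN
  have hpi := Real.pi_pos
  have hz1 : z = Complex.exp (z.arg * Complex.I) := by
    have := Complex.norm_mul_exp_arg_mul_I z
    rw [hz, Complex.ofReal_one, one_mul] at this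
    exact this.symm
  have h2 : z ^ k = Complex.exp (Complex.I * ((k * z.arg - N * (2 * Real.pi) : ℝ) : ℂ)) := by
    conv_lhs => rw [hz1]
    rw [← Complex.exp_nat_mul, Complex.exp_eq_exp_iff_exists_int]
    exact ⟨N, by push_cast; ring⟩
  rw [h2]
  refine (Real.norm_exp_I_mul_ofReal_sub_one_le).trans ?_
  have h3 : (k * z.arg - N * (2 * Real.pi) : ℝ) = 2 * Real.pi * (k * (z.arg / (2 * Real.pi)) - N) := by
    field_simp
  rw [h3, Real.norm_eq_abs, abs_mul, abs_of_pos (by positivity : 0 < 2 * Real.pi)]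
  have h4 : 2 * Real.pi * |k * (z.arg / (2 * Real.pi)) - N| ≤ 2 * 3.15 * (1 / ((10 ^ 20 : ℕ) + 1)) := by
    have := Real.pi_lt_d2
    gcongr
  refine h4.trans ?_
  norm_num

namespace CubicData
variable {K : Type} [Field K] [NumberField K] (D : CubicData K)

set_option maxHeartbeats 4000000 in
/-- The Thue equation in terms of a unit `u`. With `ξ = X - θ Y = μ u ^ (q m')`, the relation
`τ₁ ξ + ω τ₂ ξ + ω² τ₃ ξ = 0` shows that `-ω τ₃ ξ / τ₂ ξ` differs from `1` by `|τ₁ ξ / τ₂ ξ|`, which is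
`|n| / |τ₂ ξ| ^ 3`; the sixth power removes the factor `-ω`, and `transcend_unit` bounds `m'`. -/
lemma log_le_of_unit (u : (𝓞 K)ˣ) (R : ℝ) (hR : 1 ≤ R) (hu : ‖D.τ₂ (u : 𝓞 K)‖ = Real.exp R)
    (X Y : ℕ) (hY : 0 < Y) (n : ℤ) (hn : n = (X : ℤ) ^ 3 - D.d * (Y : ℤ) ^ 3) (hn0 : n ≠ 0) :
    Real.log Y ≤ 10 ^ 62 * (R * (R + Real.log |(n : ℝ)|)) := by
  set ξ : 𝓞 K := (X : 𝓞 K) - D.θ * Y with hξ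
  set T := ‖D.τ₂ ξ‖ with hT
  have hr := D.r_pos
  have hr1 := D.one_le_r
  have e1 : D.τ₁ ξ = X - D.r * Y := by rw [← D.τ₁_θ]; simp [hξ]
  have e2 : D.τ₂ ξ = X - D.ω * D.r * Y := by rw [← D.τ₂_θ]; simp [hξ]
  have e3 : D.τ₃ ξ = X - D.ω ^ 2 * D.r * Y := by rw [← D.τ₃_θ]; simp [hξ]
  have hY1 : (1 : ℝ) ≤ Y := by exact_mod_cast hY
  have e23 : D.τ₂ ξ * D.τ₃ ξ = ((X ^ 2 + X * D.r * Y + D.r ^ 2 * Y ^ 2 : ℝ) : ℂ) := by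
    rw [e2, e3]; push_cast
    linear_combination (-(X : ℂ) * D.r * Y) * D.hω + (D.r : ℂ) ^ 2 * Y ^ 2 * D.omega_pow
  have hT2 : T ^ 2 = X ^ 2 + X * D.r * Y + D.r ^ 2 * Y ^ 2 := by
    have := congrArg norm e23
    rw [norm_mul, D.norm_τ₃, Complex.norm_real, Real.norm_of_nonneg (by positivity)] at this
    rw [← this]; ring
  have hTY : (Y : ℝ) ≤ T := by
    refine abs_le_of_sq_le_sq' ?_ (norm_nonneg _) |>.2
    rw [hT2]
    have : (Y : ℝ) ^ 2 ≤ D.r ^ 2 * Y ^ 2 := le_mul_of_one_le_left (by positivity) (one_le_pow₀ hr1)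
    have : 0 ≤ (X : ℝ) ^ 2 + X * D.r * Y := by positivity
    linarith
  have hT1 : 1 ≤ T := hY1.trans hTY
  have hT0 : 0 < T := by linarith
  have hnorm : ‖D.τ₁ ξ‖ * T ^ 2 = |(n : ℝ)| := by
    have h : D.τ₁ ξ * (D.τ₂ ξ * D.τ₃ ξ) = ((n : ℝ) : ℂ) := by
      rw [e23, e1, hn]; push_cast
      have : (D.r : ℂ) ^ 3 = D.d := by exact_mod_cast D.r_pow
      linear_combination -(Y : ℂ) ^ 3 * this
    have h := congrArg norm h
    rw [norm_mul, norm_mul, D.norm_τ₃, Complex.norm_real, Real.norm_eq_abs] at h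
    rw [← h]; ring
  have hn1 : (1 : ℝ) ≤ |(n : ℝ)| := by exact_mod_cast Int.one_le_abs hn0
  have hξ0 : ξ ≠ 0 := by
    intro h; rw [hT, h] at hT0; simp at hT0
  set lo := Real.log |(n : ℝ)| with hlo
  have hlo0 : 0 ≤ lo := Real.log_nonneg hn1
  have hlogT : 0 ≤ Real.log T := Real.log_nonneg hT1
  set m := ⌊Real.log T / R⌋₊ with hm
  have hR0 : 0 < R := by linarith
  have hm1 : m * R ≤ Real.log T := by
    have := Nat.floor_le (div_nonneg hlogT hR0.le)
    rwa [le_div_iff₀ hR0] at this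
  have hm2 : Real.log T < (m + 1) * R := by
    have := Nat.lt_floor_add_one (Real.log T / R)
    rwa [div_lt_iff₀ hR0] at this
  have hTm : Real.exp (m * R) ≤ T := (Real.le_log_iff_exp_le hT0).mp hm1
  have hlogY : Real.log Y ≤ (m + 1) * R :=
    (Real.log_le_log (by linarith) hTY).trans hm2.le
  rcases lt_or_ge (Real.exp (m * R)) (6 * |(n : ℝ)|) with hcase | hcase
  · have h1 : m * R < Real.log (6 * |(n : ℝ)|) := (Real.lt_log_iff_exp_lt (by positivity)).mpr hcase
    rw [Real.log_mul (by norm_num) (by positivity)] at h1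
    have h2 : Real.log 6 ≤ 2.8 := (Real.log_le_log (by norm_num) (by norm_num)).trans log_ten_le
    have h3 : R + lo ≤ R * (R + lo) := le_mul_of_one_le_left (by linarith) hR
    nlinarith
  · have hα1 : ‖(D.τ₂ (u : 𝓞 K) / D.τ₃ (u : 𝓞 K)) ^ 6‖ = 1 := by
      rw [norm_pow, norm_div, D.norm_τ₃, div_self, one_pow]
      exact norm_ne_zero_iff.mpr (tau_ne_zero _ u)
    obtain ⟨q, hq0, hqQ, hq⟩ := exists_pow_near_one _ hα1
    rw [← pow_mul] at hq
    set m' := m / q with hm'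
    have hdm : q * m' ≤ m := Nat.mul_div_le m q
    have hdm2 : m < q * (m' + 1) := by
      have := Nat.lt_mul_div_succ m hq0
      simpa using this
    set v : (𝓞 K)ˣ := (u⁻¹) ^ (q * m') with hv
    set μ : 𝓞 K := ξ * v with hμ
    have hvφ : ∀ φ : K →+* ℂ, φ μ = φ ξ * ((φ (u : 𝓞 K)) ^ (q * m'))⁻¹ := by
      intro φ
      have : (μ : K) = ξ * (((u⁻¹ : (𝓞 K)ˣ) : 𝓞 K) : K) ^ (q * m') := by
        rw [hμ, hv]; simp
      rw [this, map_mul, map_pow, tau_inv, inv_pow]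
    have hqR : (1 : ℝ) ≤ q := by exact_mod_cast hq0
    have hqQR : (q : ℝ) ≤ 10 ^ 20 := by exact_mod_cast hqQ
    have hdmR : (q : ℝ) * m' ≤ m := by exact_mod_cast hdm
    have hdm2R : (m : ℝ) + 1 ≤ q * (m' + 1) := by exact_mod_cast hdm2
    have hu1 : ‖D.τ₁ (u : 𝓞 K)‖ = Real.exp (-(2 * R)) := by
      have := D.norm_unit u
      rw [hu, ← Real.exp_nat_mul] at this
      rw [Real.exp_neg]
      push_cast at this
      exact eq_inv_of_mul_eq_one_left this
    have hexp : Real.exp lo = |(n : ℝ)| := Real.exp_log (by linarith)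
    have hS1 : (1 : ℝ) ≤ q * R + lo := by
      have := one_le_mul_of_one_le_of_one_le hqR hR
      linarith
    have hm'0 : (0 : ℝ) ≤ m' := by positivity
    have hb1 : ‖D.τ₁ μ‖ ≤ Real.exp (q * R + lo) := by
      rw [hvφ, norm_mul, norm_inv, norm_pow, hu1, ← Real.exp_nat_mul, ← Real.exp_neg]
      have h1 : ‖D.τ₁ ξ‖ * Real.exp (2 * (m * R)) ≤ |(n : ℝ)| := by
        rw [← hnorm]
        gcongr
        rw [show (2 : ℝ) * (m * R) = (2 : ℕ) * (m * R) by norm_num, Real.exp_nat_mul]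
        gcongr
      calc ‖D.τ₁ ξ‖ * Real.exp (-(((q * m' : ℕ) : ℝ) * -(2 * R)))
          ≤ ‖D.τ₁ ξ‖ * Real.exp (2 * (m * R)) := by
            gcongr
            push_cast
            have := mul_le_mul_of_nonneg_right hdmR hR0.le
            linarith
        _ ≤ |(n : ℝ)| := h1
        _ = Real.exp lo := hexp.symm
        _ ≤ _ := by gcongr; exact le_add_of_nonneg_left (by positivity)
    have hb2 : ‖D.τ₂ μ‖ ≤ Real.exp (q * R + lo) := by
      rw [hvφ, norm_mul, norm_inv, norm_pow, hu, ← Real.exp_nat_mul, ← Real.exp_neg, ← hT]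
      rw [← Real.exp_log hT0, ← Real.exp_add]
      refine Real.exp_le_exp.mpr ?_
      push_cast
      have := mul_le_mul_of_nonneg_right hdm2R hR0.le
      linarith
    have h2ne : D.τ₂ ξ ≠ 0 := norm_pos_iff.mp hT0
    have hu2 := tau_ne_zero D.τ₂ u
    have hu3 := tau_ne_zero D.τ₃ u
    have hclose : ‖D.τ₃ μ ^ 6 / D.τ₂ μ ^ 6 -
      ((D.τ₂ (u : 𝓞 K) / D.τ₃ (u : 𝓞 K)) ^ (6 * q)) ^ m'‖ ≤ Real.exp (-(m' * (18 * q * R) / 9)) := by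
      set x := -(D.ω * D.τ₃ ξ / D.τ₂ ξ) with hx
      have hx1 : ‖x‖ = 1 := by
        rw [hx, norm_neg, norm_div, norm_mul, D.norm_omega, one_mul, D.norm_τ₃, div_self hT0.ne']
      have hx2 : ‖x - 1‖ = ‖D.τ₁ ξ‖ / T := by
        have : x - 1 = D.ω ^ 2 * D.τ₁ ξ / D.τ₂ ξ := by
          rw [hx]; field_simp
          rw [e1, e2, e3]
          linear_combination (-(X : ℂ) + D.r * Y) * D.hω + (D.r * Y : ℂ) * D.omega_pow
        rw [this, norm_div, norm_mul, norm_pow, D.norm_omega, one_pow, one_mul]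
      have hx6 : x ^ 6 = D.τ₃ ξ ^ 6 / D.τ₂ ξ ^ 6 := by
        rw [hx]
        have : (-(D.ω * D.τ₃ ξ / D.τ₂ ξ)) ^ 6 = (D.ω ^ 3) ^ 2 * (D.τ₃ ξ ^ 6 / D.τ₂ ξ ^ 6) := by ring
        rw [this, D.omega_pow]; ring
      have h6 : ‖x ^ 6 - 1‖ ≤ 6 * (‖D.τ₁ ξ‖ / T) := by
        have := norm_pow_sub_pow_le x 1 hx1 (by simp) 6
        rw [one_pow, hx2] at this
        exact_mod_cast this
      have hfac : D.τ₃ μ ^ 6 / D.τ₂ μ ^ 6 -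
          ((D.τ₂ (u : 𝓞 K) / D.τ₃ (u : 𝓞 K)) ^ (6 * q)) ^ m' =
          (x ^ 6 - 1) * ((D.τ₂ (u : 𝓞 K) / D.τ₃ (u : 𝓞 K)) ^ 6) ^ (q * m') := by
        rw [hx6, hvφ, hvφ]
        have : ((D.τ₂ (u : 𝓞 K) / D.τ₃ (u : 𝓞 K)) ^ (6 * q)) ^ m' =
          ((D.τ₂ (u : 𝓞 K) / D.τ₃ (u : 𝓞 K)) ^ 6) ^ (q * m') := by
          rw [← pow_mul, ← pow_mul]; congr 1; ring
        rw [this, mul_pow, mul_pow, sub_mul, one_mul]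
        congr 1
        rw [div_pow, div_pow, inv_pow, inv_pow, ← pow_mul, ← pow_mul, ← pow_mul, ← pow_mul,
          mul_comm (q * m') 6]
        field_simp
      rw [hfac, norm_mul, norm_pow, hα1, one_pow, mul_one]
      refine h6.trans ?_
      have h7 : 6 * (‖D.τ₁ ξ‖ / T) = 6 * |(n : ℝ)| / T ^ 3 := by
        rw [← hnorm]; field_simp
      rw [h7, div_le_iff₀ (by positivity)]
      calc 6 * |(n : ℝ)| ≤ Real.exp (m * R) := hcase
        _ = Real.exp (-(2 * (m * R))) * Real.exp ((3 : ℕ) * (m * R)) := by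
          rw [← Real.exp_add]; congr 1; push_cast; ring
        _ ≤ Real.exp (-(m' * (18 * q * R) / 9)) * T ^ 3 := by
          rw [Real.exp_nat_mul (m * R) 3]
          gcongr
          have := mul_le_mul_of_nonneg_right hdmR hR0.le
          linarith
    have key := D.transcend_unit u R hR hu μ (mul_ne_zero hξ0 v.ne_zero) q hq0 hq (q * R + lo) hS1
      hb1 hb2 m' hclose
    calc Real.log Y ≤ (m + 1) * R := hlogY
      _ ≤ (q * (m' + 1)) * R := by gcongr
      _ ≤ (10 ^ 20 * (10 ^ 20 * (6 * (10 ^ 20 * R + lo)) + 1)) * R := by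
        gcongr
        refine key.trans ?_
        gcongr
      _ ≤ 10 ^ 62 * (R * (R + lo)) := by nlinarith [mul_nonneg hR0.le hlo0]
end CubicData

/-! ### Counting ideals -/

section IdealCount
variable (K : Type) [Field K] [NumberField K]

/-- The number of ideals of `𝓞 K` of norm `n`. The set is always finite (`finite_absNorm_eq`), so that
`Set.ncard` has its intended meaning. -/
noncomputable def idealCount (n : ℕ) : ℕ := Set.ncard {I : Ideal (𝓞 K) | Ideal.absNorm I = n}

lemma finite_absNorm_eq (n : ℕ) : {I : Ideal (𝓞 K) | Ideal.absNorm I = n}.Finite :=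
  Ideal.finite_setOfPred_absNorm_eq n

variable {K}

/-- The splitting of an ideal along a coprime factorization of an integer it contains. -/
lemma sup_span_mul_sup_span (I : Ideal (𝓞 K)) (m n : ℕ) (hmn : m.Coprime n)
    (hI : ((m * n : ℕ) : 𝓞 K) ∈ I) :
    (I ⊔ Ideal.span {(m : 𝓞 K)}) * (I ⊔ Ideal.span {(n : 𝓞 K)}) = I := by
  have hcop : IsCoprime (m : 𝓞 K) (n : 𝓞 K) := by
    have := (Nat.isCoprime_iff_coprime.mpr hmn).map (Int.castRingHom (𝓞 K))
    simpa using this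
  apply le_antisymm
  · rw [Ideal.sup_mul, Ideal.mul_sup, Ideal.mul_sup]
    refine sup_le (sup_le Ideal.mul_le_left Ideal.mul_le_left) (sup_le Ideal.mul_le_right ?_)
    rw [Ideal.span_singleton_mul_span_singleton, Ideal.span_singleton_le_iff_mem]
    exact_mod_cast hI
  · intro x hx
    obtain ⟨a, b, hab⟩ := hcop
    have h1 : x = x * (b * n) + (a * m) * x := by linear_combination (-x) * hab
    have hm : (m : 𝓞 K) ∈ I ⊔ Ideal.span {(m : 𝓞 K)} :=
      Ideal.mem_sup_right (Ideal.mem_span_singleton_self _)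
    have hn : (n : 𝓞 K) ∈ I ⊔ Ideal.span {(n : 𝓞 K)} :=
      Ideal.mem_sup_right (Ideal.mem_span_singleton_self _)
    rw [h1]
    refine Ideal.add_mem _ ?_ ?_
    · exact Ideal.mul_mem_mul (Ideal.mem_sup_left hx) (Ideal.mul_mem_left _ _ hn)
    · exact Ideal.mul_mem_mul (Ideal.mul_mem_left _ _ hm) (Ideal.mem_sup_left hx)

lemma absNorm_sup_span_coprime (I : Ideal (𝓞 K)) (m n : ℕ) (hmn : m.Coprime n) :
    (Ideal.absNorm (I ⊔ Ideal.span {(m : 𝓞 K)})).Coprime n := by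
  have h1 : Ideal.absNorm (I ⊔ Ideal.span {(m : 𝓞 K)}) ∣ m ^ Module.finrank ℤ (𝓞 K) := by
    rw [← Ideal.absNorm_span_natCast]
    exact Ideal.absNorm_dvd_absNorm_of_le le_sup_right
  exact Nat.Coprime.coprime_dvd_left h1 (hmn.pow_left _)

/-- Submultiplicativity over coprime arguments, from the injection `I ↦ (I + (m), I + (n))`. -/
lemma idealCount_mul_le (m n : ℕ) (hm : 0 < m) (hn : 0 < n) (hmn : m.Coprime n) :
    idealCount K (m * n) ≤ idealCount K m * idealCount K n := by
  unfold idealCount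
  rw [← Set.ncard_prod]
  refine Set.ncard_le_ncard_of_injOn
    (fun I => (I ⊔ Ideal.span {(m : 𝓞 K)}, I ⊔ Ideal.span {(n : 𝓞 K)})) ?_ ?_
    ((finite_absNorm_eq K m).prod (finite_absNorm_eq K n))
  · intro I hI
    have hI' : Ideal.absNorm I = m * n := hI
    have hmem : ((m * n : ℕ) : 𝓞 K) ∈ I := hI' ▸ Ideal.absNorm_mem I
    have hprod := congrArg Ideal.absNorm (sup_span_mul_sup_span I m n hmn hmem)
    rw [map_mul, hI'] at hprod
    have c1 := absNorm_sup_span_coprime I m n hmn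
    have c2 := absNorm_sup_span_coprime I n m hmn.symm
    have d1 := c1.dvd_of_dvd_mul_right (Dvd.intro _ hprod)
    have d2 := c2.dvd_of_dvd_mul_left (Dvd.intro_left _ hprod)
    have l1 := Nat.le_of_dvd hm d1
    have l2 := Nat.le_of_dvd hn d2
    refine ⟨?_, ?_⟩
    · change Ideal.absNorm (I ⊔ Ideal.span {(m : 𝓞 K)}) = m
      by_contra h
      have := lt_of_le_of_ne l1 h
      nlinarith
    · change Ideal.absNorm (I ⊔ Ideal.span {(n : 𝓞 K)}) = n
      by_contra h
      have := lt_of_le_of_ne l2 h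
      nlinarith
  · intro I hI J hJ h
    have hI' : Ideal.absNorm I = m * n := hI
    have hJ' : Ideal.absNorm J = m * n := hJ
    have hmemI : ((m * n : ℕ) : 𝓞 K) ∈ I := hI' ▸ Ideal.absNorm_mem I
    have hmemJ : ((m * n : ℕ) : 𝓞 K) ∈ J := hJ' ▸ Ideal.absNorm_mem J
    simp only [Prod.mk.injEq] at h
    rw [← sup_span_mul_sup_span I m n hmn hmemI, ← sup_span_mul_sup_span J m n hmn hmemJ, h.1, h.2]

lemma exists_pow_repr (P₁ P₂ P₃ : Ideal (𝓞 K)) (I : Ideal (𝓞 K)) (hI : I ≠ ⊥)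
    (h : ∀ P : Ideal (𝓞 K), P.IsPrime → P ≠ ⊥ → P ∣ I → P = P₁ ∨ P = P₂ ∨ P = P₃) :
    ∃ i j k : ℕ, I = P₁ ^ i * P₂ ^ j * P₃ ^ k := by
  induction I using UniqueFactorizationMonoid.induction_on_prime with
  | h₁ => exact absurd rfl hI
  | h₂ I hu => exact ⟨0, 0, 0, by simpa using Ideal.isUnit_iff.mp hu⟩
  | h₃ a p ha hp ih =>
    obtain ⟨i, j, k, hijk⟩ := ih ha (fun P h1 h2 h3 => h P h1 h2 (h3.mul_left _))
    have hpb : p ≠ ⊥ := hp.ne_zero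
    rcases h p (Ideal.isPrime_of_prime hp) hpb (dvd_mul_right _ _) with h | h | h
    · exact ⟨i + 1, j, k, by rw [hijk, h]; ring⟩
    · exact ⟨i, j + 1, k, by rw [hijk, h]; ring⟩
    · exact ⟨i, j, k + 1, by rw [hijk, h]; ring⟩

/-- If every prime above `p` is among `P₁, P₂, P₃`, then ideals of norm `p ^ n` are monomials in
these, with exponent vector of total weight `n`. -/
lemma exists_pow_repr_of_absNorm (p : ℕ) (hp : p.Prime) (P₁ P₂ P₃ : Ideal (𝓞 K)) (f₁ f₂ f₃ : ℕ)
    (h₁ : Ideal.absNorm P₁ = p ^ f₁) (h₂ : Ideal.absNorm P₂ = p ^ f₂)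
    (h₃ : Ideal.absNorm P₃ = p ^ f₃)
    (h : ∀ P : Ideal (𝓞 K), P.IsPrime → (p : 𝓞 K) ∈ P → P = P₁ ∨ P = P₂ ∨ P = P₃) (n : ℕ)
    (I : Ideal (𝓞 K)) (hI : Ideal.absNorm I = p ^ n) :
    ∃ i j k : ℕ, I = P₁ ^ i * P₂ ^ j * P₃ ^ k ∧ f₁ * i + f₂ * j + f₃ * k = n := by
  have hI0 : I ≠ ⊥ := by
    intro h0; rw [h0, Ideal.absNorm_bot] at hI
    exact (pow_pos hp.pos n).ne hI
  obtain ⟨i, j, k, hijk⟩ := exists_pow_repr P₁ P₂ P₃ I hI0 (by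
    intro P hP _ hPI
    refine h P hP ?_
    have h1 : ((p ^ n : ℕ) : 𝓞 K) ∈ P := (Ideal.le_of_dvd hPI) (hI ▸ Ideal.absNorm_mem I)
    push_cast at h1
    exact hP.mem_of_pow_mem n h1)
  refine ⟨i, j, k, hijk, ?_⟩
  have h4 := congrArg Ideal.absNorm hijk
  rw [hI, map_mul, map_mul, map_pow, map_pow, map_pow, h₁, h₂, h₃, ← pow_mul, ← pow_mul, ← pow_mul,
    ← pow_add, ← pow_add] at h4
  exact (Nat.pow_right_injective hp.two_le h4).symm

/-- If there are at most three primes above `p`, an ideal of norm `p ^ n` is determined by the exponents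
of two of them, whose sum is at most `n`. -/
lemma idealCount_three (p : ℕ) (hp : p.Prime) (P₁ P₂ P₃ : Ideal (𝓞 K)) (f₁ f₂ f₃ : ℕ)
    (h₁ : Ideal.absNorm P₁ = p ^ f₁) (h₂ : Ideal.absNorm P₂ = p ^ f₂)
    (h₃ : Ideal.absNorm P₃ = p ^ f₃) (hf₁ : 0 < f₁) (hf₂ : 0 < f₂) (hf₃ : 0 < f₃)
    (h : ∀ P : Ideal (𝓞 K), P.IsPrime → (p : 𝓞 K) ∈ P → P = P₁ ∨ P = P₂ ∨ P = P₃) (n : ℕ) :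
    idealCount K (p ^ n) ≤ ∑ i ∈ Finset.range (n + 1), (i + 1) := by
  classical
  have hcard : ((Finset.range (n + 1)).sigma (fun i => Finset.range (i + 1))).card =
      ∑ i ∈ Finset.range (n + 1), (i + 1) := by simp
  rw [← hcard]
  unfold idealCount
  refine (Set.ncard_le_ncard (t := ((((Finset.range (n + 1)).sigma (fun i => Finset.range (i + 1))).image
    (fun x => P₁ ^ ((n - f₂ * x.2 - f₃ * (x.1 - x.2)) / f₁) * P₂ ^ x.2 * P₃ ^ (x.1 - x.2)) :
      Finset (Ideal (𝓞 K))) : Set (Ideal (𝓞 K)))) ?_ (Finset.finite_toSet _)).trans ?_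
  · intro I hI
    obtain ⟨i, j, k, hijk, hn⟩ := exists_pow_repr_of_absNorm p hp P₁ P₂ P₃ f₁ f₂ f₃ h₁ h₂ h₃ h n I hI
    rw [Finset.mem_coe, Finset.mem_image]
    have hj : j ≤ f₂ * j := Nat.le_mul_of_pos_left _ hf₂
    have hk : k ≤ f₃ * k := Nat.le_mul_of_pos_left _ hf₃
    refine ⟨⟨j + k, j⟩, ?_, ?_⟩
    · simp only [Finset.mem_sigma, Finset.mem_range]
      omega
    · simp only [Nat.add_sub_cancel_left]
      have : n - f₂ * j - f₃ * k = f₁ * i := by omega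
      rw [this, Nat.mul_div_cancel_left _ hf₁, hijk]
  · rw [Set.ncard_coe_finset]
    exact Finset.card_image_le

/-- If there are at most two primes above `p`, one of them of degree at least `c`, then an ideal of norm
`p ^ n` is determined by the exponent of that one. -/
lemma idealCount_two (p : ℕ) (hp : p.Prime) (P₁ P₂ : Ideal (𝓞 K)) (f₁ f₂ c : ℕ)
    (h₁ : Ideal.absNorm P₁ = p ^ f₁) (h₂ : Ideal.absNorm P₂ = p ^ f₂)
    (hf₁ : 0 < f₁) (hc : 0 < c) (hf₂ : c ≤ f₂)
    (h : ∀ P : Ideal (𝓞 K), P.IsPrime → (p : 𝓞 K) ∈ P → P = P₁ ∨ P = P₂) (n : ℕ) :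
    idealCount K (p ^ n) ≤ n / c + 1 := by
  classical
  have hcard : (Finset.range (n / c + 1)).card = n / c + 1 := by simp
  rw [← hcard]
  unfold idealCount
  refine (Set.ncard_le_ncard (t := (((Finset.range (n / c + 1)).image
    (fun x => P₁ ^ ((n - f₂ * x) / f₁) * P₂ ^ x) :
      Finset (Ideal (𝓞 K))) : Set (Ideal (𝓞 K)))) ?_ (Finset.finite_toSet _)).trans ?_
  · intro I hI
    obtain ⟨i, j, k, hijk, hn⟩ := exists_pow_repr_of_absNorm p hp P₁ P₂ P₂ f₁ f₂ f₂ h₁ h₂ h₂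
      (fun P h3 h4 => (h P h3 h4).imp_right Or.inl) n I hI
    rw [Finset.mem_coe, Finset.mem_image]
    have hn' : f₁ * i + f₂ * (j + k) = n := by rw [mul_add, ← add_assoc]; exact hn
    refine ⟨j + k, ?_, ?_⟩
    · rw [Finset.mem_range, Nat.lt_succ_iff, Nat.le_div_iff_mul_le hc, mul_comm]
      have : c * (j + k) ≤ f₂ * (j + k) := Nat.mul_le_mul_right _ hf₂
      omega
    · have : n - f₂ * (j + k) = f₁ * i := by omega
      rw [this, Nat.mul_div_cancel_left _ hf₁, hijk]; ring
  · rw [Set.ncard_coe_finset]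
    exact Finset.card_image_le

lemma idealCount_one (p : ℕ) (hp : p.Prime) (P₁ : Ideal (𝓞 K)) (f₁ : ℕ)
    (h₁ : Ideal.absNorm P₁ = p ^ f₁) (hf₁ : 0 < f₁)
    (h : ∀ P : Ideal (𝓞 K), P.IsPrime → (p : 𝓞 K) ∈ P → P = P₁) (n : ℕ) :
    idealCount K (p ^ n) ≤ 1 := by
  unfold idealCount
  rw [Set.ncard_le_one_iff_eq (finite_absNorm_eq K _)]
  by_cases hex : ∃ I : Ideal (𝓞 K), Ideal.absNorm I = p ^ n
  · right
    refine ⟨P₁ ^ (n / f₁), ?_⟩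
    have key : ∀ I : Ideal (𝓞 K), Ideal.absNorm I = p ^ n → I = P₁ ^ (n / f₁) := by
      intro I hI
      obtain ⟨i, j, k, hijk, hn⟩ := exists_pow_repr_of_absNorm p hp P₁ P₁ P₁ f₁ f₁ f₁ h₁ h₁ h₁
        (fun P h3 h4 => Or.inl (h P h3 h4)) n I hI
      have : n = f₁ * (i + j + k) := by rw [← hn]; ring
      rw [this, Nat.mul_div_cancel_left _ hf₁, hijk]; ring
    ext I
    constructor
    · exact fun hI => key I hI
    · rintro rfl
      obtain ⟨J, hJ⟩ := hex
      rw [key J hJ] at hJ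
      exact hJ
  · left
    ext I
    simp only [Set.mem_ofPred_eq, Set.mem_empty_iff_false, iff_false]
    exact fun hI => hex ⟨I, hI⟩
end IdealCount

/-! ### Primes above p in a pure cubic field -/

section PrimesAbove
variable {K : Type} [Field K] [NumberField K]

lemma ne_bot_of_natCast_mem (p : ℕ) (hp : p.Prime) (P : Ideal (𝓞 K)) (hpP : (p : 𝓞 K) ∈ P) :
    P ≠ ⊥ := by
  rintro rfl
  rw [Ideal.mem_bot] at hpP
  exact hp.ne_zero (by exact_mod_cast hpP)

lemma absNorm_prime_eq_pow (p : ℕ) (hp : p.Prime) (P : Ideal (𝓞 K)) (hP : P.IsPrime)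
    (hpP : (p : 𝓞 K) ∈ P) : ∃ f, 0 < f ∧ Ideal.absNorm P = p ^ f := by
  have hmax : P.IsMaximal := hP.isMaximal (ne_bot_of_natCast_mem p hp P hpP)
  obtain ⟨q, n, hn, hqP, hq, hN⟩ := Ideal.exists_prime_and_absNorm_eq_pow P
  have hpq : p = q := by
    by_contra h
    have hc := (Nat.isCoprime_iff_coprime.mpr ((Nat.coprime_primes hp hq).mpr h)).map
      (Int.castRingHom (𝓞 K))
    simp only [eq_intCast, Int.cast_natCast] at hc
    obtain ⟨a, b, hab⟩ := hc
    refine hP.ne_top ((Ideal.eq_top_iff_one _).mpr ?_)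
    rw [← hab]
    exact Ideal.add_mem _ (Ideal.mul_mem_left _ _ hpP) (Ideal.mul_mem_left _ _ hqP)
  exact ⟨n, hn, hpq ▸ hN⟩

/-- Distinct primes above `p` are pairwise coprime, so an element of all of them is divisible by their
product. -/
lemma prod_absNorm_dvd (p : ℕ) (hp : p.Prime) (s : Finset (Ideal (𝓞 K)))
    (hs : ∀ P ∈ s, P.IsPrime ∧ (p : 𝓞 K) ∈ P) (x : 𝓞 K) (hx : ∀ P ∈ s, x ∈ P) :
    ∏ P ∈ s, Ideal.absNorm P ∣ (Algebra.norm ℤ x).natAbs := by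
  rw [← Ideal.absNorm_span_singleton, ← map_prod]
  refine map_dvd Ideal.absNorm (Finset.prod_dvd_of_coprime ?_ ?_)
  · intro P hP Q hQ hPQ
    have hPm := (hs P hP).1.isMaximal (ne_bot_of_natCast_mem p hp P (hs P hP).2)
    have hQm := (hs Q hQ).1.isMaximal (ne_bot_of_natCast_mem p hp Q (hs Q hQ).2)
    exact Ideal.isCoprime_iff_sup_eq.mpr (hPm.coprime_of_ne hQm hPQ)
  · intro P hP
    rw [Ideal.dvd_span_singleton]
    exact hx P hP

lemma exists_prime_above (p : ℕ) (hp : p.Prime) :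
    ∃ P : Ideal (𝓞 K), P.IsPrime ∧ (p : 𝓞 K) ∈ P := by
  have h1 : Ideal.span {(p : 𝓞 K)} ≠ ⊤ := by
    rw [Ne, ← Ideal.absNorm_eq_one_iff, Ideal.absNorm_span_natCast, RingOfIntegers.rank]
    have h3 : Module.finrank ℚ K ≠ 0 := Module.finrank_pos.ne'
    exact (Nat.one_lt_pow h3 hp.one_lt).ne'
  obtain ⟨P, hP, hle⟩ := Ideal.exists_le_maximal _ h1
  exact ⟨P, hP.isPrime, hle (Ideal.mem_span_singleton_self _)⟩

/-- Fermat's little theorem in the residue field of a prime of degree one. -/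
lemma pow_sub_self_mem (P : Ideal (𝓞 K)) (hP : P.IsPrime) (p : ℕ) (hp : p.Prime)
    (hN : Ideal.absNorm P = p) (x : 𝓞 K) : x ^ p - x ∈ P := by
  have hbot : P ≠ ⊥ := by
    rintro rfl; rw [Ideal.absNorm_bot] at hN; exact hp.ne_zero hN.symm
  have hmax : P.IsMaximal := hP.isMaximal hbot
  have hcard : Nat.card (𝓞 K ⧸ P) = p := hN
  have : Finite (𝓞 K ⧸ P) := Nat.finite_of_card_ne_zero (by rw [hcard]; exact hp.ne_zero)
  have := Fintype.ofFinite (𝓞 K ⧸ P)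
  let := Ideal.Quotient.field P
  have h := FiniteField.pow_card (Ideal.Quotient.mk P x)
  rw [← Nat.card_eq_fintype_card, hcard] at h
  rw [← Ideal.Quotient.eq, map_pow]
  exact h

end PrimesAbove

namespace CubicData
variable {K : Type} [Field K] [NumberField K] (D : CubicData K)

lemma norm_θ_sub (t : ℕ) : Algebra.norm ℤ (D.θ - (t : 𝓞 K)) = D.d - (t : ℤ) ^ 3 := by
  have h : ((Algebra.norm ℚ ((D.θ - (t : 𝓞 K) : 𝓞 K) : K) : ℚ) : ℂ) = D.d - (t : ℂ) ^ 3 := by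
    rw [D.norm_eq]
    have e : ((D.θ - (t : 𝓞 K) : 𝓞 K) : K) = D.θ - t := by simp
    rw [e, map_sub, map_sub, map_sub, map_natCast, map_natCast, map_natCast, D.τ₁_θ, D.τ₂_θ, D.τ₃_θ]
    have : (D.r : ℂ) ^ 3 = D.d := by exact_mod_cast D.r_pow
    linear_combination (D.ω ^ 3) * this + D.d * D.omega_pow + (t : ℂ) ^ 2 * D.r * D.hω -
      (t : ℂ) * D.r ^ 2 * (D.omega_pow + D.hω - 0)
  rw [← Algebra.coe_norm_int] at h
  exact_mod_cast h

lemma norm_natCast (D : CubicData K) (n : ℕ) : (Algebra.norm ℤ (n : 𝓞 K)).natAbs = n ^ 3 := by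
  rw [← Ideal.absNorm_span_singleton, Ideal.absNorm_span_natCast, RingOfIntegers.rank, D.finrank]

lemma θ_mem (p : ℕ) (hpd : p ∣ D.d) (P : Ideal (𝓞 K)) (hP : P.IsPrime)
    (hpP : (p : 𝓞 K) ∈ P) : D.θ ∈ P := by
  refine hP.mem_of_pow_mem 3 ?_
  rw [D.θ_pow]
  obtain ⟨e, he⟩ := hpd
  rw [he]; push_cast
  exact Ideal.mul_mem_right _ _ hpP

/-- For a prime `p ∣ d`, an element of all primes above `p` whose norm is not divisible by `p ^ 2`: either
`θ` or `θ ^ 2 / p`. -/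
lemma exists_unif (p : ℕ) (hp : p.Prime) (hpd : p ∣ D.d) : ∃ x : 𝓞 K,
    (∀ P : Ideal (𝓞 K), P.IsPrime → (p : 𝓞 K) ∈ P → x ∈ P) ∧
    ¬ p ^ 2 ∣ (Algebra.norm ℤ x).natAbs := by
  have hNθ : (Algebra.norm ℤ D.θ).natAbs = D.d := by
    have := D.norm_θ_sub 0
    simp at this
    rw [this]; simp
  by_cases h2 : p ^ 2 ∣ D.d
  · obtain ⟨e, he⟩ := h2
    have hpe : ¬ p ∣ e := by
      rintro ⟨e', rfl⟩
      exact D.cubefree p hp ⟨e', by rw [he]; ring⟩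
    have hp0 : (p : K) ≠ 0 := by exact_mod_cast hp.ne_zero
    have hη3 : ((D.θ : K) ^ 2 / p) ^ 3 = p * (e : K) ^ 2 := by
      have h1 := D.θ_pow'
      have h2 : ((D.θ : K) ^ 2 / p) ^ 3 = ((D.θ : K) ^ 3) ^ 2 / p ^ 3 := by ring
      rw [h2, h1, he]; push_cast; field_simp
    have h_int : IsIntegral ℤ ((D.θ : K) ^ 2 / p) := by
      refine IsIntegral.of_pow (n := 3) (by norm_num) ?_
      rw [hη3]
      have := isIntegral_algebraMap (R := ℤ) (A := K) (x := (p * e ^ 2 : ℤ))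
      simpa using this
    let η : 𝓞 K := ⟨_, h_int⟩
    have hη : (p : 𝓞 K) * η = D.θ ^ 2 := by
      apply RingOfIntegers.ext
      change (p : K) * ((D.θ : K) ^ 2 / p) = (D.θ : K) ^ 2
      field_simp
    have hη3' : η ^ 3 = p * e ^ 2 := by
      apply RingOfIntegers.ext
      exact hη3
    refine ⟨η, fun P hP hpP => hP.mem_of_pow_mem 3 ?_, ?_⟩
    · rw [hη3']; exact Ideal.mul_mem_right _ _ hpP
    · have hN := congrArg (fun x => (Algebra.norm ℤ x).natAbs) hη
      simp only [map_mul, map_pow, Int.natAbs_mul, Int.natAbs_pow, hNθ, D.norm_natCast] at hN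
      have h5 : (Algebra.norm ℤ η).natAbs = p * e ^ 2 := by
        have h6 : p ^ 3 * (Algebra.norm ℤ η).natAbs = p ^ 3 * (p * e ^ 2) := by
          rw [hN, he]; ring
        exact Nat.eq_of_mul_eq_mul_left (pow_pos hp.pos 3) h6
      rw [h5, pow_two, Nat.mul_dvd_mul_iff_left hp.pos]
      exact fun h => hpe (hp.dvd_of_dvd_pow h)
  · exact ⟨D.θ, fun P hP hpP => D.θ_mem p hpd P hP hpP, by rwa [hNθ]⟩

/-- There is only one prime above a prime `p ∣ d`. -/
lemma idealCount_of_dvd (p : ℕ) (hp : p.Prime) (hpd : p ∣ D.d) (n : ℕ) :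
    idealCount K (p ^ n) ≤ 1 := by
  classical
  obtain ⟨x, hx, hxN⟩ := D.exists_unif p hp hpd
  obtain ⟨P, hP, hpP⟩ := exists_prime_above (K := K) p hp
  obtain ⟨f, hf, hN⟩ := absNorm_prime_eq_pow p hp P hP hpP
  refine idealCount_one p hp P f hN hf ?_ n
  intro Q hQ hpQ
  by_contra hne
  obtain ⟨f', hf', hN'⟩ := absNorm_prime_eq_pow p hp Q hQ hpQ
  have h := prod_absNorm_dvd p hp {Q, P} (by simp [hP, hpP, hQ, hpQ]) x
    (by simp [hx P hP hpP, hx Q hQ hpQ])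
  rw [Finset.prod_pair hne, hN, hN', ← pow_add] at h
  exact hxN ((pow_dvd_pow p (by omega)).trans h)

/-- At a prime of degree one over `p ≡ 2 mod 3`, or over `p = 3`, the residue of `θ` is a fixed power of
`d`: there is `k` with `θ ^ (3 * k) = θ` in the residue field. -/
lemma θ_sub_mem (p : ℕ) (hp : p.Prime) (k : ℕ) (hk : 3 * k + 1 = 2 * p ∨ 3 * k = p) (P : Ideal (𝓞 K))
    (hP : P.IsPrime) (hN : Ideal.absNorm P = p) :
    D.θ - ((D.d ^ k : ℕ) : 𝓞 K) ∈ P := by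
  have h1 := pow_sub_self_mem P hP p hp hN D.θ
  have h2 : ((D.d ^ k : ℕ) : 𝓞 K) = D.θ ^ (3 * k) := by
    rw [pow_mul, D.θ_pow]; push_cast; rfl
  rw [h2]
  rcases hk with hk | hk
  · have h3 : 3 * k = (p - 1) + p := by have := hp.pos; omega
    have h4 : D.θ - D.θ ^ (3 * k) = - (D.θ ^ (p - 1) * (D.θ ^ p - D.θ) + (D.θ ^ p - D.θ)) := by
      have h5 : D.θ ^ p = D.θ ^ (p - 1) * D.θ := by
        rw [← pow_succ, Nat.sub_add_cancel hp.pos]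
      rw [h3, pow_add]
      linear_combination h5
    rw [h4]
    exact Ideal.neg_mem_iff _ |>.mpr (Ideal.add_mem _ (Ideal.mul_mem_left _ _ h1) h1)
  · rw [hk, ← Ideal.neg_mem_iff]
    convert h1 using 1
    ring

lemma shift_mem (p : ℕ) (t : ℕ) (P : Ideal (𝓞 K)) (hpP : (p : 𝓞 K) ∈ P)
    (h : D.θ - (t : 𝓞 K) ∈ P) : D.θ - ((t + p : ℕ) : 𝓞 K) ∈ P := by
  have : D.θ - ((t + p : ℕ) : 𝓞 K) = (D.θ - (t : 𝓞 K)) - p := by push_cast; ring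
  rw [this]
  exact Ideal.sub_mem _ h hpP

/-- For `p ≡ 2 mod 3` not dividing `d` there is at most one prime of degree one above `p`: the elements
`θ - t` and `θ - (t + p)` of `θ_sub_mem` would lie in two such primes, so that `p ^ 2` would divide their
norms `d - t ^ 3` and `d - (t + p) ^ 3`. As the degrees of the distinct primes add up to at most `3`, there
is also at most one prime of larger degree. -/
lemma idealCount_mod_two (p : ℕ) (hp : p.Prime) (hpd : ¬ p ∣ D.d) (hp3 : p % 3 = 2) (n : ℕ) :
    idealCount K (p ^ n) ≤ n / 2 + 1 := by
  classical
  -- at most one prime of degree one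
  have hone : ∀ P Q : Ideal (𝓞 K), P.IsPrime → Q.IsPrime → (p : 𝓞 K) ∈ P → (p : 𝓞 K) ∈ Q →
      Ideal.absNorm P = p → Ideal.absNorm Q = p → P = Q := by
    intro P Q hP hQ hpP hpQ hNP hNQ
    by_contra hne
    obtain ⟨k, hk⟩ : ∃ k, 3 * k + 1 = 2 * p := ⟨(2 * p - 1) / 3, by omega⟩
    set t := D.d ^ k with ht
    have mP := D.θ_sub_mem p hp k (Or.inl hk) P hP hNP
    have mQ := D.θ_sub_mem p hp k (Or.inl hk) Q hQ hNQ
    have d1 := prod_absNorm_dvd p hp {P, Q} (by simp [hP, hpP, hQ, hpQ])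
      (x := D.θ - (t : 𝓞 K)) (by simp only [Finset.mem_insert, Finset.mem_singleton]; rintro _ (rfl | rfl); exacts [mP, mQ])
    have d2 := prod_absNorm_dvd p hp {P, Q} (by simp [hP, hpP, hQ, hpQ])
      (x := D.θ - ((t + p : ℕ) : 𝓞 K)) (by simp only [Finset.mem_insert, Finset.mem_singleton]; rintro _ (rfl | rfl); exacts [D.shift_mem _ _ _ hpP mP, D.shift_mem _ _ _ hpQ mQ])
    rw [Finset.prod_pair hne, hNP, hNQ, D.norm_θ_sub, ← Int.natCast_dvd] at d1 d2
    have d3 := dvd_sub d1 d2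
    have d4 : ((p * p : ℕ) : ℤ) ∣ p * (3 * t ^ 2) := by
      have : (p : ℤ) * (3 * t ^ 2) = ((D.d : ℤ) - (t : ℤ) ^ 3 - (D.d - ((t + p : ℕ) : ℤ) ^ 3)) -
        ((p * p : ℕ) : ℤ) * (3 * t + p) := by push_cast; ring
      rw [this]
      exact dvd_sub d3 (dvd_mul_right _ _)
    have d5 : p * p ∣ p * (3 * t ^ 2) := by exact_mod_cast d4
    rw [Nat.mul_dvd_mul_iff_left hp.pos] at d5
    rcases hp.dvd_mul.mp d5 with h | h
    · have := (Nat.prime_dvd_prime_iff_eq hp Nat.prime_three).mp h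
      omega
    · exact hpd (hp.dvd_of_dvd_pow (hp.dvd_of_dvd_pow h))
  -- at most one prime of degree at least two
  have htwo : ∀ P Q : Ideal (𝓞 K), P.IsPrime → Q.IsPrime → (p : 𝓞 K) ∈ P → (p : 𝓞 K) ∈ Q →
      Ideal.absNorm P ≠ p → Ideal.absNorm Q ≠ p → P = Q := by
    intro P Q hP hQ hpP hpQ hNP hNQ
    by_contra hne
    obtain ⟨f, hf, hN⟩ := absNorm_prime_eq_pow p hp P hP hpP
    obtain ⟨f', hf', hN'⟩ := absNorm_prime_eq_pow p hp Q hQ hpQ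
    have e1 : f ≠ 1 := by rintro rfl; exact hNP (by simpa using hN)
    have e2 : f' ≠ 1 := by rintro rfl; exact hNQ (by simpa using hN')
    have h := prod_absNorm_dvd p hp {P, Q} (by simp [hP, hpP, hQ, hpQ]) (p : 𝓞 K)
      (by simp [hpP, hpQ])
    rw [Finset.prod_pair hne, hN, hN', ← pow_add, D.norm_natCast,
      Nat.pow_dvd_pow_iff_le_right hp.one_lt] at h
    omega
  by_cases hA : ∃ P : Ideal (𝓞 K), P.IsPrime ∧ (p : 𝓞 K) ∈ P ∧ Ideal.absNorm P = p
  · obtain ⟨P, hP, hpP, hNP⟩ := hA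
    by_cases hB : ∃ Q : Ideal (𝓞 K), Q.IsPrime ∧ (p : 𝓞 K) ∈ Q ∧ Ideal.absNorm Q ≠ p
    · obtain ⟨Q, hQ, hpQ, hNQ⟩ := hB
      obtain ⟨f', hf', hN'⟩ := absNorm_prime_eq_pow p hp Q hQ hpQ
      have e2 : f' ≠ 1 := by rintro rfl; exact hNQ (by simpa using hN')
      refine idealCount_two p hp P Q 1 f' 2 (by simpa using hNP) hN' one_pos two_pos (by omega) ?_ n
      intro S hS hpS
      by_cases hNS : Ideal.absNorm S = p
      · exact Or.inl (hone _ _ hS hP hpS hpP hNS hNP)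
      · exact Or.inr (htwo _ _ hS hQ hpS hpQ hNS hNQ)
    · push Not at hB
      refine (idealCount_one p hp P 1 (by simpa using hNP) one_pos ?_ n).trans (by omega)
      intro S hS hpS
      exact hone _ _ hS hP hpS hpP (hB S hS hpS) hNP
  · push Not at hA
    obtain ⟨Q, hQ, hpQ⟩ := exists_prime_above (K := K) p hp
    obtain ⟨f', hf', hN'⟩ := absNorm_prime_eq_pow p hp Q hQ hpQ
    refine (idealCount_one p hp Q f' hN' hf' ?_ n).trans (by omega)
    intro S hS hpS
    exact htwo _ _ hS hQ hpS hpQ (hA S hS hpS) (hA Q hQ hpQ)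

/-- There are at most two primes above `3` when `3 ∤ d`: three of them would have degree one, and then
`27` would divide both `d - t ^ 3` and `d - (t + 3) ^ 3`, where `t = d`. -/
lemma idealCount_three_pow (hpd : ¬ 3 ∣ D.d) (n : ℕ) :
    idealCount K (3 ^ n) ≤ n + 1 := by
  classical
  have hp := Nat.prime_three
  obtain ⟨P, hP, hpP⟩ := exists_prime_above (K := K) 3 hp
  obtain ⟨f, hf, hN⟩ := absNorm_prime_eq_pow 3 hp P hP hpP
  by_cases hB : ∃ Q : Ideal (𝓞 K), Q.IsPrime ∧ ((3 : ℕ) : 𝓞 K) ∈ Q ∧ Q ≠ P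
  · obtain ⟨Q, hQ, hpQ, hQP⟩ := hB
    obtain ⟨f', hf', hN'⟩ := absNorm_prime_eq_pow 3 hp Q hQ hpQ
    refine (idealCount_two 3 hp P Q f f' 1 hN hN' hf one_pos hf' ?_ n).trans (by simp)
    intro S hS hpS
    by_contra hcon
    push Not at hcon
    obtain ⟨hSP, hSQ⟩ := hcon
    obtain ⟨f'', hf'', hN''⟩ := absNorm_prime_eq_pow 3 hp S hS hpS
    have hmem : ∀ T ∈ ({S, Q, P} : Finset (Ideal (𝓞 K))), T.IsPrime ∧ ((3 : ℕ) : 𝓞 K) ∈ T := by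
      simp only [Finset.mem_insert, Finset.mem_singleton]
      rintro _ (rfl | rfl | rfl)
      exacts [⟨hS, hpS⟩, ⟨hQ, hpQ⟩, ⟨hP, hpP⟩]
    have hprod : ∏ T ∈ ({S, Q, P} : Finset (Ideal (𝓞 K))), Ideal.absNorm T = 3 ^ (f'' + f' + f) := by
      rw [Finset.prod_insert (by simp [hSP, hSQ]), Finset.prod_pair hQP, hN, hN', hN'']
      ring
    have d0 := prod_absNorm_dvd 3 hp _ hmem ((3 : ℕ) : 𝓞 K) (fun T hT => (hmem T hT).2)
    rw [hprod, D.norm_natCast, Nat.pow_dvd_pow_iff_le_right hp.one_lt] at d0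
    obtain ⟨rfl, rfl, rfl⟩ : f'' = 1 ∧ f' = 1 ∧ f = 1 := by omega
    have hm : ∀ T ∈ ({S, Q, P} : Finset (Ideal (𝓞 K))), D.θ - (D.d : 𝓞 K) ∈ T := by
      intro T hT
      have hNT : Ideal.absNorm T = 3 := by
        simp only [Finset.mem_insert, Finset.mem_singleton] at hT
        rcases hT with rfl | rfl | rfl
        · simpa using hN''
        · simpa using hN'
        · simpa using hN
      have := D.θ_sub_mem 3 hp 1 (Or.inr rfl) T (hmem T hT).1 hNT
      simpa using this
    have d1 := prod_absNorm_dvd 3 hp _ hmem _ hm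
    have d2 := prod_absNorm_dvd 3 hp _ hmem _ (fun T hT => D.shift_mem 3 D.d T (hmem T hT).2 (hm T hT))
    rw [hprod, D.norm_θ_sub, ← Int.natCast_dvd] at d1 d2
    have d3 := dvd_sub d1 d2
    have d4 : ((27 : ℤ)) ∣ 9 * D.d ^ 2 := by
      have : (9 : ℤ) * D.d ^ 2 = ((D.d : ℤ) - (D.d : ℤ) ^ 3 - (D.d - ((D.d + 3 : ℕ) : ℤ) ^ 3)) -
        27 * (D.d + 1) := by push_cast; ring
      rw [this]
      exact dvd_sub (by simpa using d3) (dvd_mul_right _ _)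
    have d5 : 9 * 3 ∣ 9 * D.d ^ 2 := by exact_mod_cast d4
    rw [Nat.mul_dvd_mul_iff_left (by norm_num)] at d5
    exact hpd (hp.dvd_of_dvd_pow d5)
  · push Not at hB
    refine (idealCount_one 3 hp P f hN hf ?_ n).trans (by omega)
    intro S hS hpS
    exact hB S hS hpS

/-- The degrees of the distinct primes above `p` add up to at most `3`, so there are at most three. -/
lemma idealCount_general (D : CubicData K) (p : ℕ) (hp : p.Prime) (n : ℕ) :
    idealCount K (p ^ n) ≤ ∑ i ∈ Finset.range (n + 1), (i + 1) := by
  classical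
  obtain ⟨P, hP, hpP⟩ := exists_prime_above (K := K) p hp
  obtain ⟨f, hf, hN⟩ := absNorm_prime_eq_pow p hp P hP hpP
  by_cases hB : ∃ Q : Ideal (𝓞 K), Q.IsPrime ∧ (p : 𝓞 K) ∈ Q ∧ Q ≠ P
  · obtain ⟨Q, hQ, hpQ, hQP⟩ := hB
    obtain ⟨f', hf', hN'⟩ := absNorm_prime_eq_pow p hp Q hQ hpQ
    by_cases hC : ∃ S : Ideal (𝓞 K), S.IsPrime ∧ (p : 𝓞 K) ∈ S ∧ S ≠ P ∧ S ≠ Q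
    · obtain ⟨S, hS, hpS, hSP, hSQ⟩ := hC
      obtain ⟨f'', hf'', hN''⟩ := absNorm_prime_eq_pow p hp S hS hpS
      refine idealCount_three p hp P Q S f f' f'' hN hN' hN'' hf hf' hf'' ?_ n
      intro T hT hpT
      by_contra hcon
      push Not at hcon
      obtain ⟨hTP, hTQ, hTS⟩ := hcon
      obtain ⟨g, hg, hNg⟩ := absNorm_prime_eq_pow p hp T hT hpT
      have hmem : ∀ U ∈ ({T, S, Q, P} : Finset (Ideal (𝓞 K))), U.IsPrime ∧ (p : 𝓞 K) ∈ U := by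
        simp only [Finset.mem_insert, Finset.mem_singleton]
        rintro _ (rfl | rfl | rfl | rfl)
        exacts [⟨hT, hpT⟩, ⟨hS, hpS⟩, ⟨hQ, hpQ⟩, ⟨hP, hpP⟩]
      have d0 := prod_absNorm_dvd p hp _ hmem (p : 𝓞 K) (fun T hT => (hmem T hT).2)
      rw [Finset.prod_insert (by simp [hTP, hTQ, hTS]), Finset.prod_insert (by simp [hSP, hSQ]),
        Finset.prod_pair hQP, hN, hN', hN'', hNg, ← pow_add, ← pow_add, ← pow_add, D.norm_natCast,
        Nat.pow_dvd_pow_iff_le_right hp.one_lt] at d0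
      omega
    · push Not at hC
      refine idealCount_three p hp P Q Q f f' f' hN hN' hN' hf hf' hf' ?_ n
      intro T hT hpT
      by_cases h : T = P
      · exact Or.inl h
      · exact Or.inr (Or.inl (hC T hT hpT h))
  · push Not at hB
    exact idealCount_three p hp P P P f f f hN hN hN hf hf hf
      (fun T hT hpT => Or.inl (hB T hT hpT)) n
end CubicData

/-! ### The average of the ideal counting function -/

section Chi
open ArithmeticFunction

/-- The nontrivial character modulo `3`, as an arithmetic function. -/
def chi3 : ArithmeticFunction ℤ :=
  ⟨fun n => if n % 3 = 1 then 1 else if n % 3 = 2 then -1 else 0, rfl⟩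

lemma chi3_apply (n : ℕ) : chi3 n = if n % 3 = 1 then 1 else if n % 3 = 2 then -1 else 0 := rfl

lemma chi3_mul (m n : ℕ) : chi3 (m * n) = chi3 m * chi3 n := by
  rw [chi3_apply, chi3_apply, chi3_apply, Nat.mul_mod]
  have hm : m % 3 < 3 := Nat.mod_lt _ (by norm_num)
  have hn : n % 3 < 3 := Nat.mod_lt _ (by norm_num)
  interval_cases m % 3 <;> interval_cases n % 3 <;> rfl

lemma chi3_one : chi3 1 = 1 := rfl

lemma chi3_pow (p k : ℕ) : chi3 (p ^ k) = chi3 p ^ k := by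
  induction k with
  | zero => rw [pow_zero, pow_zero, chi3_one]
  | succ k ih => rw [pow_succ, chi3_mul, ih, pow_succ]

lemma chi3_mult : chi3.IsMultiplicative := ⟨chi3_one, fun _ => chi3_mul _ _⟩

/-- The multiplicative majorant `1 * 1 * χ` of the ideal-counting function. -/
def gmaj : ArithmeticFunction ℤ := chi3 * (zeta : ArithmeticFunction ℤ) * (zeta : ArithmeticFunction ℤ)

lemma gmaj_mult : gmaj.IsMultiplicative :=
  (chi3_mult.mul isMultiplicative_zeta.natCast).mul isMultiplicative_zeta.natCast

lemma gmaj_prime_pow (p : ℕ) (hp : p.Prime) (n : ℕ) :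
    gmaj (p ^ n) = ∑ i ∈ Finset.range (n + 1), ∑ k ∈ Finset.range (i + 1), chi3 p ^ k := by
  rw [gmaj, coe_mul_zeta_apply, Nat.sum_divisors_prime_pow hp]
  refine Finset.sum_congr rfl fun i _ => ?_
  rw [coe_mul_zeta_apply, Nat.sum_divisors_prime_pow hp]
  exact Finset.sum_congr rfl fun k _ => chi3_pow p k

lemma gmaj_mod_one (p : ℕ) (hp : p.Prime) (h : p % 3 = 1) (n : ℕ) :
    gmaj (p ^ n) = ((∑ i ∈ Finset.range (n + 1), (i + 1) : ℕ) : ℤ) := by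
  rw [gmaj_prime_pow p hp, chi3_apply, if_pos h]
  simp

lemma gmaj_mod_two (p : ℕ) (hp : p.Prime) (h : p % 3 = 2) (n : ℕ) :
    gmaj (p ^ n) = ((n / 2 + 1 : ℕ) : ℤ) := by
  rw [gmaj_prime_pow p hp, chi3_apply, if_neg (by omega), if_pos h]
  have h1 : ∀ i : ℕ, ∑ k ∈ Finset.range (i + 1), (-1 : ℤ) ^ k = if i % 2 = 0 then 1 else 0 := by
    intro i
    induction i with
    | zero => simp
    | succ i ih =>
      rw [Finset.sum_range_succ, ih]
      rcases Nat.mod_two_eq_zero_or_one i with h | h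
      · have h2 : (i + 1) % 2 = 1 := by omega
        have h3 : Odd (i + 1) := Nat.odd_iff.mpr h2
        rw [h3.neg_one_pow, h, h2]; simp
      · have h2 : (i + 1) % 2 = 0 := by omega
        have h3 : Even (i + 1) := Nat.even_iff.mpr h2
        rw [h3.neg_one_pow, h, h2]; simp
  simp_rw [h1]
  induction n with
  | zero => rfl
  | succ n ih =>
    rw [Finset.sum_range_succ, ih]
    split_ifs with h2
    · push_cast; omega
    · push_cast; omega

lemma gmaj_three (n : ℕ) : gmaj (3 ^ n) = ((n + 1 : ℕ) : ℤ) := by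
  rw [gmaj_prime_pow 3 Nat.prime_three, show chi3 3 = 0 from rfl]
  have h1 : ∀ i : ℕ, ∑ k ∈ Finset.range (i + 1), (0 : ℤ) ^ k = 1 := by
    intro i
    rw [Finset.sum_range_succ']
    simp
  simp_rw [h1]
  simp

lemma one_le_gmaj (p : ℕ) (hp : p.Prime) (n : ℕ) : 1 ≤ gmaj (p ^ n) := by
  have h3 : p % 3 < 3 := Nat.mod_lt _ (by norm_num)
  rcases (by omega : p % 3 = 0 ∨ p % 3 = 1 ∨ p % 3 = 2) with h | h | h
  · have : p = 3 := ((Nat.prime_dvd_prime_iff_eq Nat.prime_three hp).mp (Nat.dvd_of_mod_eq_zero h)).symm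
    rw [this, gmaj_three]; push_cast; omega
  · rw [gmaj_mod_one p hp h, Finset.sum_range_succ]; push_cast
    have : 0 ≤ ∑ i ∈ Finset.range n, ((i : ℤ) + 1) := Finset.sum_nonneg fun i _ => by positivity
    omega
  · rw [gmaj_mod_two p hp h]; push_cast; omega

/-- Alternating sums with decreasing weights are at most the first term. -/
lemma sum_chi3_le (w : ℕ → ℤ) (hw0 : ∀ m, 0 ≤ w m) (hw : ∀ m, 1 ≤ m → w (m + 1) ≤ w m) (M : ℕ) :
    ∑ m ∈ Finset.Ioc 0 M, chi3 m * w m ≤ w 1 := by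
  rcases Nat.eq_zero_or_pos M with rfl | hM
  · simpa using hw0 1
  have key : ∑ m ∈ Finset.Ioc 0 M, chi3 m * w m ≤ w 1 ∧
      (M % 3 ≠ 1 → ∑ m ∈ Finset.Ioc 0 M, chi3 m * w m ≤ w 1 - w M) := by
    induction M, hM using Nat.le_induction with
    | base => simp [chi3_apply]
    | succ M hM ih =>
      rw [Finset.sum_Ioc_succ_top (by omega)]
      have h1 := hw M hM
      have h2 := hw0 (M + 1)
      rcases (by omega : M % 3 = 0 ∨ M % 3 = 1 ∨ M % 3 = 2) with h | h | h
      · have e : chi3 (M + 1) = 1 := by rw [chi3_apply, if_pos (by omega)]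
        have := ih.2 (by omega)
        rw [e]
        refine ⟨by linarith, fun h3 => absurd (by omega) h3⟩
      · have e : chi3 (M + 1) = -1 := by rw [chi3_apply, if_neg (by omega), if_pos (by omega)]
        have := ih.1
        rw [e]
        exact ⟨by linarith, fun _ => by linarith⟩
      · have e : chi3 (M + 1) = 0 := by rw [chi3_apply, if_neg (by omega), if_neg (by omega)]
        have := ih.2 (by omega)
        rw [e]
        exact ⟨by linarith, fun _ => by linarith⟩
  exact key.1

/-- Summing over the character first, the inner sums are alternating, which leaves `∑ ⌊N / n⌋`. -/
lemma sum_gmaj_le (N : ℕ) :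
    ((∑ n ∈ Finset.Ioc 0 N, gmaj n : ℤ) : ℝ) ≤ N * (1 + Real.log N) := by
  have h1 : ∑ n ∈ Finset.Ioc 0 N, gmaj n ≤ ∑ n ∈ Finset.Ioc 0 N, ((N / n : ℕ) : ℤ) := by
    rw [gmaj, mul_comm, sum_Ioc_mul_eq_sum_sum]
    refine Finset.sum_le_sum fun n hn => ?_
    have hn0 : n ≠ 0 := by have := Finset.mem_Ioc.mp hn; omega
    rw [natCoe_apply, zeta_apply_ne hn0, Nat.cast_one, one_mul, sum_Ioc_mul_zeta_eq_sum]
    refine (sum_chi3_le (fun m => ((N / n / m : ℕ) : ℤ)) (fun m => by positivity) ?_ _).trans ?_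
    · intro m hm
      exact_mod_cast Nat.div_le_div_left (Nat.le_succ m) hm
    · simp
  have h2 : ((∑ n ∈ Finset.Ioc 0 N, gmaj n : ℤ) : ℝ) ≤ ∑ n ∈ Finset.Ioc 0 N, ((N / n : ℕ) : ℝ) := by
    refine le_trans (Int.cast_le.mpr h1) (le_of_eq ?_)
    push_cast
    rfl
  refine h2.trans ?_
  calc ∑ n ∈ Finset.Ioc 0 N, ((N / n : ℕ) : ℝ) ≤ ∑ n ∈ Finset.Ioc 0 N, (N : ℝ) * ((n : ℝ))⁻¹ :=
        Finset.sum_le_sum fun n _ => by rw [← div_eq_mul_inv]; exact Nat.cast_div_le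
    _ = N * (harmonic N : ℝ) := by
        rw [← Finset.mul_sum, harmonic_eq_sum_Icc]
        push_cast
        rfl
    _ ≤ N * (1 + Real.log N) := by
        gcongr
        exact harmonic_le_one_add_log N
end Chi

namespace CubicData
variable {K : Type} [Field K] [NumberField K] (D : CubicData K)

lemma idealCount_le_gmaj (D : CubicData K) (n : ℕ) (hn : 0 < n) : (idealCount K n : ℤ) ≤ gmaj n := by
  induction n using Nat.recOnPosPrimePosCoprime with
  | prime_pow p k hp hk =>
    by_cases hpd : p ∣ D.d
    · have := D.idealCount_of_dvd p hp hpd k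
      have := one_le_gmaj p hp k
      omega
    have h3 : p % 3 < 3 := Nat.mod_lt _ (by norm_num)
    rcases (by omega : p % 3 = 0 ∨ p % 3 = 1 ∨ p % 3 = 2) with h | h | h
    · obtain rfl : p = 3 :=
        ((Nat.prime_dvd_prime_iff_eq Nat.prime_three hp).mp (Nat.dvd_of_mod_eq_zero h)).symm
      rw [gmaj_three]
      exact_mod_cast D.idealCount_three_pow hpd k
    · rw [gmaj_mod_one p hp h]
      exact_mod_cast D.idealCount_general p hp k
    · rw [gmaj_mod_two p hp h]
      exact_mod_cast D.idealCount_mod_two p hp hpd h k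
  | zero => omega
  | one =>
    have h1 : idealCount K 1 ≤ 1 := by
      have h0 : {I : Ideal (𝓞 K) | Ideal.absNorm I = 1} = {⊤} := by
        ext I; exact Ideal.absNorm_eq_one_iff
      rw [idealCount, h0, Set.ncard_singleton]
    rw [gmaj_mult.1]
    exact_mod_cast h1
  | coprime a b ha hb hab iha ihb =>
    rw [gmaj_mult.2 hab]
    have h1 := idealCount_mul_le (K := K) a b (by omega) (by omega) hab
    have h2 : (idealCount K (a * b) : ℤ) ≤ idealCount K a * idealCount K b := by exact_mod_cast h1
    have h3 := iha (by omega)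
    have h4 := ihb (by omega)
    exact h2.trans (mul_le_mul h3 h4 (by positivity) (le_trans (by positivity) h3))

/-- The number of nonzero ideals of norm at most `N`, with a bound independent of the field. -/
lemma card_ideals_le (D : CubicData K) (N : ℕ) (s : Finset (Ideal (𝓞 K)))
    (hs : ∀ I ∈ s, I ≠ ⊥ ∧ Ideal.absNorm I ≤ N) : (s.card : ℝ) ≤ N * (1 + Real.log N) := by
  classical
  have h1 : s ⊆ (Finset.Ioc 0 N).biUnion (fun n => (finite_absNorm_eq K n).toFinset) := by
    intro I hI
    obtain ⟨h0, h1⟩ := hs I hI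
    rw [Finset.mem_biUnion]
    refine ⟨Ideal.absNorm I, ?_, ?_⟩
    · rw [Finset.mem_Ioc]
      exact ⟨Nat.pos_of_ne_zero (fun h => h0 (Ideal.absNorm_eq_zero_iff.mp h)), h1⟩
    · rw [Set.Finite.mem_toFinset]; rfl
  have h2 := (Finset.card_le_card h1).trans Finset.card_biUnion_le
  have h3 : ∑ n ∈ Finset.Ioc 0 N, ((finite_absNorm_eq K n).toFinset).card =
      ∑ n ∈ Finset.Ioc 0 N, idealCount K n := by
    refine Finset.sum_congr rfl fun n _ => ?_
    rw [idealCount, Set.ncard_eq_toFinset_card _ (finite_absNorm_eq K n)]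
  rw [h3] at h2
  have h4 : ((∑ n ∈ Finset.Ioc 0 N, idealCount K n : ℕ) : ℤ) ≤ ∑ n ∈ Finset.Ioc 0 N, gmaj n := by
    push_cast
    exact Finset.sum_le_sum fun n hn => D.idealCount_le_gmaj n (Finset.mem_Ioc.mp hn).1
  have h5 : (s.card : ℤ) ≤ ∑ n ∈ Finset.Ioc 0 N, gmaj n := le_trans (by exact_mod_cast h2) h4
  refine le_trans ?_ (sum_gmaj_le N)
  exact_mod_cast h5
end CubicData

/-! ### A small unit -/

namespace CubicData
variable {K : Type} [Field K] [NumberField K] (D : CubicData K)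

/-- Dirichlet's box principle in `ℤ[θ]`: an element which is small at the real place and
of size `O(H)` at the complex one. -/
lemma exists_small (H : ℝ) (hH : D.r ^ 2 ≤ H) : ∃ α : 𝓞 K, α ≠ 0 ∧
    ‖D.τ₁ α‖ ≤ 2 * D.d / H ^ 2 ∧ ‖D.τ₂ α‖ ≤ 6 * H := by
  have hr := D.one_le_r
  have hr2 : D.r ≤ D.r ^ 2 := by nlinarith
  have hH1 : 1 ≤ H := by linarith
  obtain ⟨B, hB⟩ : ∃ B : ℕ, B = ⌊H / D.r⌋₊ := ⟨_, rfl⟩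
  obtain ⟨C, hC⟩ : ∃ C : ℕ, C = ⌊H / D.r ^ 2⌋₊ := ⟨_, rfl⟩
  have hBle : (B : ℝ) * D.r ≤ H := by
    rw [← le_div_iff₀ (by linarith), hB]; exact Nat.floor_le (by positivity)
  have hCle : (C : ℝ) * D.r ^ 2 ≤ H := by
    rw [← le_div_iff₀ (by positivity), hC]; exact Nat.floor_le (by positivity)
  have hBlt : H / D.r < B + 1 := by rw [hB]; exact Nat.lt_floor_add_one _
  have hClt : H / D.r ^ 2 < C + 1 := by rw [hC]; exact Nat.lt_floor_add_one _
  have hB1 : 1 ≤ B := by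
    rw [hB]; apply Nat.le_floor; rw [Nat.cast_one, le_div_iff₀ (by linarith)]; linarith
  obtain ⟨T, hT⟩ : ∃ T : ℕ, T = (B + 1) * (C + 1) := ⟨_, rfl⟩
  have hT2 : 2 ≤ T := by rw [hT]; nlinarith
  have hTR : (2 : ℝ) ≤ T := by exact_mod_cast hT2
  have hTH : H ^ 2 / D.d < T := by
    have : H ^ 2 / D.d = (H / D.r) * (H / D.r ^ 2) := by
      rw [← D.r_pow]; have := D.r_pos; field_simp
    rw [this, hT]; push_cast
    exact mul_lt_mul'' hBlt hClt (by positivity) (by positivity)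
  let v : ℕ × ℕ → ℝ := fun p => p.1 * D.r + p.2 * D.r ^ 2
  let f : ℕ × ℕ → ℕ := fun p => ⌊(T - 1 : ℝ) * Int.fract (v p)⌋₊
  have hmaps : ∀ p ∈ Finset.range (B + 1) ×ˢ Finset.range (C + 1), f p ∈ Finset.range (T - 1) := by
    intro p _
    rw [Finset.mem_range, Nat.floor_lt (mul_nonneg (by linarith) (Int.fract_nonneg _)),
      Nat.cast_sub (by omega), Nat.cast_one]
    have := Int.fract_lt_one (v p)
    nlinarith
  have hcard : (Finset.range (T - 1)).card <
      (Finset.range (B + 1) ×ˢ Finset.range (C + 1)).card := by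
    rw [Finset.card_product, Finset.card_range, Finset.card_range, Finset.card_range, ← hT]
    omega
  obtain ⟨p, hp, q, hq, hpq, hf⟩ := Finset.exists_ne_map_eq_of_card_lt_of_maps_to hcard hmaps
  rw [Finset.mem_product, Finset.mem_range, Finset.mem_range] at hp hq
  have hfr : |Int.fract (v p) - Int.fract (v q)| ≤ 1 / (T - 1 : ℝ) := by
    have h1 := Nat.floor_le (mul_nonneg (by linarith : (0:ℝ) ≤ T - 1) (Int.fract_nonneg (v p)))
    have h2 := Nat.lt_floor_add_one ((T - 1 : ℝ) * Int.fract (v p))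
    have h3 := Nat.floor_le (mul_nonneg (by linarith : (0:ℝ) ≤ T - 1) (Int.fract_nonneg (v q)))
    have h4 := Nat.lt_floor_add_one ((T - 1 : ℝ) * Int.fract (v q))
    change ⌊(T - 1 : ℝ) * Int.fract (v p)⌋₊ = ⌊(T - 1 : ℝ) * Int.fract (v q)⌋₊ at hf
    rw [hf] at h1 h2
    rw [le_div_iff₀ (by linarith), ← abs_of_nonneg (by linarith : (0:ℝ) ≤ T - 1), ← abs_mul,
      abs_le]
    constructor <;> nlinarith
  let a : ℤ := ⌊v q⌋ - ⌊v p⌋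
  let b : ℤ := (p.1 : ℤ) - q.1
  let c : ℤ := (p.2 : ℤ) - q.2
  let α : 𝓞 K := a + b * D.θ + c * D.θ ^ 2
  have hα : (α : K) = ((a : ℚ) : K) + ((b : ℚ) : K) * D.θ + ((c : ℚ) : K) * (D.θ : K) ^ 2 := by
    simp [α]
  have hval : (a : ℝ) + b * D.r + c * D.r ^ 2 = Int.fract (v p) - Int.fract (v q) := by
    simp only [Int.fract, a, b, c, v]; push_cast; ring
  have h1 : ‖D.τ₁ α‖ = |Int.fract (v p) - Int.fract (v q)| := by
    rw [hα, D.map_repr, D.τ₁_θ, ← hval, ← Real.norm_eq_abs, ← Complex.norm_real]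
    congr 1
    push_cast
    rfl
  have h1' : ‖D.τ₁ α‖ ≤ 2 * D.d / H ^ 2 := by
    rw [h1]
    refine hfr.trans ?_
    have hd : (0 : ℝ) < D.d := by have := D.two_le; positivity
    rw [div_lt_iff₀ hd] at hTH
    rw [div_le_div_iff₀ (by linarith) (by positivity)]
    nlinarith
  have h1'' : ‖D.τ₁ α‖ ≤ 1 := by
    rw [h1]; refine hfr.trans ?_
    rw [div_le_one (by linarith)]; linarith
  refine ⟨α, ?_, h1', ?_⟩
  · intro h0
    have := D.indep a b c (by rw [← hα, h0]; simp)
    apply hpq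
    have hb : b = 0 := by exact_mod_cast this.2.1
    have hc : c = 0 := by exact_mod_cast this.2.2
    ext
    · simp only [b] at hb; omega
    · simp only [c] at hc; omega
  · have hb : |(b : ℝ)| ≤ B := by
      have : |b| ≤ B := by simp only [b, abs_le]; omega
      exact_mod_cast this
    have hc : |(c : ℝ)| ≤ C := by
      have : |c| ≤ C := by simp only [c, abs_le]; omega
      exact_mod_cast this
    have hbr : |(b : ℝ) * D.r| ≤ H := by
      rw [abs_mul, abs_of_pos D.r_pos]; nlinarith
    have hcr : |(c : ℝ) * D.r ^ 2| ≤ H := by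
      rw [abs_mul, abs_of_pos (pow_pos D.r_pos 2)]; nlinarith
    have har : |(a : ℝ)| ≤ 1 + 2 * H := by
      have h2 : (a : ℝ) = (Int.fract (v p) - Int.fract (v q)) - b * D.r - c * D.r ^ 2 := by
        rw [← hval]; ring
      rw [h1] at h1''
      rw [abs_le] at *
      constructor <;> linarith [h1''.1, h1''.2, hbr.1, hbr.2, hcr.1, hcr.2]
    have hn1 : ‖((b : ℝ) : ℂ) * (D.ω * D.r)‖ ≤ H := by
      rw [norm_mul, norm_mul, D.norm_omega, one_mul, Complex.norm_real, Complex.norm_real,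
        ← norm_mul]; exact hbr
    have hn2 : ‖((c : ℝ) : ℂ) * (D.ω * D.r) ^ 2‖ ≤ H := by
      rw [norm_mul, norm_pow, norm_mul, D.norm_omega, one_mul, Complex.norm_real, Complex.norm_real,
        ← norm_pow, ← norm_mul]; exact hcr
    have hn3 : ‖((a : ℝ) : ℂ)‖ ≤ 1 + 2 * H := by rw [Complex.norm_real]; exact har
    have h5 : D.τ₂ α = ((a : ℝ) : ℂ) + ((b : ℝ) : ℂ) * (D.ω * D.r) + ((c : ℝ) : ℂ) * (D.ω * D.r) ^ 2 := by
      rw [hα, D.map_repr, D.τ₂_θ]; push_cast; rfl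
    rw [h5]
    refine (norm_add_le _ _).trans ?_
    have := norm_add_le ((a : ℝ) : ℂ) (((b : ℝ) : ℂ) * (D.ω * D.r))
    linarith

/-- Counting pairs `(i, I)` with `2 ^ i * N I ≤ x`. -/
lemma card_pairs_le (D : CubicData K) (x : ℕ) (hx : 0 < x) (s : Finset (ℕ × Ideal (𝓞 K)))
    (hs : ∀ p ∈ s, p.2 ≠ ⊥ ∧ 2 ^ p.1 * Ideal.absNorm p.2 ≤ x) :
    (s.card : ℝ) ≤ 2 * (x * (1 + Real.log x)) := by
  classical
  have hmaps : Set.MapsTo Prod.fst (s : Set (ℕ × Ideal (𝓞 K))) (Finset.range x : Set ℕ) := by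
    intro p hp
    obtain ⟨h1, h2⟩ := hs p hp
    have h3 : 1 ≤ Ideal.absNorm p.2 :=
      Nat.pos_of_ne_zero (fun h => h1 (Ideal.absNorm_eq_zero_iff.mp h))
    have h4 := Nat.lt_two_pow_self (n := p.1)
    rw [Finset.mem_coe, Finset.mem_range]
    nlinarith
  rw [Finset.card_eq_sum_card_fiberwise hmaps]
  push_cast
  have hlogx : 0 ≤ Real.log x := Real.log_natCast_nonneg x
  have hfib : ∀ i ∈ Finset.range x, ((s.filter (fun p => p.1 = i)).card : ℝ) ≤
      (1 / 2 : ℝ) ^ i * (x * (1 + Real.log x)) := by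
    intro i _
    have hinj : Set.InjOn Prod.snd (s.filter (fun p => p.1 = i) : Set (ℕ × Ideal (𝓞 K))) := by
      intro p hp q hq h
      rw [Finset.mem_coe, Finset.mem_filter] at hp hq
      exact Prod.ext (hp.2.trans hq.2.symm) h
    rw [← Finset.card_image_of_injOn hinj]
    refine (D.card_ideals_le (x / 2 ^ i) _ ?_).trans ?_
    · intro I hI
      obtain ⟨p, hp, rfl⟩ := Finset.mem_image.mp hI
      rw [Finset.mem_filter] at hp
      refine ⟨(hs p hp.1).1, ?_⟩
      rw [Nat.le_div_iff_mul_le (by positivity), mul_comm, ← hp.2]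
      exact (hs p hp.1).2
    · have h1 : ((x / 2 ^ i : ℕ) : ℝ) ≤ (1 / 2 : ℝ) ^ i * x := by
        refine Nat.cast_div_le.trans (le_of_eq ?_)
        rw [one_div, inv_pow]; push_cast; rw [div_eq_inv_mul]
      have h2 : Real.log ((x / 2 ^ i : ℕ) : ℝ) ≤ Real.log x := by
        rcases Nat.eq_zero_or_pos (x / 2 ^ i) with h | h
        · rw [h]; simpa using hlogx
        · exact Real.log_le_log (by exact_mod_cast h) (by exact_mod_cast Nat.div_le_self _ _)
      rw [← mul_assoc]
      have h3 : 0 ≤ Real.log ((x / 2 ^ i : ℕ) : ℝ) := Real.log_natCast_nonneg _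
      exact mul_le_mul h1 (by linarith) (by linarith) (by positivity)
  refine (Finset.sum_le_sum hfib).trans ?_
  rw [← Finset.sum_mul]
  gcongr
  have := geom_sum_eq (by norm_num : (1 / 2 : ℝ) ≠ 1) x
  rw [this]
  have : (0 : ℝ) ≤ (1 / 2) ^ x := by positivity
  rw [div_le_iff_of_neg (by norm_num)]
  linarith

lemma absNorm_span (α : 𝓞 K) :
    (Ideal.absNorm (Ideal.span {α}) : ℝ) = ‖D.τ₁ α‖ * ‖D.τ₂ α‖ ^ 2 := by
  rw [Ideal.absNorm_span_singleton, ← D.abs_norm_eq, Nat.cast_natAbs, Int.cast_abs]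

/-- Among `N` elements of the sizes provided by `exists_small`, two generate the same ideal and differ in
size at the real place. Otherwise the sizes at both places depend only on the ideal `I` generated by the
element, and comparing the `j`-th element with the first one that generates `I`, say the `i`-th, gives
`2 ^ (j - i) * N I ≤ 72 d`. Since `j` is determined by `(j - i, I)`, this contradicts `card_pairs_le`. -/
lemma exists_collision (N : ℕ) (hN : 144 * D.d * (1 + Real.log (72 * D.d)) < N) (α : ℕ → 𝓞 K)
    (h0 : ∀ j, α j ≠ 0) (h1 : ∀ j : ℕ, ‖D.τ₁ (α j)‖ ≤ 2 * D.d / (D.r ^ 2 * Real.exp j) ^ 2)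
    (h2 : ∀ j : ℕ, ‖D.τ₂ (α j)‖ ≤ 6 * (D.r ^ 2 * Real.exp j)) :
    ∃ i < N, ∃ j < N, Ideal.span {α i} = Ideal.span {α j} ∧ ‖D.τ₁ (α i)‖ ≠ ‖D.τ₁ (α j)‖ := by
  classical
  by_contra hcon
  push Not at hcon
  let I : ℕ → Ideal (𝓞 K) := fun j => Ideal.span {α j}
  have hex : ∀ j, ∃ i, I i = I j := fun j => ⟨j, rfl⟩
  let j0 : ℕ → ℕ := fun j => Nat.find (hex j)
  have hj0 : ∀ j, I (j0 j) = I j := fun j => Nat.find_spec (hex j)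
  have hj0le : ∀ j, j0 j ≤ j := fun j => Nat.find_min' (hex j) rfl
  have hj0eq : ∀ i j, I i = I j → j0 i = j0 j := by
    intro i j h
    apply le_antisymm
    · exact Nat.find_min' (hex i) ((hj0 j).trans h.symm)
    · exact Nat.find_min' (hex j) ((hj0 i).trans h)
  let F : ℕ → ℕ × Ideal (𝓞 K) := fun j => (j - j0 j, I j)
  have hinj : Set.InjOn F (Finset.range N : Set ℕ) := by
    intro i _ j _ h
    have e1 : i - j0 i = j - j0 j := congrArg Prod.fst h
    have e2 := hj0eq i j (congrArg Prod.snd h)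
    have := hj0le i; have := hj0le j
    omega
  have hd : 0 < D.d := by have := D.two_le; omega
  have hcard := D.card_pairs_le (72 * D.d) (by omega) ((Finset.range N).image F) (by
    intro p hp
    obtain ⟨j, hj, rfl⟩ := Finset.mem_image.mp hp
    rw [Finset.mem_range] at hj
    refine ⟨by simpa [F, I] using h0 j, ?_⟩
    change 2 ^ (j - j0 j) * Ideal.absNorm (I j) ≤ 72 * D.d
    obtain ⟨m, hm⟩ := Nat.exists_eq_add_of_le (hj0le j)
    have hm' : j - j0 j = m := by omega
    rw [hm']
    have ht := hcon (j0 j) (lt_of_le_of_lt (hj0le j) hj) j hj (hj0 j)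
    have hnorm : (Ideal.absNorm (I j) : ℝ) = ‖D.τ₁ (α j)‖ * ‖D.τ₂ (α (j0 j))‖ ^ 2 := by
      rw [← hj0 j, D.absNorm_span, ht]
    have hr := pow_pos D.r_pos 2
    have hle : (Ideal.absNorm (I j) : ℝ) ≤
        (2 * D.d / (D.r ^ 2 * Real.exp j) ^ 2) * (6 * (D.r ^ 2 * Real.exp (j0 j))) ^ 2 := by
      rw [hnorm]
      gcongr
      · exact h1 j
      · exact h2 _
    have hexp : (2 : ℝ) ^ m * Real.exp (j0 j) ^ 2 ≤ Real.exp j ^ 2 := by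
      have e : (j : ℝ) = j0 j + m := by exact_mod_cast hm
      rw [e, Real.exp_add, mul_pow, mul_comm]
      gcongr
      have e1 : (2 : ℝ) ^ m ≤ Real.exp m := by
        have := Real.exp_nat_mul 1 m
        rw [mul_one] at this
        rw [this]
        gcongr
        linarith [Real.add_one_le_exp 1]
      have e2 : 1 ≤ Real.exp (m : ℝ) := Real.one_le_exp (by positivity)
      nlinarith
    have hgoal : (2 : ℝ) ^ m * Ideal.absNorm (I j) ≤ 72 * D.d := by
      calc (2 : ℝ) ^ m * Ideal.absNorm (I j) ≤ 2 ^ m * ((2 * D.d / (D.r ^ 2 * Real.exp j) ^ 2) *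
            (6 * (D.r ^ 2 * Real.exp (j0 j))) ^ 2) := by gcongr
        _ = 72 * D.d * ((2 ^ m * Real.exp (j0 j) ^ 2) / Real.exp j ^ 2) := by
            have := D.r_pos
            field_simp; ring
        _ ≤ 72 * D.d * 1 := by
            gcongr
            exact (div_le_one (by positivity)).mpr hexp
        _ = 72 * D.d := mul_one _
    exact_mod_cast hgoal)
  rw [Finset.card_image_of_injOn hinj, Finset.card_range] at hcard
  push_cast at hcard
  linarith

/-- The quotient of the two elements of `exists_collision` is a unit, of size at most about `e^N`. If its
logarithmic size is below `1`, a power of it is taken. -/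
lemma exists_unit : ∃ (u : (𝓞 K)ˣ) (R : ℝ), 1 ≤ R ∧ R ≤ 1500 * (D.d * Real.log D.d) ∧
    ‖D.τ₂ (u : 𝓞 K)‖ = Real.exp R := by
  have hd2 : (2 : ℝ) ≤ D.d := by exact_mod_cast D.two_le
  have hlogd : Real.log 2 ≤ Real.log D.d := Real.log_le_log (by norm_num) hd2
  have hl2 := Real.log_two_gt_d9
  have hl72 : Real.log (72 * D.d) ≤ 8 * Real.log D.d := by
    rw [Real.log_mul (by norm_num) (by positivity)]
    have : Real.log 72 ≤ 7 * Real.log 2 := by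
      rw [← Real.log_rpow (by norm_num)]
      exact Real.log_le_log (by norm_num) (by norm_num)
    linarith
  have hl72' : 0 ≤ Real.log (72 * D.d) := Real.log_nonneg (by linarith)
  obtain ⟨N, hN⟩ : ∃ N : ℕ, N = ⌊144 * D.d * (1 + Real.log (72 * D.d))⌋₊ + 1 := ⟨_, rfl⟩
  have hNlt : 144 * D.d * (1 + Real.log (72 * D.d)) < N := by
    rw [hN]; push_cast; exact Nat.lt_floor_add_one _
  have hNle : (N : ℝ) ≤ 144 * D.d * (1 + Real.log (72 * D.d)) + 1 := by
    rw [hN]; push_cast; gcongr; exact Nat.floor_le (by positivity)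
  have hr2 : 0 < D.r ^ 2 := pow_pos D.r_pos 2
  have hsm := fun j : ℕ => D.exists_small (D.r ^ 2 * Real.exp j)
    (le_mul_of_one_le_right hr2.le (Real.one_le_exp (by positivity)))
  choose α h0 h1 h2 using hsm
  obtain ⟨i, hi, j, hj, hspan, hne⟩ := D.exists_collision N hNlt α h0 h1 h2
  have hne2 : ‖D.τ₂ (α i)‖ ≠ ‖D.τ₂ (α j)‖ := by
    intro h
    have e1 := D.absNorm_span (α i)
    rw [hspan, D.absNorm_span, h] at e1
    have h3 : ‖D.τ₂ (α j)‖ ^ 2 ≠ 0 := by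
      have := D.one_le_norm _ (h0 j)
      intro h4; rw [h4] at this; norm_num at this
    exact hne (mul_right_cancel₀ h3 e1).symm
  obtain ⟨i, j, hi, hj, hspan, hlt⟩ : ∃ i j, i < N ∧ j < N ∧
      Ideal.span {α i} = Ideal.span {α j} ∧ ‖D.τ₂ (α i)‖ < ‖D.τ₂ (α j)‖ := by
    rcases lt_or_gt_of_ne hne2 with h | h
    · exact ⟨i, j, hi, hj, hspan, h⟩
    · exact ⟨j, i, hj, hi, hspan.symm, h⟩
  obtain ⟨u, hu⟩ := Ideal.span_singleton_eq_span_singleton.mp hspan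
  have hpos : 0 < ‖D.τ₂ (α i)‖ := by
    rw [norm_pos_iff, Ne, map_eq_zero]; simpa using h0 i
  have hmul : ‖D.τ₂ (α i)‖ * ‖D.τ₂ (u : 𝓞 K)‖ = ‖D.τ₂ (α j)‖ := by
    rw [← hu, ← norm_mul, ← map_mul]; simp
  have hu1 : 1 < ‖D.τ₂ (u : 𝓞 K)‖ := by
    rw [← hmul] at hlt
    exact (lt_mul_iff_one_lt_right hpos).mp hlt
  obtain ⟨R0, hR0⟩ : ∃ R0, R0 = Real.log ‖D.τ₂ (u : 𝓞 K)‖ := ⟨_, rfl⟩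
  have hexpR0 : ‖D.τ₂ (u : 𝓞 K)‖ = Real.exp R0 := by rw [hR0, Real.exp_log (by linarith)]
  have hR0pos : 0 < R0 := by rw [hR0]; exact Real.log_pos hu1
  have hR0le : R0 ≤ N + Real.log (72 * D.d) := by
    have e1 := D.one_le_norm _ (h0 i)
    have e2 : 1 ≤ 2 * D.d / (D.r ^ 2 * Real.exp i) ^ 2 * ‖D.τ₂ (α i)‖ ^ 2 :=
      e1.trans (by gcongr; exact h1 i)
    have e3 : ‖D.τ₂ (u : 𝓞 K)‖ ^ 2 ≤ 72 * D.d * Real.exp (2 * N) := by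
      calc ‖D.τ₂ (u : 𝓞 K)‖ ^ 2 ≤ ‖D.τ₂ (u : 𝓞 K)‖ ^ 2 *
            (2 * D.d / (D.r ^ 2 * Real.exp i) ^ 2 * ‖D.τ₂ (α i)‖ ^ 2) :=
            le_mul_of_one_le_right (by positivity) e2
        _ = 2 * D.d / (D.r ^ 2 * Real.exp i) ^ 2 * ‖D.τ₂ (α j)‖ ^ 2 := by rw [← hmul]; ring
        _ ≤ 2 * D.d / (D.r ^ 2 * Real.exp i) ^ 2 * (6 * (D.r ^ 2 * Real.exp j)) ^ 2 := by
            gcongr; exact h2 j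
        _ = 72 * D.d * (Real.exp j ^ 2 / Real.exp i ^ 2) := by
            have := D.r_pos
            field_simp; ring
        _ ≤ 72 * D.d * Real.exp (2 * N) := by
            gcongr
            refine (div_le_self (by positivity) (one_le_pow₀ (Real.one_le_exp (by positivity)))).trans ?_
            rw [← Real.exp_nat_mul]
            gcongr
            norm_num
    have e4 := Real.log_le_log (by positivity) e3
    rw [Real.log_pow, Real.log_mul (by positivity) (by positivity), Real.log_exp, ← hR0] at e4
    push_cast at e4
    linarith
  have hdl : 0 ≤ Real.log D.d := by linarith
  have hbig : N + Real.log (72 * D.d) + 2 ≤ 1500 * (D.d * Real.log D.d) := by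
    have e1 : 144 * D.d * (1 + Real.log (72 * D.d)) ≤ 144 * D.d * (10 * Real.log D.d) := by
      gcongr; linarith
    nlinarith
  rcases le_or_gt 1 R0 with h | h
  · exact ⟨u, R0, h, by linarith, hexpR0⟩
  · refine ⟨u ^ ⌈1 / R0⌉₊, ⌈1 / R0⌉₊ * R0, ?_, ?_, ?_⟩
    · have := Nat.le_ceil (1 / R0)
      rwa [div_le_iff₀ hR0pos] at this
    · have := Nat.ceil_lt_add_one (by positivity : 0 ≤ 1 / R0)
      have e : (⌈1 / R0⌉₊ : ℝ) * R0 ≤ (1 / R0 + 1) * R0 := by gcongr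
      have e' : (1 / R0 + 1) * R0 = 1 + R0 := by field_simp
      have : (0 : ℝ) ≤ N := by positivity
      linarith
    · rw [Real.exp_nat_mul, ← hexpR0, ← norm_pow, ← map_pow]
      simp
end CubicData

/-! ### Reduction to the Thue equation and conclusion -/

/-- Every positive integer is a cube times a cubefree number. -/
lemma exists_cube_mul_cubefree (k : ℕ) (hk : 0 < k) :
    ∃ c d : ℕ, 0 < c ∧ 0 < d ∧ k = c ^ 3 * d ∧ ∀ p : ℕ, p.Prime → ¬ p ^ 3 ∣ d := by
  induction k using Nat.strong_induction_on with
  | _ k ih =>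
    by_cases h : ∀ p : ℕ, p.Prime → ¬ p ^ 3 ∣ k
    · exact ⟨1, k, one_pos, hk, by simp, h⟩
    · push Not at h
      obtain ⟨p, hp, m, rfl⟩ := h
      have hm : 0 < m := Nat.pos_of_mul_pos_left hk
      have hp3 : 1 < p ^ 3 := Nat.one_lt_pow (by norm_num) hp.one_lt
      obtain ⟨c, d, hc, hd, e, hcf⟩ := ih m (by nlinarith) hm
      exact ⟨p * c, d, Nat.mul_pos hp.pos hc, hd, by rw [e]; ring, hcf⟩

/-- The effective bound for the Thue equation `X ^ 3 - k * Y ^ 3 = n`. -/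
lemma log_le_of_thue (k : ℕ) (hk : 2 ≤ k) (X Y : ℕ) (hY : 0 < Y) (n : ℤ)
    (hn : n = (X : ℤ) ^ 3 - k * (Y : ℤ) ^ 3) (hn0 : n ≠ 0) :
    Real.log Y ≤ 10 ^ 70 * ((k * Real.log k) * (k * Real.log k + Real.log |(n : ℝ)|)) := by
  have hk2 : (2 : ℝ) ≤ k := by exact_mod_cast hk
  have hl2 := Real.log_two_gt_d9
  have hlk : Real.log 2 ≤ Real.log k := Real.log_le_log (by norm_num) hk2
  have hlogn : 0 ≤ Real.log |(n : ℝ)| := Real.log_nonneg (by exact_mod_cast Int.one_le_abs hn0)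
  have hlogY : 0 ≤ Real.log Y := Real.log_natCast_nonneg Y
  have hkl : 1 ≤ k * Real.log k := by nlinarith
  obtain ⟨c, d, hc, hd, hkcd, hcf⟩ := exists_cube_mul_cubefree k (by omega)
  have hYc : Real.log Y ≤ Real.log ((c * Y : ℕ) : ℝ) :=
    Real.log_le_log (by exact_mod_cast hY) (by exact_mod_cast Nat.le_mul_of_pos_left Y hc)
  have hn' : n = (X : ℤ) ^ 3 - d * ((c * Y : ℕ) : ℤ) ^ 3 := by rw [hn, hkcd]; push_cast; ring
  rcases (by omega : d = 1 ∨ 2 ≤ d) with rfl | hd2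
  · have hfac : n = ((X : ℤ) - (c * Y : ℕ)) * (X ^ 2 + X * (c * Y : ℕ) + ((c * Y : ℕ) : ℤ) ^ 2) := by
      rw [hn']; push_cast; ring
    have hY' : (1 : ℤ) ≤ (c * Y : ℕ) := by exact_mod_cast Nat.mul_pos hc hY
    have h1 : ((c * Y : ℕ) : ℤ) ≤ |n| := by
      have h2 : (X : ℤ) - (c * Y : ℕ) ≠ 0 := by
        intro h; rw [h, zero_mul] at hfac; exact hn0 hfac
      have h3 := Int.one_le_abs h2
      have hX : (0 : ℤ) ≤ X := by positivity
      have h4 : ((c * Y : ℕ) : ℤ) ≤ X ^ 2 + X * (c * Y : ℕ) + ((c * Y : ℕ) : ℤ) ^ 2 := by nlinarith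
      rw [hfac, abs_mul]
      have h5 := le_abs_self ((X : ℤ) ^ 2 + X * (c * Y : ℕ) + ((c * Y : ℕ) : ℤ) ^ 2)
      nlinarith
    have h2 : Real.log ((c * Y : ℕ) : ℝ) ≤ Real.log |(n : ℝ)| :=
      Real.log_le_log (by exact_mod_cast hY') (by exact_mod_cast h1)
    nlinarith
  · obtain ⟨K, _, _, D, rfl⟩ := exists_cubicData d hd2 hcf
    obtain ⟨u, R, hR1, hR, hu⟩ := D.exists_unit
    have h1 := D.log_le_of_unit u R hR1 hu X (c * Y) (Nat.mul_pos hc hY) n hn' hn0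
    have hdk : (D.d : ℝ) ≤ k := by
      exact_mod_cast hkcd ▸ Nat.le_mul_of_pos_left D.d (pow_pos hc 3)
    have hd0 : (0 : ℝ) < D.d := by exact_mod_cast hd
    have hR' : R ≤ 1500 * (k * Real.log k) := by
      refine hR.trans ?_
      have : Real.log D.d ≤ Real.log k := Real.log_le_log hd0 hdk
      have : 0 ≤ Real.log D.d := Real.log_natCast_nonneg _
      gcongr
    calc Real.log Y ≤ 10 ^ 62 * (R * (R + Real.log |(n : ℝ)|)) := hYc.trans h1
      _ ≤ 10 ^ 62 * ((1500 * (k * Real.log k)) *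
          (1500 * (k * Real.log k) + Real.log |(n : ℝ)|)) := by gcongr
      _ ≤ _ := by
          have hQ0 : 0 ≤ k * Real.log k := by linarith
          have := mul_nonneg hQ0 hlogn
          have := mul_nonneg hQ0 hQ0
          rw [mul_add, mul_add]
          linarith

set_option maxHeartbeats 1000000 in
/-- The reduction of the divisibility relation to a Thue equation, with `X / Y` the reduced form of
`(b + l) / (a + l)`. -/
lemma log_le_of_dvd (l : ℕ) (hl : 0 < l) (a b k : ℕ) (ha : 0 < a) (hab : a < b)
    (h : b * (b + l) * (b + 2 * l) = a * (a + l) * (a + 2 * l) * k) :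
    2 ≤ k ∧ Real.log a ≤ (10 ^ 80 * (1 + Real.log l)) * (k * Real.log k) ^ 2 := by
  have hk2 : 2 ≤ k := by
    have h1 : a * (a + l) * (a + 2 * l) < b * (b + l) * (b + 2 * l) := by gcongr
    by_contra hk
    rw [h] at h1
    have : k ≤ 1 := by omega
    nlinarith [Nat.zero_le (a * (a + l) * (a + 2 * l))]
  refine ⟨hk2, ?_⟩
  obtain ⟨g, X, Y, hg, hcop, hX, hY⟩ := Nat.exists_coprime' (m := b + l) (n := a + l)
    (Nat.gcd_pos_of_pos_left _ (by omega))
  have hYpos : 0 < Y := by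
    rcases Nat.eq_zero_or_pos Y with rfl | h0
    · omega
    · exact h0
  have hgZ : (0 : ℤ) < g := by exact_mod_cast hg
  have hYZ : (0 : ℤ) < Y := by exact_mod_cast hYpos
  have hkZ : (2 : ℤ) ≤ k := by exact_mod_cast hk2
  have hlZ : (1 : ℤ) ≤ l := by exact_mod_cast hl
  have hXb : (X : ℤ) * g = b + l := by exact_mod_cast hX.symm
  have hYa : (Y : ℤ) * g = a + l := by exact_mod_cast hY.symm
  have hZ : (b : ℤ) * (b + l) * (b + 2 * l) = a * (a + l) * (a + 2 * l) * k := by exact_mod_cast h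
  have haZ : (1 : ℤ) ≤ a := by exact_mod_cast ha
  have habZ : (a : ℤ) < b := by exact_mod_cast hab
  obtain ⟨n, hn⟩ : ∃ n : ℤ, n = (X : ℤ) ^ 3 - k * (Y : ℤ) ^ 3 := ⟨_, rfl⟩
  have hgn : (g : ℤ) ^ 2 * n = l ^ 2 * (X - k * Y) := by
    apply mul_left_cancel₀ hgZ.ne'
    have eb : (b : ℤ) = X * g - l := by linarith
    have ea : (a : ℤ) = Y * g - l := by linarith
    rw [eb, ea] at hZ
    rw [hn]
    linear_combination hZ
  have hn0 : n ≠ 0 := by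
    intro h0
    rw [h0, mul_zero] at hgn
    have h1 : (X : ℤ) = k * Y := by
      rcases mul_eq_zero.mp hgn.symm with h2 | h2
      · exact absurd h2 (by positivity)
      · linarith
    rw [h0, h1] at hn
    have h3 : (k : ℤ) * ((k : ℤ) ^ 2 - 1) * Y ^ 3 = 0 := by linear_combination -hn
    have h4 : 0 < (k : ℤ) * ((k : ℤ) ^ 2 - 1) * Y ^ 3 := by
      have : (0 : ℤ) < (k : ℤ) ^ 2 - 1 := by nlinarith
      positivity
    omega
  -- `n` divides `l ^ 2 * (k ^ 3 - k) * Y ^ 3` and is coprime to `Y`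
  have hdvd : n ∣ (l : ℤ) ^ 2 * (k ^ 3 - k) := by
    have hc1 : IsCoprime (X : ℤ) (Y : ℤ) := Nat.isCoprime_iff_coprime.mpr hcop
    have hc2 : IsCoprime n (Y : ℤ) := by
      have h1 : IsCoprime ((X : ℤ) ^ 3) (Y : ℤ) := hc1.pow_left
      have h2 := h1.add_mul_right_left (-(k * (Y : ℤ) ^ 2))
      have h3 : (X : ℤ) ^ 3 + -(k * (Y : ℤ) ^ 2) * Y = n := by rw [hn]; ring
      rwa [h3] at h2
    have hc3 : IsCoprime n ((Y : ℤ) ^ 3) := hc2.pow_right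
    refine hc3.dvd_of_dvd_mul_right ?_
    refine ⟨l ^ 2 - g ^ 2 * (X ^ 2 + k * X * Y + k ^ 2 * Y ^ 2), ?_⟩
    linear_combination (X ^ 2 + k * X * Y + k ^ 2 * Y ^ 2 : ℤ) * hgn - (l : ℤ) ^ 2 * hn
  have hnle : |n| ≤ (l : ℤ) ^ 2 * k ^ 3 := by
    have h1 : 0 < (l : ℤ) ^ 2 * (k ^ 3 - k) := by
      have : (0 : ℤ) < k ^ 3 - k := by nlinarith [mul_pos (by linarith : (0:ℤ) < k) (by nlinarith : (0:ℤ) < (k : ℤ) ^ 2 - 1)]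
      positivity
    have h2 := Int.le_of_dvd h1 ((abs_dvd n _).mpr hdvd)
    nlinarith [pow_pos (by linarith : (0:ℤ) < l) 2]
  -- the factor `g` is small
  have hXlt : (X : ℤ) < k * Y := by
    by_contra hge
    push Not at hge
    have h1 : (k : ℤ) * (a + l) ≤ b + l := by
      rw [← hXb, ← hYa]; nlinarith
    have h2 : (a : ℤ) * (a + 2 * l) < b * (b + 2 * l) := by nlinarith
    have h3 : (k * (a + l) : ℤ) * (a * (a + 2 * l)) < (b + l) * (b * (b + 2 * l)) := by
      calc (k * (a + l) : ℤ) * (a * (a + 2 * l)) ≤ (b + l) * (a * (a + 2 * l)) := by gcongr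
        _ < (b + l) * (b * (b + 2 * l)) := by
            apply mul_lt_mul_of_pos_left h2; linarith
    linarith
  have hg2 : (g : ℤ) ^ 2 ≤ l ^ 2 * (k * Y) := by
    have h1 : (g : ℤ) ^ 2 * |n| = l ^ 2 * (k * Y - X) := by
      have := congrArg abs hgn
      rw [abs_mul, abs_mul, abs_of_neg (by linarith : (X : ℤ) - k * Y < 0),
        abs_of_nonneg (sq_nonneg (g : ℤ)), abs_of_nonneg (sq_nonneg (l : ℤ))] at this
      rw [this]; ring
    have h2 := Int.one_le_abs hn0
    have h3 : (0 : ℤ) ≤ l ^ 2 * X := by positivity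
    have h4 : (g : ℤ) ^ 2 ≤ g ^ 2 * |n| := le_mul_of_one_le_right (sq_nonneg _) h2
    rw [h1, mul_sub] at h4
    linarith
  have hy2 : a ^ 2 ≤ l ^ 2 * k * Y ^ 3 := by
    have h1 : (a : ℤ) ≤ Y * g := by linarith
    have h2 : (a : ℤ) ^ 2 ≤ (Y * g) ^ 2 := by gcongr
    have h3 : (a : ℤ) ^ 2 ≤ l ^ 2 * k * Y ^ 3 := by
      calc (a : ℤ) ^ 2 ≤ (Y * g) ^ 2 := h2
        _ = Y ^ 2 * g ^ 2 := by ring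
        _ ≤ Y ^ 2 * (l ^ 2 * (k * Y)) := by gcongr
        _ = _ := by ring
    exact_mod_cast h3
  have hkR : (2 : ℝ) ≤ k := by exact_mod_cast hk2
  have hl2 := Real.log_two_gt_d9
  have hlk : Real.log 2 ≤ Real.log k := Real.log_le_log (by norm_num) hkR
  have hll : 0 ≤ Real.log l := Real.log_natCast_nonneg l
  have hlR : (0 : ℝ) < l := by exact_mod_cast hl
  have hYR : (0 : ℝ) < Y := by exact_mod_cast hYpos
  have haR : (0 : ℝ) < a := by exact_mod_cast ha
  have hloga : 2 * Real.log a ≤ 2 * Real.log l + Real.log k + 3 * Real.log Y := by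
    have h1 : ((a : ℝ)) ^ 2 ≤ l ^ 2 * k * Y ^ 3 := by exact_mod_cast hy2
    have h2 := Real.log_le_log (by positivity) h1
    rw [Real.log_mul (by positivity) (by positivity), Real.log_mul (by positivity) (by positivity),
      Real.log_pow, Real.log_pow, Real.log_pow] at h2
    exact_mod_cast h2
  have hlogn : Real.log |(n : ℝ)| ≤ 2 * Real.log l + 3 * Real.log k := by
    have h1 : |(n : ℝ)| ≤ l ^ 2 * k ^ 3 := by exact_mod_cast hnle
    have h0 : 0 < |(n : ℝ)| := abs_pos.mpr (by exact_mod_cast hn0)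
    have h2 := Real.log_le_log h0 h1
    rw [Real.log_mul (by positivity) (by positivity), Real.log_pow, Real.log_pow] at h2
    exact_mod_cast h2
  have hthue := log_le_of_thue k hk2 X Y hYpos n hn hn0
  obtain ⟨Q, hQ⟩ : ∃ Q, Q = k * Real.log k := ⟨_, rfl⟩
  have hQ1 : 1 ≤ Q := by rw [hQ]; nlinarith
  have hQk : 2 * Real.log k ≤ Q := by rw [hQ]; nlinarith
  rw [← hQ] at hthue ⊢
  have hQQ : Q ≤ Q ^ 2 := by nlinarith
  have hlQ : Real.log l ≤ Real.log l * Q := le_mul_of_one_le_right hll hQ1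
  have h5 : Q + Real.log |(n : ℝ)| ≤ 3 * (1 + Real.log l) * Q := by nlinarith
  have h6 : Q * (Q + Real.log |(n : ℝ)|) ≤ 3 * (1 + Real.log l) * Q ^ 2 := by
    calc Q * (Q + Real.log |(n : ℝ)|) ≤ Q * (3 * (1 + Real.log l) * Q) := by gcongr
      _ = _ := by ring
  have h7 : Real.log l ≤ Real.log l * Q ^ 2 := le_mul_of_one_le_right hll (by nlinarith)
  have h8 : 0 ≤ Real.log l * Q ^ 2 := by positivity
  nlinarith

/-- If `a(a+l)(a+2l) ∣ b(b+l)(b+2l)` with `a < b` and `a` large in terms of `l`, then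
`b ≥ c · a · (log a)^{1/6} / (log log a)^{1/3}`. -/
theorem stmt_1 (l : ℕ) (hl : 0 < l) :
    ∃ c : ℝ, 0 < c ∧ ∃ A₀ : ℕ, ∀ a b : ℕ, 0 < a → a < b → A₀ ≤ a →
      a * (a + l) * (a + 2 * l) ∣ b * (b + l) * (b + 2 * l) →
        (b : ℝ) ≥ c * a * (Real.log a) ^ ((1 : ℝ) / 6) /
          (Real.log (Real.log a)) ^ ((1 : ℝ) / 3) := by
  obtain ⟨C, hC⟩ : ∃ C : ℝ, C = 10 ^ 80 * (1 + Real.log l) := ⟨_, rfl⟩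
  have hC1 : 1 ≤ C := by
    have := Real.log_natCast_nonneg l
    rw [hC]; nlinarith
  have hCpos : 0 < C := by linarith
  refine ⟨(1 / C) ^ ((1 : ℝ) / 6), by positivity, ⌈Real.exp (Real.exp 1)⌉₊, ?_⟩
  intro a b ha hab hA hdvd
  obtain ⟨k, hk⟩ := hdvd
  obtain ⟨hk2, hlog⟩ := log_le_of_dvd l hl a b k ha hab hk
  rw [← hC] at hlog
  have haR : (0 : ℝ) < a := by exact_mod_cast ha
  have habR : (a : ℝ) < b := by exact_mod_cast hab
  have hbR : (0 : ℝ) < b := by linarith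
  have hkR : (2 : ℝ) ≤ k := by exact_mod_cast hk2
  have hlR : (0 : ℝ) < l := by exact_mod_cast hl
  have hexp : Real.exp (Real.exp 1) ≤ a := (Nat.le_ceil _).trans (by exact_mod_cast hA)
  obtain ⟨t, ht⟩ : ∃ t, t = Real.log a := ⟨_, rfl⟩
  have hte : Real.exp 1 ≤ t := by rw [ht]; exact (Real.le_log_iff_exp_le haR).mpr hexp
  have htpos : 0 < t := lt_of_lt_of_le (Real.exp_pos 1) hte
  obtain ⟨s, hs⟩ : ∃ s, s = Real.log t := ⟨_, rfl⟩
  have hs1 : 1 ≤ s := by rw [hs]; exact (Real.le_log_iff_exp_le htpos).mpr hte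
  rw [← ht, ← hs]
  rw [← ht] at hlog
  obtain ⟨β, hβ⟩ : ∃ β : ℝ, β = b / a := ⟨_, rfl⟩
  have hβ1 : 1 < β := by rw [hβ, one_lt_div haR]; exact habR
  have hkβ : (k : ℝ) ≤ β ^ 3 := by
    have hkR' : (b : ℝ) * (b + l) * (b + 2 * l) = a * (a + l) * (a + 2 * l) * k := by
      exact_mod_cast hk
    have e : (k : ℝ) = (b / a) * ((b + l) / (a + l)) * ((b + 2 * l) / (a + 2 * l)) := by
      field_simp
      linarith
    have e1 : ((b : ℝ) + l) / (a + l) ≤ b / a := by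
      rw [div_le_div_iff₀ (by positivity) haR]; nlinarith
    have e2 : ((b : ℝ) + 2 * l) / (a + 2 * l) ≤ b / a := by
      rw [div_le_div_iff₀ (by positivity) haR]; nlinarith
    rw [e, hβ]
    calc (b / a : ℝ) * ((b + l) / (a + l)) * ((b + 2 * l) / (a + 2 * l))
        ≤ (b / a) * (b / a) * (b / a) := by gcongr
      _ = _ := by ring
  have hlogβ : 0 < Real.log β := Real.log_pos hβ1
  have hlogk : Real.log k ≤ 3 * Real.log β := by
    have := Real.log_le_log (by linarith) hkβ
    rwa [Real.log_pow] at this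
  have hlogk0 : 0 ≤ Real.log k := Real.log_natCast_nonneg k
  have ht2 : t ≤ C * (β ^ 3 * (3 * Real.log β)) ^ 2 := by
    refine hlog.trans ?_
    gcongr
  have hmain : (1 / C) ^ ((1 : ℝ) / 6) * t ^ ((1 : ℝ) / 6) / s ^ ((1 : ℝ) / 3) ≤ β := by
    have hspow : 1 ≤ s ^ ((1 : ℝ) / 3) := Real.one_le_rpow hs1 (by norm_num)
    have hcpow : (1 / C) ^ ((1 : ℝ) / 6) ≤ 1 :=
      Real.rpow_le_one (by positivity) ((div_le_one hCpos).mpr hC1) (by norm_num)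
    have htp : 0 < t ^ ((1 : ℝ) / 6) := by positivity
    rcases le_or_gt (t ^ ((1 : ℝ) / 6)) β with hcase | hcase
    · refine le_trans (div_le_self (by positivity) hspow) (le_trans ?_ hcase)
      exact mul_le_of_le_one_left htp.le hcpow
    · have hβs : 6 * Real.log β ≤ s := by
        have := Real.log_le_log (by linarith) hcase.le
        rw [Real.log_rpow htpos, ← hs] at this
        linarith
      have h6 : t ≤ C * s ^ 2 * β ^ 6 := by
        refine ht2.trans ?_
        have e : (β ^ 3 * (3 * Real.log β)) ^ 2 ≤ (β ^ 3 * s) ^ 2 := by gcongr; linarith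
        calc C * (β ^ 3 * (3 * Real.log β)) ^ 2 ≤ C * (β ^ 3 * s) ^ 2 := by gcongr
          _ = _ := by ring
      refine le_of_pow_le_pow_left₀ (n := 6) (by norm_num) (by linarith) ?_
      rw [div_pow, mul_pow, ← Real.rpow_natCast, ← Real.rpow_mul (by positivity),
        ← Real.rpow_natCast (t ^ ((1 : ℝ) / 6)), ← Real.rpow_mul (by positivity),
        ← Real.rpow_natCast (s ^ ((1 : ℝ) / 3)), ← Real.rpow_mul (by positivity)]
      norm_num
      rw [div_le_iff₀ (by positivity), inv_mul_le_iff₀ hCpos]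
      linarith
  calc (1 / C) ^ ((1 : ℝ) / 6) * a * t ^ ((1 : ℝ) / 6) / s ^ ((1 : ℝ) / 3)
      = a * ((1 / C) ^ ((1 : ℝ) / 6) * t ^ ((1 : ℝ) / 6) / s ^ ((1 : ℝ) / 3)) := by ring
    _ ≤ a * β := by gcongr
    _ = b := by rw [hβ]; field_simp
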